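/- There exist universal constants C, α > 0 (the paper's proof yields α ≤ 4) such that for every n ≥ 2 and every pair of convex bodies K₁, K₂ ⊆ ℝⁿ, the non-symmetric Banach–Mazur distance satisfies d_BM(K₁, K₂) ≤ C·n·logᵅ(n+1). -/

import Mathlib

/-!
The bound is proved with `α = 2`. Both bodies are put in a position in which the body and its polar
have small Gaussian mean width, and a rotation chosen by a random argument compares the two positions.

*Position* (`exists_good_position`). Every convex body `K` has an affine image `L` containing the origin
with `E h_{L°}(G) ≤ A` and `E h_L(G) ≤ 4 n A`, where `G` is a standard Gaussian vector, `h` is the support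
function, and `A` is of order `√(log (n+1))`. Write `γ_L` for the Gaussian weight `e^{-|x|²/2}` on `L`,
`Z_L(θ)` for its Laplace transform, and `b_L(θ)` and `cov_L(θ)` for the barycentre and the covariance of
its exponential tilt. An almost maximiser, over the affine images of `K`, of
`E log Z_L(r G) - (log vol L) / 2` is almost centred and has `E cov_L(r G)` close to half the identity
(`exists_position`). The tilted weight is strongly log-concave, so by the Brascamp–Lieb inequality
(deduced from Prékopa–Leindler) the covariance is at most the identity and its derivative in `θ` in a
direction `v` has Hilbert–Schmidt norm at most `2|v|` (`dcov_hs`). A Gaussian Poincaré argument with the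
non-commutative Khintchine inequality (`khintchine`) then shows that for `r` of order
`1 / √(log (n+1))` the random matrix `cov_L(r G)` is close to its mean with probability at least `9/10`
(`goodSet_compl`). Hence both `z ↦ b_L(r z)` and `z ↦ r z - b_L(r z)` are gradients of convex functions
whose derivative is at least a constant times `r` on a large set, and such a map increases the mean of
every support function up to a factor of order `r` (`comparison`). As `b_L(θ) ∈ L`, the first map bounds
the width of the polar (`polar_width`). Contracting `L` towards one of its points gives
`⟨θ - b_L(θ), y - b_L(θ)⟩ ≤ n` for `y ∈ L` (`virial_bary`), and with this the second map bounds the width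
of the body (`body_width`).

*Rotation* (`exists_orthogonal`). For bodies `L₁`, `L₂` in such positions and a Gaussian matrix `Γ`,
Chevet's inequality (`chevet`, from Sudakov–Fernique) bounds the mean of
`max ⟨Γ x, q⟩ + max ⟨Γ q', z⟩` over `x ∈ L₁`, `q ∈ L₂°`, `q' ∈ L₁°`, `z ∈ L₂` by `64 n A²`. Averaging over the
orthogonal group on both sides replaces `Γ` by an orthogonal matrix at the cost of a factor of order
`1 / √n`, because the mean singular value of `Γ` is of order `√n` (`orthogonal_mean`). So some
orthogonal `U` satisfies `U L₁ ⊆ ρ L₂` and `U⁻¹ L₂ ⊆ ρ L₁` with `ρ = 192 √n A²`, and the distance is at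
most `ρ²`, which is of order `n log² (n+1)` (`dBM_le_of_position`).

Support functions are taken over finite sets throughout, and the compactness of the orthogonal group
passes from finite sets to the bodies.
-/

open MeasureTheory Real Pointwise RealInnerProductSpace
open scoped ENNReal

noncomputable section

/-- A convex body: a compact convex set with non-empty interior. -/
def IsConvexBody {n : ℕ} (K : Set (EuclideanSpace ℝ (Fin n))) : Prop :=
  IsCompact K ∧ Convex ℝ K ∧ (interior K).Nonempty

/-- The uniform probability measure on a set `K`. -/
def unifOn {n : ℕ} (K : Set (EuclideanSpace ℝ (Fin n))) : Measure (EuclideanSpace ℝ (Fin n)) :=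
  (volume K)⁻¹ • volume.restrict K

/-- A probability measure `μ` on `ℝⁿ` is isotropic: its barycenter vanishes and its
covariance matrix is the identity. -/
def IsIsotropicMeasure {n : ℕ} (μ : Measure (EuclideanSpace ℝ (Fin n))) : Prop :=
  (∀ i, ∫ x, x i ∂μ = 0) ∧ ∀ i j, ∫ x, x i * x j ∂μ = if i = j then 1 else 0

/-- A convex body is in isotropic position if the uniform probability measure on it
is isotropic. -/
def IsIsotropicBody {n : ℕ} (K : Set (EuclideanSpace ℝ (Fin n))) : Prop :=
  IsIsotropicMeasure (unifOn K)

/-- A log-concave density: nonnegative, and multiplicatively convex. This is equivalent to: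
`{p > 0}` is convex and `log (1/p)` is convex on it. -/
def IsLogConcaveDensity {n : ℕ} (p : EuclideanSpace ℝ (Fin n) → ℝ) : Prop :=
  (∀ x, 0 ≤ p x) ∧ ∀ x y : EuclideanSpace ℝ (Fin n), ∀ t : ℝ, 0 ≤ t → t ≤ 1 →
    p x ^ t * p y ^ (1 - t) ≤ p (t • x + (1 - t) • y)

/-- A measure on `ℝⁿ` is log-concave if it has a log-concave density w.r.t. Lebesgue. -/
def IsLogConcaveMeasure {n : ℕ} (μ : Measure (EuclideanSpace ℝ (Fin n))) : Prop :=
  ∃ p : EuclideanSpace ℝ (Fin n) → ℝ, Measurable p ∧ IsLogConcaveDensity p ∧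
    μ = volume.withDensity fun x => ENNReal.ofReal (p x)

/-- The standard Gaussian probability measure on `ℝⁿ`. -/
def stdGaussian (n : ℕ) : Measure (EuclideanSpace ℝ (Fin n)) :=
  volume.withDensity fun x => ENNReal.ofReal ((2 * π) ^ (-(n : ℝ) / 2) * Real.exp (-‖x‖ ^ 2 / 2))

/-- The Poincaré constant of a measure: the least `A ≥ 0` such that
`Var f ≤ A ⬝ E |∇ f|²` for all locally Lipschitz `f`. -/
def poincareConst {n : ℕ} (μ : Measure (EuclideanSpace ℝ (Fin n))) : ℝ :=
  sInf {A : ℝ | 0 ≤ A ∧ ∀ f : EuclideanSpace ℝ (Fin n) → ℝ, LocallyLipschitz f →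
    ∫ x, (f x - ∫ y, f y ∂μ) ^ 2 ∂μ ≤ A * ∫ x, ‖gradient f x‖ ^ 2 ∂μ}

/-- The KLS constant `ψₙ`. -/
def KLSConst (n : ℕ) : ℝ :=
  sSup {s : ℝ | ∃ μ : Measure (EuclideanSpace ℝ (Fin n)), IsProbabilityMeasure μ ∧
    IsLogConcaveMeasure μ ∧ IsIsotropicMeasure μ ∧ s = Real.sqrt (poincareConst μ)}

/-- The Hilbert-Schmidt norm of a matrix. -/
def hsNorm {n : ℕ} (M : Matrix (Fin n) (Fin n) ℝ) : ℝ :=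
  Real.sqrt (∑ i, ∑ j, (M i j) ^ 2)

/-- The coefficient `κₙ`, the supremum of `‖E [X₁ (X ⊗ X)]‖_HS` over all isotropic
log-concave random vectors `X` in `ℝⁿ`. -/
def kappaConst (n : ℕ) : ℝ :=
  sSup {s : ℝ | ∃ μ : Measure (EuclideanSpace ℝ (Fin n)), IsProbabilityMeasure μ ∧
    IsLogConcaveMeasure μ ∧ IsIsotropicMeasure μ ∧ ∃ h : 0 < n,
    s = hsNorm (Matrix.of fun i j => ∫ x, x ⟨0, h⟩ * (x i * x j) ∂μ)}

/-- A gauge function on `ℝⁿ`: non-negative, convex, positively homogeneous. -/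
def IsGauge {n : ℕ} (f : EuclideanSpace ℝ (Fin n) → ℝ) : Prop :=
  (∀ x, 0 ≤ f x) ∧ ConvexOn ℝ Set.univ f ∧
    ∀ (c : ℝ), 0 ≤ c → ∀ x, f (c • x) = c * f x

/-- `M(K)`: the mean of the Minkowski functional of `K` over the unit sphere, w.r.t. the
uniform probability measure on the sphere. -/
def Mparam (n : ℕ) (K : Set (EuclideanSpace ℝ (Fin n))) : ℝ :=
  ∫ x : Metric.sphere (0 : EuclideanSpace ℝ (Fin n)) 1,
    gauge K x ∂(((volume : Measure (EuclideanSpace ℝ (Fin n))).toSphere Set.univ)⁻¹ •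
      (volume : Measure (EuclideanSpace ℝ (Fin n))).toSphere)

/-- The polar body. -/
def polarBody {n : ℕ} (K : Set (EuclideanSpace ℝ (Fin n))) : Set (EuclideanSpace ℝ (Fin n)) :=
  {x | ∀ y ∈ K, ⟪x, y⟫ ≤ 1}

/-- `R(K)`: the maximal Euclidean norm of a point of `K`. -/
def Rparam {n : ℕ} (K : Set (EuclideanSpace ℝ (Fin n))) : ℝ :=
  sSup {r : ℝ | ∃ x ∈ K, r = ‖x‖}

/-- The operator norm `‖A : K → T‖ = sup_{x ≠ 0} ‖Ax‖_T / ‖x‖_K` (Minkowski functionals). -/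
def mapNorm {n : ℕ} (K T : Set (EuclideanSpace ℝ (Fin n)))
    (A : Matrix (Fin n) (Fin n) ℝ) : ℝ :=
  sSup {r : ℝ | ∃ x : EuclideanSpace ℝ (Fin n), x ≠ 0 ∧
    r = gauge T (Matrix.toEuclideanLin A x) / gauge K x}

/-- The ℓ₂ operator norm of a matrix. -/
def matOpNorm {n : ℕ} (M : Matrix (Fin n) (Fin n) ℝ) : ℝ :=
  ‖LinearMap.toContinuousLinearMap (Matrix.toEuclideanLin M)‖

/-- The non-symmetric Banach–Mazur distance between convex bodies `K₁, K₂ ⊆ ℝⁿ`. -/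
def dBM {n : ℕ} (K₁ K₂ : Set (EuclideanSpace ℝ (Fin n))) : ℝ :=
  sInf {lam : ℝ | 0 < lam ∧
    ∃ (T : EuclideanSpace ℝ (Fin n) ≃ₗ[ℝ] EuclideanSpace ℝ (Fin n))
      (x y : EuclideanSpace ℝ (Fin n)),
      y +ᵥ K₂ ⊆ ⇑T '' (x +ᵥ K₁) ∧ ⇑T '' (x +ᵥ K₁) ⊆ lam • (y +ᵥ K₂)}

open MeasureTheory Real Pointwise RealInnerProductSpace
open scoped ENNReal

set_option linter.unusedSectionVars false

namespace BMD

/-! ### Gaussian measures: moments, rotation invariance, Stein's lemma -/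

/-- Polynomial growth of a (not necessarily continuous) function. -/
def PolyBdd {X F : Type*} [Norm X] [Norm F] (f : X → F) : Prop :=
  ∃ (C : ℝ) (k : ℕ), 0 ≤ C ∧ ∀ x, ‖f x‖ ≤ C * (1 + ‖x‖) ^ k

section PolyBdd
variable {X Y F G : Type*} [NormedAddCommGroup X] [NormedAddCommGroup F]
  [NormedAddCommGroup G] [NormedAddCommGroup Y]

lemma PolyBdd.of_le {f : X → F} {g : X → G} (hg : PolyBdd g) (h : ∀ x, ‖f x‖ ≤ ‖g x‖) :
    PolyBdd f := by
  obtain ⟨C, k, hC, hk⟩ := hg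
  exact ⟨C, k, hC, fun x => (h x).trans (hk x)⟩

lemma PolyBdd.of_bdd {f : X → F} {C : ℝ} (h : ∀ x, ‖f x‖ ≤ C) : PolyBdd f :=
  ⟨C, 0, (norm_nonneg _).trans (h 0), by simpa using h⟩

lemma PolyBdd.norm {f : X → F} (hf : PolyBdd f) : PolyBdd (fun x => ‖f x‖) :=
  hf.of_le (by simp)

lemma PolyBdd.add {f g : X → F} (hf : PolyBdd f) (hg : PolyBdd g) :
    PolyBdd (fun x => f x + g x) := by
  obtain ⟨C, k, hC, hk⟩ := hf
  obtain ⟨D, l, hD, hl⟩ := hg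
  refine ⟨C + D, k + l, by positivity, fun x => ?_⟩
  have h1 : (1 : ℝ) ≤ 1 + ‖x‖ := by linarith [norm_nonneg x]
  have a1 : (1 + ‖x‖) ^ k ≤ (1 + ‖x‖) ^ (k + l) := pow_le_pow_right₀ h1 (by lia)
  have a2 : (1 + ‖x‖) ^ l ≤ (1 + ‖x‖) ^ (k + l) := pow_le_pow_right₀ h1 (by lia)
  calc ‖f x + g x‖ ≤ ‖f x‖ + ‖g x‖ := norm_add_le _ _
    _ ≤ C * (1 + ‖x‖) ^ k + D * (1 + ‖x‖) ^ l := add_le_add (hk x) (hl x)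
    _ ≤ C * (1 + ‖x‖) ^ (k + l) + D * (1 + ‖x‖) ^ (k + l) := by gcongr
    _ = _ := by ring

lemma PolyBdd.neg {f : X → F} (hf : PolyBdd f) : PolyBdd (fun x => - f x) :=
  hf.of_le (by simp)

lemma PolyBdd.sub {f g : X → F} (hf : PolyBdd f) (hg : PolyBdd g) :
    PolyBdd (fun x => f x - g x) := by
  simpa [sub_eq_add_neg] using hf.add hg.neg

/-- A function dominated by the product of two functions of polynomial growth has polynomial
growth. -/
lemma PolyBdd.of_le_mul {H : Type*} [NormedAddCommGroup H] {f : X → F} {g : X → G} {h : X → H}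
    (hg : PolyBdd g) (hh : PolyBdd h)
    (hle : ∀ x, ‖f x‖ ≤ ‖g x‖ * ‖h x‖) : PolyBdd f := by
  obtain ⟨C, k, hC, hk⟩ := hg
  obtain ⟨D, l, hD, hl⟩ := hh
  refine ⟨C * D, k + l, by positivity, fun x => (hle x).trans ?_⟩
  calc _ ≤ (C * (1 + ‖x‖) ^ k) * (D * (1 + ‖x‖) ^ l) :=
        mul_le_mul (hk x) (hl x) (norm_nonneg _) (by positivity)
    _ = _ := by rw [pow_add]; ring

lemma PolyBdd.mul {f g : X → ℝ} (hf : PolyBdd f) (hg : PolyBdd g) :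
    PolyBdd (fun x => f x * g x) := hf.of_le_mul hg (fun _ => (norm_mul _ _).le)

lemma PolyBdd.const (c : F) : PolyBdd (fun _ : X => c) := .of_bdd (fun _ => le_rfl)

lemma PolyBdd.pow {f : X → ℝ} (hf : PolyBdd f) (m : ℕ) : PolyBdd (fun x => f x ^ m) := by
  induction m with
  | zero => simpa using PolyBdd.const (1 : ℝ)
  | succ m ih => simpa [pow_succ] using ih.mul hf

lemma PolyBdd.id : PolyBdd (fun x : X => x) :=
  ⟨1, 1, zero_le_one, fun x => by simp⟩

lemma PolyBdd.clm [NormedSpace ℝ X] [NormedSpace ℝ F] (L : X →L[ℝ] F) : PolyBdd (fun x => L x) :=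
  ⟨‖L‖, 1, norm_nonneg _, fun x => by
    rw [pow_one]
    exact (L.le_opNorm x).trans (by gcongr; linarith)⟩

lemma PolyBdd.sum {ι : Type*} (s : Finset ι) {f : ι → X → F} (hf : ∀ i ∈ s, PolyBdd (f i)) :
    PolyBdd (fun x => ∑ i ∈ s, f i x) := by
  classical
  induction s using Finset.induction_on with
  | empty => simpa using PolyBdd.const (0 : F)
  | insert a s ha ih =>
    simp only [Finset.sum_insert ha]
    exact (hf _ (by simp)).add (ih (fun i hi => hf i (by simp [hi])))

/-- Composition with a map of linear growth. -/
lemma PolyBdd.comp {f : Y → F} (hf : PolyBdd f) {g : X → Y} {K : ℝ}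
    (hg : ∀ x, ‖g x‖ ≤ K * (1 + ‖x‖)) : PolyBdd (fun x => f (g x)) := by
  obtain ⟨C, k, hC, hk⟩ := hf
  have hK : 0 ≤ K := by
    have := (norm_nonneg _).trans (hg 0); simpa using this
  refine ⟨C * (1 + K) ^ k, k, by positivity, fun x => (hk _).trans ?_⟩
  rw [mul_assoc, ← mul_pow]
  gcongr
  nlinarith [hg x, norm_nonneg x]

lemma PolyBdd.comp_fst {f : X → F} (hf : PolyBdd f) : PolyBdd (fun p : X × Y => f p.1) :=
  hf.comp (g := fun p : X × Y => p.1) (K := 1) (fun p => by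
    have := norm_fst_le p; linarith)

lemma PolyBdd.comp_snd {f : Y → F} (hf : PolyBdd f) : PolyBdd (fun p : X × Y => f p.2) :=
  hf.comp (g := fun p : X × Y => p.2) (K := 1) (fun p => by
    have := norm_snd_le p; linarith)

lemma PolyBdd.comp_clm [NormedSpace ℝ X] [NormedSpace ℝ Y] {f : Y → F} (hf : PolyBdd f)
    (L : X →L[ℝ] Y) : PolyBdd (fun x => f (L x)) :=
  hf.comp (g := fun x => L x) (K := ‖L‖) (fun x => (L.le_opNorm x).trans (by gcongr; linarith))

/-- A differentiable function whose derivative has polynomial growth has polynomial growth. -/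
lemma PolyBdd.of_fderiv [NormedSpace ℝ X] [NormedSpace ℝ F] {f : X → F}
    (hf : Differentiable ℝ f) (hf' : PolyBdd (fderiv ℝ f)) : PolyBdd f := by
  obtain ⟨C, k, hC, hk⟩ := hf'
  refine PolyBdd.of_le (g := fun x => ‖f 0‖ + C * (1 + ‖x‖) ^ k * ‖x‖) ?_ ?_
  · exact (PolyBdd.const _).add (((PolyBdd.const C).mul
      (((PolyBdd.const (1:ℝ)).add PolyBdd.id.norm).pow k)).mul PolyBdd.id.norm)
  · intro x
    have h := (convex_closedBall (0 : X) ‖x‖).norm_image_sub_le_of_norm_fderiv_le (f := f)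
      (𝕜 := ℝ) (C := C * (1 + ‖x‖) ^ k) (fun y _ => hf y) (fun y hy => (hk y).trans (by
        have : ‖y‖ ≤ ‖x‖ := by simpa using hy
        gcongr)) (x := 0) (y := x) (by simp) (by simp)
    rw [sub_zero] at h
    rw [Real.norm_of_nonneg (by positivity)]
    calc ‖f x‖ = ‖f 0 + (f x - f 0)‖ := by congr 1; abel
      _ ≤ _ := (norm_add_le _ _).trans (by gcongr)

end PolyBdd

lemma integrable_pow_of_memLp {X : Type*} [NormedAddCommGroup X] [MeasurableSpace X]
    (μ : Measure X) [IsProbabilityMeasure μ] (k : ℕ)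
    (h1 : MemLp (fun x : X => (1 : ℝ) + ‖x‖) (k : ℝ≥0∞) μ) :
    Integrable (fun x : X => (1 + ‖x‖) ^ k) μ := by
  have h3 : (fun x : X => (1 + ‖x‖) ^ k) = fun x : X => ‖1 + ‖x‖‖ ^ k := by
    funext x
    rw [Real.norm_of_nonneg (add_nonneg zero_le_one (norm_nonneg x))]
  rw [h3]
  exact h1.integrable_norm_pow'

lemma gaussian_integrable_pow {X : Type*} [NormedAddCommGroup X] [NormedSpace ℝ X]
    [MeasurableSpace X] [BorelSpace X] [CompleteSpace X] [SecondCountableTopology X]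
    (μ : Measure X) [ProbabilityTheory.IsGaussian μ] (k : ℕ) :
    Integrable (fun x : X => (1 + ‖x‖) ^ k) μ :=
  integrable_pow_of_memLp μ k ((memLp_const (1 : ℝ)).add
    (ProbabilityTheory.IsGaussian.memLp_id μ (k : ℝ≥0∞) (ENNReal.natCast_ne_top k)).norm)

lemma PolyBdd.integrable {X F : Type*} [NormedAddCommGroup X] [NormedSpace ℝ X]
    [MeasurableSpace X] [BorelSpace X] [CompleteSpace X] [SecondCountableTopology X]
    [NormedAddCommGroup F] {μ : Measure X}
    [ProbabilityTheory.IsGaussian μ] {f : X → F} (hf : PolyBdd f)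
    (hm : AEStronglyMeasurable f μ) : Integrable f μ := by
  obtain ⟨C, k, hC, hk⟩ := hf
  exact ((gaussian_integrable_pow μ k).const_mul C).mono' hm (Filter.Eventually.of_forall hk)

variable {E : Type*} [NormedAddCommGroup E] [InnerProductSpace ℝ E] [FiniteDimensional ℝ E]
  [MeasurableSpace E] [BorelSpace E]

/-- The standard Gaussian measure on a finite-dimensional Euclidean space. -/
abbrev gau (E : Type*) [NormedAddCommGroup E] [InnerProductSpace ℝ E] [FiniteDimensional ℝ E]
  [MeasurableSpace E] : Measure E := ProbabilityTheory.stdGaussian E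

/-- The law of a pair of independent standard Gaussian vectors. -/
abbrev gau2 (E : Type*) [NormedAddCommGroup E] [InnerProductSpace ℝ E] [FiniteDimensional ℝ E]
  [MeasurableSpace E] : Measure (E × E) := (gau E).prod (gau E)

/-- The rotation `(x₁, x₂) ↦ (cos θ x₁ + sin θ x₂, -sin θ x₁ + cos θ x₂)`. -/
abbrev rot (θ : ℝ) : E × E →L[ℝ] E × E := ContinuousLinearMap.rotation θ

lemma rot_fst (θ : ℝ) (p : E × E) : (rot θ p).1 = cos θ • p.1 + sin θ • p.2 := rfl
lemma rot_snd (θ : ℝ) (p : E × E) : (rot θ p).2 = -sin θ • p.1 + cos θ • p.2 := rfl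

lemma snd_eq_rot (θ : ℝ) (p : E × E) : p.2 = sin θ • (rot θ p).1 + cos θ • (rot θ p).2 := by
  rw [rot_fst, rot_snd]
  simp only [smul_add, smul_smul]
  have h : p.2 = (sin θ ^ 2 + cos θ ^ 2) • p.2 := by rw [sin_sq_add_cos_sq, one_smul]
  nth_rw 1 [h]
  module

lemma gau2_map_rot (θ : ℝ) : (gau2 E).map (rot θ) = gau2 E :=
  ProbabilityTheory.IsGaussian.map_rotation_eq_self (by simp) θ

lemma integral_rot {F : Type*} [NormedAddCommGroup F] [NormedSpace ℝ F] (g : E × E → F)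
    (hg : StronglyMeasurable g) (θ : ℝ) :
    ∫ p, g (rot θ p) ∂(gau2 E) = ∫ p, g p ∂(gau2 E) := by
  conv_rhs => rw [← gau2_map_rot θ]
  rw [integral_map (by fun_prop) hg.aestronglyMeasurable]

lemma norm_rot_le (θ : ℝ) (p : E × E) : ‖rot θ p‖ ≤ 2 * ‖p‖ := by
  have h1 := norm_fst_le p
  have h2 := norm_snd_le p
  have hc := abs_cos_le_one θ
  have hs := abs_sin_le_one θ
  rw [Prod.norm_def]
  refine max_le ?_ ?_
  · rw [rot_fst]
    refine (norm_add_le _ _).trans ?_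
    rw [norm_smul, norm_smul, Real.norm_eq_abs, Real.norm_eq_abs]
    nlinarith [norm_nonneg p.1, norm_nonneg p.2]
  · rw [rot_snd]
    refine (norm_add_le _ _).trans ?_
    rw [norm_smul, norm_smul, Real.norm_eq_abs, Real.norm_eq_abs, abs_neg]
    nlinarith [norm_nonneg p.1, norm_nonneg p.2]

lemma continuous_rot : Continuous (fun q : ℝ × (E × E) => rot q.1 q.2) := by
  have : (fun q : ℝ × (E × E) => rot q.1 q.2) = fun q : ℝ × (E × E) =>
    (cos q.1 • q.2.1 + sin q.1 • q.2.2, -sin q.1 • q.2.1 + cos q.1 • q.2.2) := rfl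
  rw [this]
  fun_prop

lemma continuous_rot_left (p : E × E) : Continuous (fun θ : ℝ => rot θ p) := by
  have : (fun θ : ℝ => rot θ p) = fun θ : ℝ =>
    (cos θ • p.1 + sin θ • p.2, -sin θ • p.1 + cos θ • p.2) := rfl
  rw [this]
  fun_prop

/-- Fubini over the angle combined with rotation invariance. -/
lemma integral_swap_rot {F : Type*} [NormedAddCommGroup F] [NormedSpace ℝ F]
    (b : ℝ → E × E → F) (hb : StronglyMeasurable (Function.uncurry b)) {C : ℝ} {k : ℕ}
    (hbd : ∀ θ p, ‖b θ p‖ ≤ C * (1 + ‖p‖) ^ k) (θ₁ : ℝ) :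
    ∫ p, (∫ θ in 0..θ₁, b θ (rot θ p)) ∂(gau2 E) = ∫ θ in 0..θ₁, (∫ p, b θ p ∂(gau2 E)) := by
  have hC : 0 ≤ C := by have := (norm_nonneg _).trans (hbd 0 0); simpa using this
  have hmeas : StronglyMeasurable (Function.uncurry fun θ p => b θ (rot θ p)) := by
    have : (Function.uncurry fun θ (p : E × E) => b θ (rot θ p)) =
      Function.uncurry b ∘ fun q : ℝ × (E × E) => (q.1, rot q.1 q.2) := rfl
    rw [this]
    exact hb.comp_measurable (measurable_fst.prodMk continuous_rot.measurable)
  rw [← intervalIntegral_integral_swap]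
  · congr 1; ext θ
    exact integral_rot (b θ) (hb.comp_measurable measurable_prodMk_left) θ
  · have hI : Integrable (fun p : E × E => C * 2 ^ k * (1 + ‖p‖) ^ k) (gau2 E) :=
      (gaussian_integrable_pow _ k).const_mul _
    have hI2 : Integrable (fun q : ℝ × (E × E) => C * 2 ^ k * (1 + ‖q.2‖) ^ k)
        ((volume.restrict (Set.uIoc 0 θ₁)).prod (gau2 E)) := by
      have : IsFiniteMeasure ((volume : Measure ℝ).restrict (Set.uIoc 0 θ₁)) :=
        ⟨by rw [Measure.restrict_apply_univ]; simp [Set.uIoc]⟩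
      have := (integrable_const (1 : ℝ) (μ := volume.restrict (Set.uIoc 0 θ₁))).mul_prod hI
      simpa using this
    refine hI2.mono' hmeas.aestronglyMeasurable (Filter.Eventually.of_forall fun q => ?_)
    refine (hbd _ _).trans ?_
    rw [mul_assoc, ← mul_pow]
    gcongr
    have := norm_rot_le q.1 q.2
    linarith [norm_nonneg q.2]

lemma integral_rot_angle {F : Type*} [NormedAddCommGroup F] [NormedSpace ℝ F] [CompleteSpace F]
    (b : E × E → F) (hb : StronglyMeasurable b) (hbd : PolyBdd b) :
    ∫ p, (∫ θ in 0..(π/2), b (rot θ p)) ∂(gau2 E) = (π/2) • ∫ p, b p ∂(gau2 E) := by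
  obtain ⟨C, k, hC, hk⟩ := hbd
  have := integral_swap_rot (fun _ => b) (hb.comp_measurable measurable_snd) (fun _ p => hk p) (π/2)
  rw [this, intervalIntegral.integral_const, sub_zero]

/-- The path `θ ↦ F (cos θ x₁ + sin θ x₂)` integrates its velocity. -/
lemma sub_eq_integral_rot {H : Type*} [NormedAddCommGroup H] [NormedSpace ℝ H] [CompleteSpace H]
    {F : E → H} (hF : ContDiff ℝ 1 F) (p : E × E) :
    F p.2 - F p.1 = ∫ θ in 0..(π/2), fderiv ℝ F (rot θ p).1 (rot θ p).2 := by
  have hcont : Continuous fun θ => rot θ p := continuous_rot_left p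
  have hd : ∀ θ ∈ Set.uIcc 0 (π/2), HasDerivAt (fun θ => F (rot θ p).1)
      (fderiv ℝ F (rot θ p).1 (rot θ p).2) θ := by
    intro θ _
    have h1 : HasDerivAt (fun θ => (rot θ p).1) (rot θ p).2 θ := by
      simp only [rot_fst, rot_snd]
      exact ((hasDerivAt_cos θ).smul_const p.1).add ((hasDerivAt_sin θ).smul_const p.2)
    exact ((hF.differentiable (by norm_num)) _).hasFDerivAt.comp_hasDerivAt θ h1
  have hc : Continuous fun θ => fderiv ℝ F (rot θ p).1 (rot θ p).2 :=
    ((hF.continuous_fderiv (by norm_num)).comp hcont.fst).clm_apply hcont.snd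
  rw [intervalIntegral.integral_eq_sub_of_hasDerivAt hd (hc.intervalIntegrable _ _)]
  simp [rot_fst]

/-- Gaussian covariance identity: `E k(X₂)(F(X₂) - F(X₁))` as an average over the rotations. -/
lemma cov_identity {H : Type*} [NormedAddCommGroup H] [NormedSpace ℝ H] [CompleteSpace H]
    {F : E → H} (hF : ContDiff ℝ 1 F)
    (hF' : PolyBdd (fderiv ℝ F)) {k : E → H →L[ℝ] ℝ} (hk : StronglyMeasurable k)
    (hkb : PolyBdd k) :
    ∫ p, k p.2 (F p.2 - F p.1) ∂(gau2 E) =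
      ∫ θ in 0..(π/2), ∫ p, k (sin θ • p.1 + cos θ • p.2) (fderiv ℝ F p.1 p.2) ∂(gau2 E) := by
  have hcf := hF.continuous_fderiv (by norm_num)
  have hcfm : StronglyMeasurable fun p : E × E => fderiv ℝ F p.1 p.2 :=
    ((hcf.comp continuous_fst).clm_apply continuous_snd).stronglyMeasurable
  obtain ⟨C, m, hC, hm⟩ : PolyBdd fun p : E × E => fderiv ℝ F p.1 p.2 :=
    hF'.comp_fst.of_le_mul (PolyBdd.id.comp_snd (X := E))
      (fun p => ContinuousLinearMap.le_opNorm _ _)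
  obtain ⟨D, l, hD, hl⟩ := hkb
  rw [← integral_swap_rot (C := D * 2 ^ l * C) (k := l + m)]
  · congr 1; ext p
    simp_rw [← snd_eq_rot]
    rw [sub_eq_integral_rot hF, ContinuousLinearMap.intervalIntegral_comp_comm]
    have hcont : Continuous fun θ => rot θ p := continuous_rot_left p
    exact ((hcf.comp hcont.fst).clm_apply hcont.snd).intervalIntegrable _ _
  · have h1 : StronglyMeasurable fun q : ℝ × (E × E) => k (sin q.1 • q.2.1 + cos q.1 • q.2.2) :=
      hk.comp_measurable (by fun_prop)
    have h2 : StronglyMeasurable fun q : ℝ × (E × E) => fderiv ℝ F q.2.1 q.2.2 :=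
      hcfm.comp_measurable measurable_snd
    exact isBoundedBilinearMap_apply.continuous.comp_stronglyMeasurable (h1.prodMk h2)
  · intro θ p
    refine (ContinuousLinearMap.le_opNorm _ _).trans ?_
    have h1 : ‖sin θ • p.1 + cos θ • p.2‖ ≤ 2 * ‖p‖ := by
      refine (norm_add_le _ _).trans ?_
      rw [norm_smul, norm_smul, Real.norm_eq_abs, Real.norm_eq_abs]
      nlinarith [norm_nonneg p.1, norm_nonneg p.2, norm_fst_le p, norm_snd_le p,
        abs_sin_le_one θ, abs_cos_le_one θ]
    calc _ ≤ (D * (1 + 2 * ‖p‖) ^ l) * (C * (1 + ‖p‖) ^ m) :=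
          mul_le_mul ((hl _).trans (by gcongr)) (hm p) (norm_nonneg _) (by positivity)
      _ ≤ (D * (2 * (1 + ‖p‖)) ^ l) * (C * (1 + ‖p‖) ^ m) := by
          gcongr; linarith
      _ = _ := by rw [mul_pow, pow_add]; ring

variable {E : Type*} [NormedAddCommGroup E] [InnerProductSpace ℝ E] [FiniteDimensional ℝ E]
  [MeasurableSpace E] [BorelSpace E]

lemma continuous_rot_swap : Continuous (fun q : (E × E) × ℝ => rot q.2 q.1) := by
  have : (fun q : (E × E) × ℝ => rot q.2 q.1) = fun q : (E × E) × ℝ =>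
    (cos q.2 • q.1.1 + sin q.2 • q.1.2, -sin q.2 • q.1.1 + cos q.2 • q.1.2) := rfl
  rw [this]
  fun_prop

lemma integral_clm_gau (L : E →L[ℝ] ℝ) : ∫ x, L x ∂(gau E) = 0 :=
  ProbabilityTheory.integral_strongDual_stdGaussian L

lemma integral_inner_gau (v : E) : ∫ x, ⟪x, v⟫ ∂(gau E) = 0 := by
  have := integral_clm_gau (innerSL ℝ v)
  simpa [real_inner_comm] using this

lemma integrable_clm_gau (L : E →L[ℝ] ℝ) : Integrable (fun x => L x) (gau E) :=
  (PolyBdd.clm L).integrable (by fun_prop)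

lemma integral_inner_inner_gau (v w : E) : ∫ x, ⟪x, v⟫ * ⟪x, w⟫ ∂(gau E) = ⟪v, w⟫ := by
  have h := ProbabilityTheory.covarianceBilin_apply (μ := gau E)
    ProbabilityTheory.IsGaussian.memLp_two_id v w
  rw [ProbabilityTheory.covarianceBilin_stdGaussian] at h
  simp only [ProbabilityTheory.integral_id_stdGaussian, id_eq, sub_zero] at h
  rw [innerSL_apply_apply] at h
  rw [h]
  simp_rw [real_inner_comm]

lemma integral_inner_clm_gau (w : E) (L : E →L[ℝ] ℝ) :
    ∫ x, ⟪x, w⟫ * L x ∂(gau E) = L w := by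
  have hL : ∀ x, L x = ⟪x, (InnerProductSpace.toDual ℝ E).symm L⟫ := fun x => by
    rw [real_inner_comm, InnerProductSpace.toDual_symm_apply]
  simp_rw [hL]
  rw [integral_inner_inner_gau]

/-- **Stein's lemma** (Gaussian integration by parts). -/
lemma stein {F : E → ℝ} (hF : ContDiff ℝ 1 F) (hF' : PolyBdd (fderiv ℝ F)) (w : E) :
    ∫ x, ⟪x, w⟫ * F x ∂(gau E) = ∫ x, fderiv ℝ F x w ∂(gau E) := by
  have hcf := hF.continuous_fderiv (by norm_num)
  have hFb : PolyBdd F := PolyBdd.of_fderiv (hF.differentiable (by norm_num)) hF'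
  have hwb : PolyBdd (fun x : E => ⟪x, w⟫) := by
    simpa [real_inner_comm] using PolyBdd.clm (innerSL ℝ w)
  have hwi : Integrable (fun x : E => ⟪x, w⟫) (gau E) := hwb.integrable (by fun_prop)
  have hFi : Integrable F (gau E) := hFb.integrable hF.continuous.aestronglyMeasurable
  have hwFi : Integrable (fun x => ⟪x, w⟫ * F x) (gau E) :=
    (hwb.mul hFb).integrable (by have := hF.continuous; fun_prop)
  have key := cov_identity hF hF' (k := fun x => ⟪x, w⟫ • (1 : ℝ →L[ℝ] ℝ))
    (Continuous.stronglyMeasurable (by fun_prop)) (by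
      refine hwb.of_le fun x => ?_
      rw [norm_smul]
      exact mul_le_of_le_one_right (norm_nonneg _) (by simp))
  simp only [smul_apply, one_apply_eq_self, smul_eq_mul] at key
  have hl : ∫ p : E × E, ⟪p.2, w⟫ * (F p.2 - F p.1) ∂(gau2 E) = ∫ x, ⟪x, w⟫ * F x ∂(gau E) := by
    simp_rw [mul_sub]
    rw [integral_sub (hwFi.comp_snd (gau E))]
    · have h1 : ∫ p : E × E, ⟪p.2, w⟫ * F p.2 ∂(gau2 E) = ∫ x, ⟪x, w⟫ * F x ∂(gau E) := by
        have := integral_prod_mul (μ := gau E) (ν := gau E) (fun _ : E => (1:ℝ))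
          (fun x => ⟪x, w⟫ * F x)
        simpa using this
      have h2 : ∫ p : E × E, ⟪p.2, w⟫ * F p.1 ∂(gau2 E) = 0 := by
        have := integral_prod_mul (μ := gau E) (ν := gau E) F (fun x => ⟪x, w⟫)
        rw [integral_inner_gau, mul_zero] at this
        simpa [mul_comm] using this
      rw [h1, h2, sub_zero]
    · simpa [mul_comm] using hFi.mul_prod hwi
  have hr : ∀ θ : ℝ, ∫ p : E × E, ⟪sin θ • p.1 + cos θ • p.2, w⟫ * fderiv ℝ F p.1 p.2 ∂(gau2 E)
      = cos θ * ∫ x, fderiv ℝ F x w ∂(gau E) := by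
    intro θ
    have hi : Integrable (fun p : E × E => ⟪sin θ • p.1 + cos θ • p.2, w⟫ * fderiv ℝ F p.1 p.2)
        (gau2 E) := by
      have hc : Continuous fun p : E × E => fderiv ℝ F p.1 p.2 :=
        (hcf.comp continuous_fst).clm_apply continuous_snd
      refine PolyBdd.integrable (PolyBdd.mul ?_ ?_) (by fun_prop)
      · simp_rw [inner_add_left, real_inner_smul_left]
        exact ((PolyBdd.const _).mul hwb.comp_fst).add ((PolyBdd.const _).mul hwb.comp_snd)
      · exact hF'.comp_fst.of_le_mul (PolyBdd.id.comp_snd (X := E))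
          (fun p => ContinuousLinearMap.le_opNorm _ _)
    rw [integral_prod _ hi, ← integral_const_mul]
    congr 1; ext y
    simp_rw [inner_add_left, real_inner_smul_left, add_mul, mul_assoc]
    rw [integral_add, integral_const_mul, integral_const_mul, integral_const_mul,
      integral_clm_gau, integral_inner_clm_gau]
    · ring
    · exact ((integrable_clm_gau _).const_mul _).const_mul _
    · refine Integrable.const_mul ?_ _
      exact (hwb.mul (PolyBdd.clm _)).integrable (by fun_prop)
  rw [hl] at key
  simp_rw [hr] at key
  rw [key, intervalIntegral.integral_mul_const, integral_cos]
  simp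

/-- Mean form of the Gaussian Poincaré inequality for vector-valued maps. -/
lemma norm_sub_mean_le {H : Type*} [NormedAddCommGroup H] [NormedSpace ℝ H] [CompleteSpace H]
    {F : E → H} (hF : ContDiff ℝ 1 F) (hF' : PolyBdd (fderiv ℝ F)) :
    ∫ p, ‖F p.2 - F p.1‖ ∂(gau2 E) ≤ (π/2) * ∫ p, ‖fderiv ℝ F p.1 p.2‖ ∂(gau2 E) := by
  have hcf := hF.continuous_fderiv (by norm_num)
  have hc : Continuous fun p : E × E => fderiv ℝ F p.1 p.2 :=
    (hcf.comp continuous_fst).clm_apply continuous_snd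
  have hb : PolyBdd fun p : E × E => fderiv ℝ F p.1 p.2 :=
    hF'.comp_fst.of_le_mul (PolyBdd.id.comp_snd (X := E))
      (fun p => ContinuousLinearMap.le_opNorm _ _)
  have hFb : PolyBdd F := PolyBdd.of_fderiv (hF.differentiable (by norm_num)) hF'
  have h := integral_rot_angle (fun p : E × E => ‖fderiv ℝ F p.1 p.2‖)
    hc.norm.stronglyMeasurable hb.norm
  rw [smul_eq_mul] at h
  rw [← h]
  have hint : Integrable (fun p : E × E => ∫ θ in 0..(π/2),
      ‖fderiv ℝ F (rot θ p).1 (rot θ p).2‖) (gau2 E) := by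
    obtain ⟨C, k, hC, hk⟩ := hb
    refine PolyBdd.integrable ⟨C * 2 ^ k * |π/2 - 0|, k, by positivity, fun p => ?_⟩ ?_
    · have := intervalIntegral.norm_integral_le_of_norm_le_const (a := 0) (b := π/2)
        (f := fun θ => ‖fderiv ℝ F (rot θ p).1 (rot θ p).2‖) (C := C * 2 ^ k * (1 + ‖p‖) ^ k)
        (fun θ _ => by
          rw [norm_norm]
          refine (hk _).trans ?_
          rw [mul_assoc, ← mul_pow]
          gcongr
          have := norm_rot_le θ p
          linarith [norm_nonneg p])
      refine this.trans (le_of_eq (by ring))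
    · have : Continuous fun p : E × E => ∫ θ in 0..(π/2),
          ‖fderiv ℝ F (rot θ p).1 (rot θ p).2‖ := by
        apply intervalIntegral.continuous_parametric_intervalIntegral_of_continuous'
        exact (hc.comp continuous_rot_swap).norm
      exact this.aestronglyMeasurable
  refine integral_mono ?_ hint ?_
  · have hcF := hF.continuous
    exact (hFb.comp_snd.sub hFb.comp_fst).norm.integrable (by fun_prop)
  · intro p
    simp only
    rw [sub_eq_integral_rot hF]
    exact intervalIntegral.norm_integral_le_integral_norm (by positivity)

/-- The Gaussian Poincaré inequality for Lipschitz functions. -/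
lemma gau_var_le {F : E → ℝ} (hF : ContDiff ℝ 1 F) {K : ℝ} (hK : ∀ x, ‖fderiv ℝ F x‖ ≤ K) :
    ∫ x, F x ^ 2 ∂(gau E) - (∫ x, F x ∂(gau E)) ^ 2 ≤ K ^ 2 := by
  have hF' : PolyBdd (fderiv ℝ F) := .of_bdd hK
  have hK0 : 0 ≤ K := (norm_nonneg _).trans (hK 0)
  have hFb : PolyBdd F := PolyBdd.of_fderiv (hF.differentiable (by norm_num)) hF'
  have hcf := hF.continuous_fderiv (by norm_num)
  have hFc := hF.continuous
  have hFi : Integrable F (gau E) := hFb.integrable hFc.aestronglyMeasurable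
  have hF2i : Integrable (fun x => F x * F x) (gau E) :=
    (hFb.mul hFb).integrable (by fun_prop)
  have key := cov_identity hF hF' (k := fun x => F x • (1 : ℝ →L[ℝ] ℝ))
    (Continuous.stronglyMeasurable (by fun_prop)) (by
      refine hFb.of_le fun x => ?_
      rw [norm_smul]
      exact mul_le_of_le_one_right (norm_nonneg _) (by simp))
  simp only [smul_apply, one_apply_eq_self, smul_eq_mul] at key
  have hl : ∫ p : E × E, F p.2 * (F p.2 - F p.1) ∂(gau2 E)
      = ∫ x, F x ^ 2 ∂(gau E) - (∫ x, F x ∂(gau E)) ^ 2 := by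
    simp_rw [mul_sub]
    rw [integral_sub (hF2i.comp_snd (gau E))]
    · have h1 : ∫ p : E × E, F p.2 * F p.2 ∂(gau2 E) = ∫ x, F x ^ 2 ∂(gau E) := by
        have := integral_prod_mul (μ := gau E) (ν := gau E) (fun _ : E => (1:ℝ))
          (fun x => F x * F x)
        simpa [sq] using this
      have h2 : ∫ p : E × E, F p.2 * F p.1 ∂(gau2 E) = (∫ x, F x ∂(gau E)) ^ 2 := by
        have := integral_prod_mul (μ := gau E) (ν := gau E) F F
        simpa [mul_comm, sq] using this
      rw [h1, h2]
    · simpa [mul_comm] using hFi.mul_prod hFi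
  have hlin : ∀ a c : ℝ, ∀ p : E × E, ‖a • p.1 + c • p.2‖ ≤ (|a| + |c|) * (1 + ‖p‖) := by
    intro a c p
    refine (norm_add_le _ _).trans ?_
    rw [norm_smul, norm_smul, Real.norm_eq_abs, Real.norm_eq_abs]
    nlinarith [norm_fst_le p, norm_snd_le p, abs_nonneg a, abs_nonneg c]
  have hr : ∀ θ ∈ Set.Icc 0 (π/2), ∫ p : E × E, F (sin θ • p.1 + cos θ • p.2) *
      fderiv ℝ F p.1 p.2 ∂(gau2 E) ≤ cos θ * K ^ 2 := by
    intro θ hθ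
    have hcos : 0 ≤ cos θ := cos_nonneg_of_mem_Icc ⟨by linarith [hθ.1, pi_pos], hθ.2⟩
    have hi : Integrable (fun p : E × E => F (sin θ • p.1 + cos θ • p.2) * fderiv ℝ F p.1 p.2)
        (gau2 E) := by
      have hc : Continuous fun p : E × E => fderiv ℝ F p.1 p.2 :=
        (hcf.comp continuous_fst).clm_apply continuous_snd
      refine PolyBdd.integrable (PolyBdd.mul ?_ ?_) (by fun_prop)
      · exact hFb.comp (hlin _ _)
      · exact hF'.comp_fst.of_le_mul (PolyBdd.id.comp_snd (X := E))
          (fun p => ContinuousLinearMap.le_opNorm _ _)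
    rw [integral_prod _ hi]
    have hy : ∀ y : E, ∫ z, F (sin θ • y + cos θ • z) * fderiv ℝ F y z ∂(gau E)
        ≤ cos θ * K ^ 2 := by
      intro y
      set g := (InnerProductSpace.toDual ℝ E).symm (fderiv ℝ F y) with hg
      have hgn : ‖g‖ ≤ K := by rw [hg, LinearIsometryEquiv.norm_map]; exact hK y
      have h1 : ∀ z, fderiv ℝ F y z = ⟪z, g⟫ := fun z => by
        rw [real_inner_comm, hg, InnerProductSpace.toDual_symm_apply]
      have hd : ∀ z, HasFDerivAt (fun z => F (sin θ • y + cos θ • z))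
          (cos θ • fderiv ℝ F (sin θ • y + cos θ • z)) z := by
        intro z
        have h2 : HasFDerivAt (fun z : E => sin θ • y + cos θ • z)
            (cos θ • ContinuousLinearMap.id ℝ E) z :=
          ((hasFDerivAt_id z).const_smul (cos θ)).const_add _
        have h3 := ((hF.differentiable (by norm_num))
          (sin θ • y + cos θ • z)).hasFDerivAt.comp z h2
        rwa [ContinuousLinearMap.comp_smul, ContinuousLinearMap.comp_id] at h3
      have hfd : fderiv ℝ (fun z => F (sin θ • y + cos θ • z)) =
          fun z => cos θ • fderiv ℝ F (sin θ • y + cos θ • z) := funext fun z => (hd z).fderiv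
      have hst := stein (F := fun z => F (sin θ • y + cos θ • z)) (by fun_prop)
        (by
          rw [hfd]
          refine .of_bdd (C := |cos θ| * K) fun z => ?_
          rw [norm_smul, Real.norm_eq_abs]
          gcongr
          exact hK _) g
      simp_rw [h1, mul_comm (F _)]
      rw [hst, hfd]
      have hle : ∀ z, (cos θ • fderiv ℝ F (sin θ • y + cos θ • z)) g ≤ cos θ * K ^ 2 := by
        intro z
        rw [smul_apply, smul_eq_mul]
        gcongr
        refine (Real.le_norm_self _).trans ((ContinuousLinearMap.le_opNorm _ _).trans ?_)
        rw [sq]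
        exact mul_le_mul (hK _) hgn (norm_nonneg _) hK0
      calc _ ≤ ∫ _z, cos θ * K ^ 2 ∂(gau E) := by
            refine integral_mono ?_ (integrable_const _) hle
            refine PolyBdd.integrable (.of_bdd (C := |cos θ| * K * ‖g‖) fun z => ?_)
              (Continuous.aestronglyMeasurable ?_)
            · refine (ContinuousLinearMap.le_opNorm _ _).trans ?_
              rw [norm_smul, Real.norm_eq_abs]
              gcongr
              exact hK _
            · fun_prop
        _ = _ := by simp
    calc _ ≤ ∫ _y, cos θ * K ^ 2 ∂(gau E) :=
          integral_mono hi.integral_prod_left (integrable_const _) hy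
      _ = _ := by simp
  rw [← hl, key]
  have hfin : ∫ θ in 0..(π/2), cos θ * K ^ 2 = K ^ 2 := by
    rw [intervalIntegral.integral_mul_const, integral_cos]; simp
  rw [← hfin]
  refine intervalIntegral.integral_mono_on (by positivity) ?_ ?_ hr
  · refine Continuous.intervalIntegrable ?_ _ _
    obtain ⟨C, k, hC, hk⟩ := hFb
    refine continuous_of_dominated (bound := fun p : E × E =>
        C * 3 ^ k * (1 + ‖p‖) ^ k * (K * ‖p.2‖)) ?_ ?_ ?_ ?_
    · intro θ
      have hc : Continuous fun p : E × E => fderiv ℝ F p.1 p.2 :=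
        (hcf.comp continuous_fst).clm_apply continuous_snd
      fun_prop
    · intro θ
      refine Filter.Eventually.of_forall fun p => ?_
      rw [norm_mul]
      refine mul_le_mul ((hk _).trans ?_) ((ContinuousLinearMap.le_opNorm _ _).trans
        (by gcongr; exact hK _)) (norm_nonneg _) (by positivity)
      rw [mul_assoc, ← mul_pow]
      gcongr
      have h1 := hlin (sin θ) (cos θ) p
      nlinarith [abs_sin_le_one θ, abs_cos_le_one θ, norm_nonneg p]
    · refine PolyBdd.integrable ((((PolyBdd.const _).mul
        (((PolyBdd.const _).add PolyBdd.id.norm).pow k))).mul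
        ((PolyBdd.const _).mul PolyBdd.id.norm.comp_snd)) (by fun_prop)
    · refine Filter.Eventually.of_forall fun p => ?_
      fun_prop
  · exact Continuous.intervalIntegrable (by fun_prop) _ _

/-- A linear map `P` with `P P* = 1` maps the standard Gaussian to the standard Gaussian. -/
lemma gau_map_coisometry {F : Type*} [NormedAddCommGroup F] [InnerProductSpace ℝ F]
    [FiniteDimensional ℝ F] [MeasurableSpace F] [BorelSpace F] (P : E →L[ℝ] F)
    (hP : ∀ y, ‖ContinuousLinearMap.adjoint P y‖ = ‖y‖) : (gau E).map P = gau F := by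
  have : IsProbabilityMeasure ((gau E).map P) :=
    Measure.isProbabilityMeasure_map (by fun_prop)
  apply Measure.ext_of_charFun
  ext t
  rw [ProbabilityTheory.charFun_stdGaussian, charFun_apply, integral_map (by fun_prop)
    (by fun_prop)]
  have := ProbabilityTheory.charFun_stdGaussian (ContinuousLinearMap.adjoint P t)
  rw [hP, charFun_apply] at this
  rw [← this]
  simp_rw [ContinuousLinearMap.adjoint_inner_right]

/-! ### The Prékopa–Leindler inequality -/

/-- One-dimensional Brunn–Minkowski inequality. -/
lemma brunn_minkowski_one {A B C : Set ℝ} (hA : MeasurableSet A) (hB : MeasurableSet B)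
    (hA0 : A.Nonempty) (hB0 : B.Nonempty)
    (h : ∀ a ∈ A, ∀ b ∈ B, (1/2 : ℝ) • (a + b) ∈ C) :
    volume A + volume B ≤ 2 * volume C := by
  obtain ⟨a₀, ha₀⟩ := hA0
  obtain ⟨b₀, hb₀⟩ := hB0
  have key : ∀ K₁ ⊆ A, ∀ K₂ ⊆ B, IsCompact K₁ → IsCompact K₂ → K₁.Nonempty → K₂.Nonempty →
      volume K₁ + volume K₂ ≤ 2 * volume C := by
    intro K₁ h₁ K₂ h₂ c₁ c₂ n₁ n₂
    -- place the translates of `K₁` and `K₂` so that they meet in a single point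
    have ha := c₁.sSup_mem n₁
    have hb := c₂.sInf_mem n₂
    set a := sSup K₁
    set b := sInf K₂
    set S := (fun x : ℝ => x + -b) ⁻¹' K₁
    set T := (fun x : ℝ => x + -a) ⁻¹' K₂
    have hS : volume S = volume K₁ := measure_preimage_add_right _ _ _
    have hT : volume T = volume K₂ := measure_preimage_add_right _ _ _
    have hTm : MeasurableSet T := c₂.isClosed.measurableSet.preimage (by fun_prop)
    have hsub : S ∪ T ⊆ (2 : ℝ) • C := by
      rintro x (hx | hx)
      · refine ⟨(1/2 : ℝ) • ((x + -b) + b), h _ (h₁ hx) _ (h₂ hb), ?_⟩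
        simp only [smul_eq_mul]; ring
      · refine ⟨(1/2 : ℝ) • (a + (x + -a)), h _ (h₁ ha) _ (h₂ hx), ?_⟩
        simp only [smul_eq_mul]; ring
    have hint : volume (S ∩ T) = 0 := by
      refine measure_mono_null (t := {a + b}) ?_ (by simp)
      rintro x ⟨hx, hx'⟩
      have h1 : x + -b ≤ a := le_csSup c₁.bddAbove hx
      have h2 : b ≤ x + -a := csInf_le c₂.bddBelow hx'
      simp only [Set.mem_singleton_iff]; linarith
    calc volume K₁ + volume K₂ = volume (S ∪ T) := by
          rw [← hS, ← hT, ← measure_union_add_inter S hTm, hint, add_zero]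
      _ ≤ volume ((2 : ℝ) • C) := measure_mono hsub
      _ = 2 * volume C := by rw [Measure.addHaar_smul]; simp
  have step : ∀ K₁ ⊆ A, IsCompact K₁ → ∀ K₂ ⊆ B, IsCompact K₂ →
      volume K₁ + volume K₂ ≤ 2 * volume C := fun K₁ h₁ c₁ K₂ h₂ c₂ =>
    (add_le_add (measure_mono (Set.subset_insert a₀ _))
      (measure_mono (Set.subset_insert b₀ _))).trans
      (key (insert a₀ K₁) (Set.insert_subset ha₀ h₁) (insert b₀ K₂)
        (Set.insert_subset hb₀ h₂) (c₁.insert _) (c₂.insert _) (by simp) (by simp))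
  have step2 : ∀ K₂ ⊆ B, IsCompact K₂ → volume A + volume K₂ ≤ 2 * volume C := by
    intro K₂ h₂ c₂
    have hA' : volume A ≤ 2 * volume C - volume K₂ := by
      rw [hA.measure_eq_iSup_isCompact]
      refine iSup₂_le fun K₁ h₁ => iSup_le fun c₁ => ?_
      exact ENNReal.le_sub_of_add_le_right c₂.measure_lt_top.ne (step K₁ h₁ c₁ K₂ h₂ c₂)
    have := step ∅ (by simp) isCompact_empty K₂ h₂ c₂
    calc volume A + volume K₂ ≤ (2 * volume C - volume K₂) + volume K₂ := by gcongr
      _ = 2 * volume C := tsub_add_cancel_of_le (by simpa using this)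
  by_cases hAt : volume A = ⊤
  · have := step2 ∅ (by simp) isCompact_empty
    simp only [hAt, measure_empty, add_zero, top_le_iff] at this
    rw [this]; exact le_top
  have hB' : volume B ≤ 2 * volume C - volume A := by
    rw [hB.measure_eq_iSup_isCompact]
    refine iSup₂_le fun K₁ h₁ => iSup_le fun c₁ => ?_
    exact ENNReal.le_sub_of_add_le_left hAt (step2 K₁ h₁ c₁)
  have := step2 ∅ (by simp) isCompact_empty
  calc volume A + volume B ≤ volume A + (2 * volume C - volume A) := by gcongr
    _ = 2 * volume C := add_tsub_cancel_of_le (by simpa using this)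

/-- The midpoint Prékopa–Leindler inequality for a measure on a vector space. -/
def PLeindler {V : Type*} [AddCommGroup V] [Module ℝ V] [MeasurableSpace V] (μ : Measure V) :
    Prop :=
  ∀ u v w : V → ℝ≥0∞, Measurable u → Measurable v → Measurable w →
    (∀ x y, u x * v y ≤ w ((1/2 : ℝ) • (x + y)) ^ 2) →
    (∫⁻ x, u x ∂μ) * (∫⁻ x, v x ∂μ) ≤ (∫⁻ x, w x ∂μ) ^ 2

lemma ennreal_four_mul_le (x y : ℝ≥0∞) : 4 * (x * y) ≤ (x + y) ^ 2 := by
  wlog h : x ≤ y generalizing x y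
  · rw [mul_comm x, add_comm x]; exact this y x (le_of_not_ge h)
  obtain ⟨d, rfl⟩ := exists_add_of_le h
  calc 4 * (x * (x + d)) ≤ 4 * (x * (x + d)) + d ^ 2 := le_self_add
    _ = _ := by ring

lemma lintegral_eq_level {f : ℝ → ℝ≥0∞} (hf : Measurable f) (hf1 : ∀ x, f x ≤ 1) :
    ∫⁻ x, f x = ∫⁻ t in Set.Ioo (0 : ℝ) 1, volume {x | ENNReal.ofReal t < f x} := by
  have h1 : ∀ x, f x = ENNReal.ofReal (f x).toReal := fun x =>
    (ENNReal.ofReal_toReal ((hf1 x).trans_lt ENNReal.one_lt_top).ne).symm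
  have h2 : ∫⁻ x, f x = ∫⁻ t in Set.Ioi (0 : ℝ), volume {x | t < (f x).toReal} := by
    rw [lintegral_congr h1]
    exact lintegral_eq_lintegral_meas_lt _ (Filter.Eventually.of_forall fun x => by simp)
      hf.ennreal_toReal.aemeasurable
  rw [h2, ← Set.Ioo_union_Ici_eq_Ioi (zero_lt_one (α := ℝ)),
    lintegral_union measurableSet_Ici]
  · have h3 : ∫⁻ t in Set.Ici (1 : ℝ), volume {x | t < (f x).toReal} = 0 := by
      rw [setLIntegral_congr_fun (g := fun _ => 0) measurableSet_Ici, lintegral_zero]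
      intro t ht
      have : {x | t < (f x).toReal} = ∅ := by
        ext x
        simp only [Set.mem_ofPred_eq, Set.mem_empty_iff_false, iff_false, not_lt]
        exact (ENNReal.toReal_mono ENNReal.one_ne_top (hf1 x)).trans (by simpa using ht)
      simp [this]
    rw [h3, add_zero]
    refine setLIntegral_congr_fun measurableSet_Ioo fun t ht => ?_
    congr 1; ext x
    rw [Set.mem_ofPred_eq, Set.mem_ofPred_eq, ENNReal.ofReal_lt_iff_lt_toReal ht.1.le
      ((hf1 x).trans_lt ENNReal.one_lt_top).ne]
  · rw [Set.disjoint_left]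
    intro t ht ht'
    exact absurd ht.2 (not_lt.2 ht')

lemma pl_one_normalized {u v w : ℝ → ℝ≥0∞} (hu : Measurable u) (hv : Measurable v)
    (hw : Measurable w) (hu1 : ∀ x, u x ≤ 1) (hv1 : ∀ x, v x ≤ 1)
    (hus : ∀ t < 1, ∃ x, t < u x) (hvs : ∀ t < 1, ∃ x, t < v x)
    (h : ∀ x y, u x * v y ≤ w ((1/2 : ℝ) • (x + y)) ^ 2) :
    (∫⁻ x, u x) * (∫⁻ x, v x) ≤ (∫⁻ x, w x) ^ 2 := by
  have hle : (∫⁻ x, u x) + (∫⁻ x, v x) ≤ 2 * ∫⁻ x, w x := by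
    calc (∫⁻ x, u x) + (∫⁻ x, v x) ≤ 2 * ∫⁻ x, min (w x) 1 := by
          rw [lintegral_eq_level hu hu1, lintegral_eq_level hv hv1,
            lintegral_eq_level (hw.min measurable_const) (fun x => min_le_right _ _)]
          have hanti : ∀ f : ℝ → ℝ≥0∞,
              Measurable fun t : ℝ => volume {x | ENNReal.ofReal t < f x} := fun f =>
            Antitone.measurable fun s t hst => measure_mono fun x hx =>
              (ENNReal.ofReal_le_ofReal hst).trans_lt hx
          rw [← lintegral_add_left (hanti u), ← lintegral_const_mul _ (hanti _)]
          refine setLIntegral_mono ((hanti _).const_mul _) fun t ht => ?_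
          have ht1 : ENNReal.ofReal t < 1 := by
            rw [← ENNReal.ofReal_one]; exact (ENNReal.ofReal_lt_ofReal_iff one_pos).2 ht.2
          refine brunn_minkowski_one (measurableSet_lt measurable_const hu)
            (measurableSet_lt measurable_const hv) (hus _ ht1) (hvs _ ht1) ?_
          intro a ha b hb
          refine lt_min ?_ ht1
          by_contra! hcon
          have h1 : ENNReal.ofReal t * ENNReal.ofReal t < u a * v b := ENNReal.mul_lt_mul ha hb
          have h2 : w ((1/2 : ℝ) • (a + b)) ^ 2 ≤ ENNReal.ofReal t * ENNReal.ofReal t := by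
            rw [sq]; exact mul_le_mul' hcon hcon
          exact absurd (h1.trans_le (h a b)) (not_lt.2 h2)
      _ ≤ _ := by gcongr; exact min_le_left _ _
  have h4 : 4 * ((∫⁻ x, u x) * (∫⁻ x, v x)) ≤ 4 * (∫⁻ x, w x) ^ 2 := by
    calc _ ≤ ((∫⁻ x, u x) + (∫⁻ x, v x)) ^ 2 := ennreal_four_mul_le _ _
      _ ≤ (2 * ∫⁻ x, w x) ^ 2 := by gcongr
      _ = _ := by ring
  exact (ENNReal.mul_le_mul_iff_right (by norm_num) (by norm_num)).1 h4

lemma pl_one_bdd {u v w : ℝ → ℝ≥0∞} (hu : Measurable u) (hv : Measurable v)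
    (hw : Measurable w) {K : ℝ≥0∞} (hK : K ≠ ∞) (hu1 : ∀ x, u x ≤ K) (hv1 : ∀ x, v x ≤ K)
    (h : ∀ x y, u x * v y ≤ w ((1/2 : ℝ) • (x + y)) ^ 2) :
    (∫⁻ x, u x) * (∫⁻ x, v x) ≤ (∫⁻ x, w x) ^ 2 := by
  set a := ⨆ x, u x with ha
  set b := ⨆ x, v x with hb
  have ha' : a ≠ ∞ := ((iSup_le hu1).trans_lt hK.lt_top).ne
  have hb' : b ≠ ∞ := ((iSup_le hv1).trans_lt hK.lt_top).ne
  rcases eq_or_ne a 0 with ha0 | ha0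
  · have : ∀ x, u x = 0 := by simpa [ha, ENNReal.iSup_eq_zero] using ha0
    simp [this]
  rcases eq_or_ne b 0 with hb0 | hb0
  · have : ∀ x, v x = 0 := by simpa [hb, ENNReal.iSup_eq_zero] using hb0
    simp [this]
  set c := (a * b) ^ (1/2 : ℝ) with hc
  have hc2 : c ^ 2 = a * b := by
    rw [hc, ← ENNReal.rpow_natCast, ← ENNReal.rpow_mul]; norm_num
  have hinv : c⁻¹ ^ 2 = a⁻¹ * b⁻¹ := by
    rw [← ENNReal.inv_pow, hc2, ENNReal.mul_inv (Or.inl ha0) (Or.inl ha')]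
  have hsup : ∀ (f : ℝ → ℝ≥0∞) (s : ℝ≥0∞), s = ⨆ x, f x → s ≠ 0 → s ≠ ∞ →
      (∀ x, s⁻¹ * f x ≤ 1) ∧ ∀ t < 1, ∃ x, t < s⁻¹ * f x := by
    intro f s hs h0 h1
    refine ⟨fun x => ?_, fun t ht => ?_⟩
    · rw [ENNReal.inv_mul_le_iff h0 h1, mul_one, hs]; exact le_iSup f x
    · have : s * t < ⨆ x, f x := by
        rw [← hs]
        calc s * t < s * 1 := ENNReal.mul_lt_mul_right h0 h1 ht
          _ = s := mul_one s
      obtain ⟨x, hx⟩ := lt_iSup_iff.1 this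
      refine ⟨x, ?_⟩
      rw [mul_comm, ← div_eq_mul_inv, ENNReal.lt_div_iff_mul_lt (Or.inl h0) (Or.inl h1), mul_comm]
      exact hx
  obtain ⟨u1, u2⟩ := hsup u a ha ha0 ha'
  obtain ⟨v1, v2⟩ := hsup v b hb hb0 hb'
  have := pl_one_normalized (hu.const_mul a⁻¹) (hv.const_mul b⁻¹) (hw.const_mul c⁻¹) u1 v1 u2 v2
    (fun x y => by
      rw [mul_pow, hinv]
      calc a⁻¹ * u x * (b⁻¹ * v y) = a⁻¹ * b⁻¹ * (u x * v y) := by ring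
        _ ≤ _ := by gcongr; exact h x y)
  rw [lintegral_const_mul _ hu, lintegral_const_mul _ hv, lintegral_const_mul _ hw, mul_pow,
    hinv] at this
  have h5 : a⁻¹ * b⁻¹ * ((∫⁻ x, u x) * (∫⁻ x, v x)) ≤ a⁻¹ * b⁻¹ * (∫⁻ x, w x) ^ 2 := by
    convert this using 1; ring
  refine (ENNReal.mul_le_mul_iff_right ?_ ?_).1 h5
  · simp [ha', hb']
  · exact ENNReal.mul_ne_top (by simpa using ha0) (by simpa using hb0)

lemma lintegral_eq_iSup_min {u : ℝ → ℝ≥0∞} (hu : Measurable u) :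
    ∫⁻ x, u x = ⨆ k : ℕ, ∫⁻ x, min (u x) k := by
  rw [← lintegral_iSup (fun k => hu.min measurable_const)]
  · congr 1; ext x
    refine le_antisymm ?_ (iSup_le fun k => min_le_left _ _)
    refine le_of_forall_lt fun c hc => ?_
    obtain ⟨k, hk⟩ := ENNReal.exists_nat_gt (hc.trans_le le_top).ne
    exact lt_iSup_iff.2 ⟨k, lt_min hc hk⟩
  · intro k l hkl x
    exact min_le_min le_rfl (by exact_mod_cast hkl)

lemma pl_one : PLeindler (volume : Measure ℝ) := by
  intro u v w hu hv hw h
  rw [lintegral_eq_iSup_min hu, lintegral_eq_iSup_min hv, ENNReal.iSup_mul]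
  refine iSup_le fun k => ?_
  rw [ENNReal.mul_iSup]
  refine iSup_le fun l => ?_
  refine pl_one_bdd (hu.min measurable_const) (hv.min measurable_const) hw
    (K := ((max k l : ℕ) : ℝ≥0∞)) (ENNReal.natCast_ne_top _) ?_ ?_ ?_
  · intro x; exact (min_le_right _ _).trans (by simp)
  · intro x; exact (min_le_right _ _).trans (by simp)
  · intro x y; exact (mul_le_mul' (min_le_left _ _) (min_le_left _ _)).trans (h x y)

lemma PLeindler.prod {V W : Type*} [AddCommGroup V] [Module ℝ V] [MeasurableSpace V]
    [AddCommGroup W] [Module ℝ W] [MeasurableSpace W] {μ : Measure V} {ν : Measure W}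
    [SFinite μ] [SFinite ν] (hμ : PLeindler μ) (hν : PLeindler ν) : PLeindler (μ.prod ν) := by
  intro u v w hu hv hw h
  rw [lintegral_prod _ hu.aemeasurable, lintegral_prod _ hv.aemeasurable,
    lintegral_prod _ hw.aemeasurable]
  refine hμ _ _ _ hu.lintegral_prod_right' hv.lintegral_prod_right' hw.lintegral_prod_right' ?_
  intro x y
  exact hν _ _ _ (hu.comp measurable_prodMk_left) (hv.comp measurable_prodMk_left)
    (hw.comp measurable_prodMk_left) (fun a b => h (x, a) (y, b))

lemma PLeindler.map {V W : Type*} [AddCommGroup V] [Module ℝ V] [MeasurableSpace V]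
    [AddCommGroup W] [Module ℝ W] [MeasurableSpace W] {μ : Measure V} {ν : Measure W}
    (hμ : PLeindler μ) (e : V →ₗ[ℝ] W) (he : MeasurePreserving e μ ν) : PLeindler ν := by
  intro u v w hu hv hw h
  rw [← he.lintegral_comp hu, ← he.lintegral_comp hv, ← he.lintegral_comp hw]
  refine hμ _ _ _ (hu.comp he.measurable) (hv.comp he.measurable) (hw.comp he.measurable) ?_
  intro x y
  simpa using h (e x) (e y)

lemma pl_pi (n : ℕ) : PLeindler (volume : Measure (Fin n → ℝ)) := by
  induction n with
  | zero =>
    intro u v w hu hv hw h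
    have : (volume : Measure (Fin 0 → ℝ)) = Measure.dirac 0 := Measure.pi_of_empty _ _
    rw [this, lintegral_dirac, lintegral_dirac, lintegral_dirac]
    simpa using h 0 0
  | succ n ih =>
    have hp := (volume_preserving_piFinSuccAbove (fun _ : Fin (n + 1) => ℝ) 0).symm
    refine (pl_one.prod ih).map
      { toFun := (MeasurableEquiv.piFinSuccAbove (fun _ : Fin (n + 1) => ℝ) 0).symm
        map_add' := ?_
        map_smul' := ?_ } hp
    · intro x y
      ext i
      refine Fin.cases ?_ (fun j => ?_) i <;> simp [MeasurableEquiv.piFinSuccAbove]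
    · intro c x
      ext i
      refine Fin.cases ?_ (fun j => ?_) i <;> simp [MeasurableEquiv.piFinSuccAbove]

/-- **Prékopa–Leindler inequality** on Euclidean space. -/
lemma prekopa_leindler (n : ℕ) : PLeindler (volume : Measure (EuclideanSpace ℝ (Fin n))) :=
  (pl_pi n).map (WithLp.linearEquiv 2 ℝ (Fin n → ℝ)).symm.toLinearMap
    (PiLp.volume_preserving_toLp (Fin n))

/-! ### Exponential tilts of a compactly supported measure -/

section Tilt

variable {E : Type} [NormedAddCommGroup E] [InnerProductSpace ℝ E] [FiniteDimensional ℝ E]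
  [MeasurableSpace E] [BorelSpace E]
  {F : Type} [NormedAddCommGroup F] [NormedSpace ℝ F]
  {ν : Measure E} {R : ℝ}

/-- The Laplace transform `∫ e^{⟨θ,x⟩} g(x) dν(x)` of a vector-valued function. -/
def lap (ν : Measure E) (g : E → F) (θ : E) : F := ∫ x, Real.exp ⟪θ, x⟫ • g x ∂ν

/-- The exponential tilt `e^{⟨θ,x⟩} dν(x) / Z(θ)` of a measure. -/
def tl (ν : Measure E) (θ : E) : Measure E := ν.tilted fun x => ⟪θ, x⟫

lemma bdd_of_continuous {g : E → F} (hg : Continuous g) (R : ℝ) :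
    ∃ C, 0 ≤ C ∧ ∀ x, ‖x‖ ≤ R → ‖g x‖ ≤ C := by
  obtain ⟨C, hC⟩ := (isCompact_closedBall (0 : E) R).exists_bound_of_continuousOn hg.continuousOn
  exact ⟨max C 0, le_max_right _ _, fun x hx => (hC x (by simpa using hx)).trans (le_max_left _ _)⟩

lemma integrable_of_continuous [IsFiniteMeasure ν] (hR : ∀ᵐ x ∂ν, ‖x‖ ≤ R) {g : E → F}
    (hg : Continuous g) : Integrable g ν := by
  obtain ⟨C, -, hC⟩ := bdd_of_continuous hg R
  exact Integrable.of_bound hg.aestronglyMeasurable C (hR.mono hC)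

lemma hasFDerivAt_lap [CompleteSpace F] [IsFiniteMeasure ν] (hR : ∀ᵐ x ∂ν, ‖x‖ ≤ R) {g : E → F}
    (hg : Continuous g) (θ : E) :
    HasFDerivAt (lap ν g) (lap ν (fun x => (innerSL ℝ x).smulRight (g x)) θ) θ := by
  obtain ⟨C, hC0, hC⟩ := bdd_of_continuous hg R
  have hc : Continuous fun x => (innerSL ℝ x).smulRight (g x) := by fun_prop
  refine hasFDerivAt_integral_of_dominated_of_fderiv_le (𝕜 := ℝ) (μ := ν) (s := Metric.ball θ 1)
    (F := fun θ x => Real.exp ⟪θ, x⟫ • g x)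
    (F' := fun θ x => Real.exp ⟪θ, x⟫ • (innerSL ℝ x).smulRight (g x))
    (bound := fun _ => Real.exp ((‖θ‖ + 1) * |R|) * (|R| * C)) (Metric.ball_mem_nhds θ one_pos)
    (Filter.Eventually.of_forall fun y => ?_) ?_ ?_ ?_ (integrable_const (μ := ν) _) ?_
  · exact Continuous.aestronglyMeasurable (by fun_prop)
  · exact integrable_of_continuous hR (by fun_prop)
  · exact Continuous.aestronglyMeasurable (by fun_prop)
  · filter_upwards [hR] with x hx y hy
    rw [norm_smul, Real.norm_eq_abs, Real.abs_exp, ContinuousLinearMap.norm_smulRight_apply,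
      innerSL_apply_norm]
    have hy' : ‖y‖ ≤ ‖θ‖ + 1 := by
      have : ‖y - θ‖ < 1 := by simpa [dist_eq_norm] using hy
      linarith [norm_le_norm_add_norm_sub' y θ, norm_sub_rev y θ]
    have hx' := hx.trans (le_abs_self R)
    gcongr
    · exact (real_inner_le_norm _ _).trans (by gcongr)
    · exact hC x hx
  · refine Filter.Eventually.of_forall fun x y _ => ?_
    have h1 : HasFDerivAt (fun z : E => ⟪z, x⟫) (innerSL ℝ x) y := by
      have := (innerSL ℝ x).hasFDerivAt (x := y)
      simpa [real_inner_comm] using this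
    convert h1.exp.smul_const (g x) using 1
    ext v; simp [smul_smul]

lemma contDiff_lap [IsFiniteMeasure ν] (hR : ∀ᵐ x ∂ν, ‖x‖ ≤ R) (k : ℕ) :
    ∀ {F : Type} [NormedAddCommGroup F] [NormedSpace ℝ F] [CompleteSpace F] {g : E → F},
      Continuous g → ContDiff ℝ k (lap ν g) := by
  induction k with
  | zero =>
    intro F _ _ _ g hg
    exact contDiff_zero.2 (continuous_iff_continuousAt.2 fun θ =>
      (hasFDerivAt_lap hR hg θ).continuousAt)
  | succ k ih =>
    intro F _ _ _ g hg
    have hc : Continuous fun x => (innerSL ℝ x).smulRight (g x) := by fun_prop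
    exact contDiff_succ_iff_hasFDerivAt.2 ⟨_, ih hc, hasFDerivAt_lap hR hg⟩

variable [IsFiniteMeasure ν] [NeZero ν]

lemma integrable_exp_inner (hR : ∀ᵐ x ∂ν, ‖x‖ ≤ R) (θ : E) :
    Integrable (fun x => Real.exp ⟪θ, x⟫) ν := integrable_of_continuous hR (by fun_prop)

lemma tl_prob (hR : ∀ᵐ x ∂ν, ‖x‖ ≤ R) (θ : E) : IsProbabilityMeasure (tl ν θ) :=
  isProbabilityMeasure_tilted (integrable_exp_inner hR θ)

lemma lap_one_pos (hR : ∀ᵐ x ∂ν, ‖x‖ ≤ R) (θ : E) : 0 < lap ν (fun _ => (1 : ℝ)) θ := by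
  simp only [lap, smul_eq_mul, mul_one]
  exact integral_exp_pos (integrable_exp_inner hR θ)

lemma tl_ae {p : E → Prop} (h : ∀ᵐ x ∂ν, p x) (θ : E) : ∀ᵐ x ∂tl ν θ, p x :=
  (tilted_absolutelyContinuous _ _).ae_le h

lemma tl_integrable (hR : ∀ᵐ x ∂ν, ‖x‖ ≤ R) (θ : E) {g : E → F} (hg : Continuous g) :
    Integrable g (tl ν θ) :=
  have := tl_prob hR θ
  integrable_of_continuous (tl_ae hR θ) hg

lemma integral_tl (θ : E) (g : E → F) :
    ∫ x, g x ∂tl ν θ = (lap ν (fun _ => (1 : ℝ)) θ)⁻¹ • lap ν g θ := by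
  rw [tl, integral_tilted, lap, lap, ← integral_smul]
  refine integral_congr_ae (Filter.Eventually.of_forall fun x => ?_)
  simp only [smul_eq_mul, mul_one, smul_smul]
  congr 1; rw [div_eq_inv_mul]

lemma contDiff_integral_tl [CompleteSpace F] (hR : ∀ᵐ x ∂ν, ‖x‖ ≤ R) (k : ℕ) {g : E → F}
    (hg : Continuous g) : ContDiff ℝ k fun θ => ∫ x, g x ∂tl ν θ := by
  simp only [integral_tl]
  exact ((contDiff_lap hR k continuous_const).inv fun θ => (lap_one_pos hR θ).ne').smul
    (contDiff_lap hR k hg)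

/-- The barycentre of the tilted measure. -/
def bary (ν : Measure E) (θ : E) : E := ∫ x, x ∂tl ν θ

lemma contDiff_bary (hR : ∀ᵐ x ∂ν, ‖x‖ ≤ R) (k : ℕ) : ContDiff ℝ k (bary ν) :=
  contDiff_integral_tl hR k continuous_id

lemma inner_bary (hR : ∀ᵐ x ∂ν, ‖x‖ ≤ R) (θ a : E) :
    ⟪bary ν θ, a⟫ = ∫ x, ⟪x, a⟫ ∂tl ν θ := by
  rw [real_inner_comm, bary, ← integral_inner (f := fun x : E => x)
    (tl_integrable hR θ continuous_id) a]
  simp only [real_inner_comm]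

/-- Differentiating an expectation under the tilt produces a covariance. -/
lemma hasFDerivAt_integral_tl (hR : ∀ᵐ x ∂ν, ‖x‖ ≤ R) {g : E → ℝ}
    (hg : Continuous g) (θ v : E) :
    fderiv ℝ (fun θ => ∫ x, g x ∂tl ν θ) θ v = ∫ x, ⟪x - bary ν θ, v⟫ * g x ∂tl ν θ := by
  have h1 := hasFDerivAt_lap hR (continuous_const (y := (1 : ℝ))) θ
  have hZ := lap_one_pos hR θ
  have hd : DifferentiableAt ℝ (fun θ => ∫ x, g x ∂tl ν θ) θ :=
    (contDiff_integral_tl hR 1 hg).differentiable (by simp) θ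
  have h2 := h1.mul hd.hasFDerivAt
  have h3 : lap ν g = lap ν (fun _ => (1 : ℝ)) * fun θ => ∫ x, g x ∂tl ν θ := by
    ext ϑ
    have := (lap_one_pos hR ϑ).ne'
    simp only [Pi.mul_apply, integral_tl, smul_eq_mul]
    field_simp
  rw [← h3] at h2
  have h4 := DFunLike.congr_fun (h2.unique (hasFDerivAt_lap hR hg θ)) v
  have hap : ∀ g : E → ℝ, Continuous g → lap ν (fun x => (innerSL ℝ x).smulRight (g x)) θ v
      = lap ν (fun x => ⟪x, v⟫ * g x) θ := by
    intro g hg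
    rw [lap, ContinuousLinearMap.integral_apply, lap]
    · refine integral_congr_ae (Filter.Eventually.of_forall fun x => ?_)
      simp
    · have hc : Continuous fun x => (innerSL ℝ x).smulRight (g x) := by fun_prop
      exact integrable_of_continuous hR (by fun_prop)
  have e1 : ∫ x, ⟪x - bary ν θ, v⟫ * g x ∂tl ν θ
      = ∫ x, ⟪x, v⟫ * g x ∂tl ν θ - ⟪bary ν θ, v⟫ * ∫ x, g x ∂tl ν θ := by
    rw [← integral_const_mul, ← integral_sub]
    · refine integral_congr_ae (Filter.Eventually.of_forall fun x => ?_)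
      simp only [inner_sub_left]; ring
    · exact tl_integrable hR θ (by fun_prop)
    · exact tl_integrable hR θ (by fun_prop)
  rw [e1, inner_bary hR]
  simp only [smul_eq_mul, add_apply, smul_apply] at h4
  rw [hap g hg, hap _ continuous_const] at h4
  simp only [integral_tl, mul_one, smul_eq_mul] at h4 ⊢
  field_simp at h4 ⊢
  linarith

lemma inner_fderiv_bary (hR : ∀ᵐ x ∂ν, ‖x‖ ≤ R) (θ a b : E) :
    ⟪fderiv ℝ (bary ν) θ a, b⟫ = ∫ x, ⟪x - bary ν θ, a⟫ * ⟪x - bary ν θ, b⟫ ∂tl ν θ := by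
  have h1 : ⟪fderiv ℝ (bary ν) θ a, b⟫ = fderiv ℝ (fun θ => ∫ x, ⟪x, b⟫ ∂tl ν θ) θ a := by
    have hd := ((contDiff_bary hR 1).differentiable (by simp) θ).hasFDerivAt
    have h2 : HasFDerivAt (fun θ => ⟪bary ν θ, b⟫) ((innerSL ℝ b).comp (fderiv ℝ (bary ν) θ)) θ := by
      have := (innerSL ℝ b).hasFDerivAt.comp θ hd
      refine this.congr_of_eventuallyEq (Filter.Eventually.of_forall fun z => ?_)
      simp [real_inner_comm]
    simp only [inner_bary hR] at h2
    rw [h2.fderiv]; simp [real_inner_comm]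
  have := tl_prob hR θ
  rw [h1, hasFDerivAt_integral_tl hR (by fun_prop)]
  have h0 : ∫ x, ⟪x - bary ν θ, a⟫ * ⟪bary ν θ, b⟫ ∂tl ν θ = 0 := by
    rw [integral_mul_const]
    simp only [inner_sub_left]
    rw [integral_sub (tl_integrable hR θ (by fun_prop)) (integrable_const _), inner_bary hR]
    simp
  rw [← sub_zero (∫ x, ⟪x - bary ν θ, a⟫ * ⟪x, b⟫ ∂tl ν θ), ← h0, ← integral_sub]
  · refine integral_congr_ae (Filter.Eventually.of_forall fun x => ?_)
    simp only [inner_sub_left]; ring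
  · exact tl_integrable hR θ (by fun_prop)
  · exact tl_integrable hR θ (by fun_prop)

lemma integral_centred (hR : ∀ᵐ x ∂ν, ‖x‖ ≤ R) (θ a : E) :
    ∫ x, ⟪x - bary ν θ, a⟫ ∂tl ν θ = 0 := by
  have := tl_prob hR θ
  simp only [inner_sub_left]
  rw [integral_sub (tl_integrable hR θ (by fun_prop)) (integrable_const _), inner_bary hR]
  simp

/-- The derivative of the covariance under the tilt is the third central moment. -/
lemma inner_fderiv_fderiv_bary (hR : ∀ᵐ x ∂ν, ‖x‖ ≤ R) (θ v a b : E) :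
    ⟪fderiv ℝ (fderiv ℝ (bary ν)) θ v a, b⟫
      = ∫ x, ⟪x - bary ν θ, v⟫ * (⟪x - bary ν θ, a⟫ * ⟪x - bary ν θ, b⟫) ∂tl ν θ := by
  have hP := fun θ => tl_prob hR θ
  have hf : ∀ θ, ⟪fderiv ℝ (bary ν) θ a, b⟫
      = ∫ x, ⟪x, a⟫ * ⟪x, b⟫ ∂tl ν θ - (∫ x, ⟪x, a⟫ ∂tl ν θ) * ∫ x, ⟪x, b⟫ ∂tl ν θ := by
    intro θ
    rw [inner_fderiv_bary hR]
    have : ∀ x, ⟪x - bary ν θ, a⟫ * ⟪x - bary ν θ, b⟫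
      = ⟪x, a⟫ * ⟪x, b⟫ - ⟪bary ν θ, a⟫ * ⟪x, b⟫ - ⟪x - bary ν θ, a⟫ * ⟪bary ν θ, b⟫ := by
      intro x; simp only [inner_sub_left]; ring
    simp only [this]
    rw [integral_sub, integral_sub, integral_const_mul, integral_mul_const, integral_centred hR,
      inner_bary hR, inner_bary hR]
    · ring
    all_goals exact tl_integrable hR θ (by fun_prop)
  have hA : ContDiff ℝ 1 (fderiv ℝ (bary ν)) :=
    (contDiff_bary hR 2).fderiv_right (m := 1) (by norm_num)
  have hd := (hA.differentiable (by simp) θ).hasFDerivAt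
  have h1 : HasFDerivAt (fun θ => ⟪fderiv ℝ (bary ν) θ a, b⟫)
      ((innerSL ℝ b).comp ((ContinuousLinearMap.apply ℝ E a).comp
        (fderiv ℝ (fderiv ℝ (bary ν)) θ))) θ := by
    have := (innerSL ℝ b).hasFDerivAt.comp θ
      ((ContinuousLinearMap.apply ℝ E a).hasFDerivAt.comp θ hd)
    refine this.congr_of_eventuallyEq (Filter.Eventually.of_forall fun z => ?_)
    simp [real_inner_comm]
  simp only [hf] at h1
  have hdiff : ∀ g : E → ℝ, Continuous g → DifferentiableAt ℝ (fun θ => ∫ x, g x ∂tl ν θ) θ :=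
    fun g hg => (contDiff_integral_tl hR 1 hg).differentiable (by simp) θ
  have h2 := ((hdiff (fun x => ⟪x, a⟫ * ⟪x, b⟫) (by fun_prop)).hasFDerivAt.sub
    ((hdiff (fun x => ⟪x, a⟫) (by fun_prop)).hasFDerivAt.mul
      (hdiff (fun x => ⟪x, b⟫) (by fun_prop)).hasFDerivAt))
  have h3 := DFunLike.congr_fun (h1.unique h2) v
  simp only [ContinuousLinearMap.comp_apply, ContinuousLinearMap.apply_apply, innerSL_apply_apply,
    sub_apply, add_apply, smul_apply, smul_eq_mul] at h3
  rw [real_inner_comm, h3, hasFDerivAt_integral_tl hR (by fun_prop),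
    hasFDerivAt_integral_tl hR (by fun_prop), hasFDerivAt_integral_tl hR (by fun_prop),
    ← integral_const_mul, ← integral_const_mul, ← integral_add, ← integral_sub,
    ← sub_eq_zero, ← integral_sub]
  · have h0 : ∫ x, ⟪x - bary ν θ, v⟫ * (⟪bary ν θ, a⟫ * ⟪bary ν θ, b⟫) ∂tl ν θ = 0 := by
      rw [integral_mul_const, integral_centred hR, zero_mul]
    rw [← neg_eq_zero, ← integral_neg, ← h0]
    refine integral_congr_ae (Filter.Eventually.of_forall fun x => ?_)
    simp only [inner_sub_left, ← inner_bary hR]; ring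
  all_goals exact tl_integrable hR θ (by fun_prop)

end Tilt

/-! ### The Brascamp–Lieb inequality for quadratic functions -/

section BrascampLieb

/-- Second-order expansion, at `ε → 0`, of the inequality
`E e^{εX - cε²Y} E e^{-εX} ≤ 1`. -/
lemma var_le_of_exp {Ω : Type*} [MeasurableSpace Ω] {P : Measure Ω} [IsProbabilityMeasure P]
    {X Y : Ω → ℝ} (hXm : AEStronglyMeasurable X P) (hYm : AEStronglyMeasurable Y P)
    {B c ε₀ : ℝ} (hX : ∀ᵐ x ∂P, |X x| ≤ B) (hY : ∀ᵐ x ∂P, |Y x| ≤ B)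
    (hc : 0 ≤ c) (hε₀ : 0 < ε₀) (h0 : ∫ x, X x ∂P = 0)
    (h : ∀ ε, 0 < ε → ε < ε₀ →
      (∫ x, Real.exp (ε * X x - ε ^ 2 * c * Y x) ∂P) * (∫ x, Real.exp (-ε * X x) ∂P) ≤ 1) :
    ∫ x, X x ^ 2 ∂P ≤ c * ∫ x, Y x ∂P := by
  have hB : 0 ≤ B := by
    obtain ⟨x, hx⟩ := hX.exists
    exact (abs_nonneg _).trans hx
  have iX : Integrable X P := Integrable.of_bound hXm B hX
  have iY : Integrable Y P := Integrable.of_bound hYm B hY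
  have iX2 : Integrable (fun x => X x ^ 2) P := by
    refine Integrable.of_bound (hXm.pow 2) (B ^ 2) (hX.mono fun x hx => ?_)
    simp only [norm_pow, Real.norm_eq_abs]; gcongr
  set K : ℝ := (B + c * B) ^ 3 + c * B * B with hK
  have taylor : ∀ u r : ℝ, |u| ≤ r → r ≤ 1 → 1 + u + u ^ 2 / 2 - r ^ 3 ≤ Real.exp u := by
    intro u r hu hr
    have h1 := Real.exp_bound (hu.trans hr) (n := 3) (by norm_num)
    have h2 := (abs_le.1 h1).1
    simp only [Finset.sum_range_succ, Finset.range_zero, Finset.sum_empty, Nat.factorial] at h2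
    norm_num at h2
    have h3 : |u| ^ 3 ≤ r ^ 3 := by gcongr
    have h4 : 0 ≤ |u| ^ 3 := by positivity
    nlinarith
  set a := (∫ x, X x ^ 2 ∂P) / 2 - c * ∫ x, Y x ∂P with ha
  set b := (∫ x, X x ^ 2 ∂P) / 2 with hb
  have key : ∀ ε, 0 < ε → ε < ε₀ → ε * (B + c * B) ≤ 1 → ε ≤ 1 →
      1 + ε ^ 2 * a - ε ^ 3 * K ≤ ∫ x, Real.exp (ε * X x - ε ^ 2 * c * Y x) ∂P ∧
      1 + ε ^ 2 * b - ε ^ 3 * K ≤ ∫ x, Real.exp (-ε * X x) ∂P := by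
    intro ε h1 h2 h3 h4
    have iexp : ∀ f : Ω → ℝ, AEStronglyMeasurable f P → (∀ᵐ x ∂P, |f x| ≤ 1) →
        Integrable (fun x => Real.exp (f x)) P := by
      intro f hf hf1
      refine Integrable.of_bound (Real.continuous_exp.comp_aestronglyMeasurable hf) (Real.exp 1)
        (hf1.mono fun x hx => ?_)
      rw [Real.norm_eq_abs, Real.abs_exp]
      exact Real.exp_le_exp.2 ((le_abs_self _).trans hx)
    have bd1 : ∀ᵐ x ∂P, |ε * X x - ε ^ 2 * c * Y x| ≤ ε * (B + c * B) := by
      filter_upwards [hX, hY] with x hx hy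
      calc |ε * X x - ε ^ 2 * c * Y x| ≤ |ε * X x| + |ε ^ 2 * c * Y x| := abs_sub _ _
        _ = ε * |X x| + ε * ε * c * |Y x| := by
          rw [abs_mul, abs_mul, abs_of_pos h1, abs_of_nonneg (by positivity : 0 ≤ ε ^ 2 * c)]; ring
        _ ≤ ε * B + ε * 1 * c * B := by gcongr
        _ = _ := by ring
    have bd2 : ∀ᵐ x ∂P, |(-ε) * X x| ≤ ε * (B + c * B) := by
      filter_upwards [hX] with x hx
      rw [abs_mul, abs_neg, abs_of_pos h1]
      have : 0 ≤ c * B := by positivity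
      gcongr; linarith
    constructor
    · have e : 1 + ε ^ 2 * a - ε ^ 3 * K
          = ∫ x, (1 + ε * X x - ε ^ 2 * c * Y x + ε ^ 2 / 2 * X x ^ 2 - ε ^ 3 * K) ∂P := by
        rw [integral_sub, integral_add, integral_sub, integral_add]
        · simp only [integral_const_mul, integral_const, h0, ha]; simp; ring
        all_goals fun_prop
      rw [e]
      refine integral_mono_ae (by fun_prop)
        (iexp _ (by fun_prop) (bd1.mono fun x hx => hx.trans h3)) ?_
      filter_upwards [bd1, hX, hY] with x hx hx' hy
      have ht := taylor _ _ hx h3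
      have : X x * Y x ≤ B * B :=
        (le_abs_self _).trans (by rw [abs_mul]; gcongr)
      have h5 : ε ^ 3 * c * (X x * Y x) ≤ ε ^ 3 * c * (B * B) := by gcongr
      simp only [hK]
      nlinarith [sq_nonneg (ε ^ 2 * c * Y x)]
    · have e : 1 + ε ^ 2 * b - ε ^ 3 * K
          = ∫ x, (1 - ε * X x + ε ^ 2 / 2 * X x ^ 2 - ε ^ 3 * K) ∂P := by
        rw [integral_sub, integral_add, integral_sub]
        · simp only [integral_const_mul, integral_const, h0, hb]; simp; ring
        all_goals fun_prop
      rw [e]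
      refine integral_mono_ae (by fun_prop)
        (iexp _ (by fun_prop) (bd2.mono fun x hx => hx.trans h3)) ?_
      filter_upwards [bd2] with x hx
      have ht := taylor _ _ hx h3
      have : 0 ≤ ε ^ 3 * (c * B * B) := by positivity
      simp only [hK]
      nlinarith
  have lim : Filter.Tendsto (fun ε : ℝ => 2 * ε * K - ε ^ 2 * (a - ε * K) * (b - ε * K))
      (nhdsWithin 0 (Set.Ioi 0)) (nhds 0) := by
    have : Continuous fun ε : ℝ => 2 * ε * K - ε ^ 2 * (a - ε * K) * (b - ε * K) := by fun_prop
    have h2 := this.tendsto 0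
    simp only [mul_zero, zero_mul, sub_zero, ne_eq, OfNat.ofNat_ne_zero, not_false_eq_true,
      zero_pow] at h2
    exact h2.mono_left nhdsWithin_le_nhds
  have small : ∀ f : ℝ → ℝ, Continuous f → ∀ r, f 0 < r → ∀ᶠ ε in nhdsWithin (0 : ℝ) (Set.Ioi 0),
      f ε < r := fun f hf r hr =>
    nhdsWithin_le_nhds (hf.continuousAt.eventually_lt_const hr)
  have : a + b ≤ 0 := by
    refine ge_of_tendsto lim ?_
    filter_upwards [self_mem_nhdsWithin, small id continuous_id ε₀ (by simpa using hε₀),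
      small id continuous_id 1 (by simp),
      small (fun ε => ε * (B + c * B)) (by fun_prop) 1 (by simp),
      small (fun ε => -(1 + ε ^ 2 * a - ε ^ 3 * K)) (by fun_prop) 0 (by simp),
      small (fun ε => -(1 + ε ^ 2 * b - ε ^ 3 * K)) (by fun_prop) 0 (by simp)]
      with ε h1 h2 h3 h4 h5 h6
    have h1 : 0 < ε := h1
    obtain ⟨k1, k2⟩ := key ε h1 h2 h4.le h3.le
    have := (mul_le_mul k1 k2 (by linarith) (by linarith)).trans (h ε h1 h2)
    have e : (1 + ε ^ 2 * a - ε ^ 3 * K) * (1 + ε ^ 2 * b - ε ^ 3 * K) - 1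
      = ε ^ 2 * ((a + b) - (2 * ε * K - ε ^ 2 * (a - ε * K) * (b - ε * K))) := by ring
    have h7 : ε ^ 2 * ((a + b) - (2 * ε * K - ε ^ 2 * (a - ε * K) * (b - ε * K))) ≤ 0 := by
      rw [← e]; linarith
    have h8 := nonpos_of_mul_nonpos_right h7 (by positivity)
    linarith
  linarith

variable {n : ℕ}

/-- Euclidean space `ℝⁿ`. -/
abbrev Euc (n : ℕ) := EuclideanSpace ℝ (Fin n)

/-- The Gaussian weight `e^{-|x|²/2} dx` restricted to `L`. -/
def gm (L : Set (Euc n)) : Measure (Euc n) :=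
  (volume.restrict L).withDensity fun x => ENNReal.ofReal (Real.exp (-‖x‖ ^ 2 / 2))

lemma integral_gm {F : Type*} [NormedAddCommGroup F] [NormedSpace ℝ F] (L : Set (Euc n)) (g : Euc n → F) :
    ∫ x, g x ∂gm L = ∫ x in L, Real.exp (-‖x‖ ^ 2 / 2) • g x := by
  rw [gm, integral_withDensity_eq_integral_toReal_smul (by fun_prop)
    (Filter.Eventually.of_forall fun x => by simp)]
  refine integral_congr_ae (Filter.Eventually.of_forall fun x => ?_)
  simp only [ENNReal.toReal_ofReal (Real.exp_pos _).le]

lemma gm_finite {L : Set (Euc n)} (hL : IsCompact L) : IsFiniteMeasure (gm L) := by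
  refine ⟨?_⟩
  rw [gm, withDensity_apply _ MeasurableSet.univ, Measure.restrict_univ]
  calc ∫⁻ x in L, ENNReal.ofReal (Real.exp (-‖x‖ ^ 2 / 2)) ≤ ∫⁻ x in L, 1 := by
        refine lintegral_mono fun x => ?_
        rw [← ENNReal.ofReal_one]
        refine ENNReal.ofReal_le_ofReal (Real.exp_le_one_iff.2 ?_)
        have := sq_nonneg ‖x‖; linarith
    _ < ⊤ := by simpa using hL.measure_lt_top

lemma gm_neZero {L : Set (Euc n)} (hL : (interior L).Nonempty) : NeZero (gm L) := by
  refine ⟨fun h => ?_⟩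
  rw [gm, withDensity_eq_zero_iff (by fun_prop)] at h
  have h2 : (volume.restrict L) Set.univ ≠ 0 := by
    rw [Measure.restrict_apply_univ]
    exact (Measure.measure_pos_of_nonempty_interior _ hL).ne'
  apply h2
  have h3 : ∀ᵐ x ∂volume.restrict L, False := by
    filter_upwards [h] with x hx
    simp at hx
    exact absurd hx (not_le.2 (Real.exp_pos _))
  simpa [Filter.eventually_false_iff_eq_bot] using h3

lemma gm_ae {L : Set (Euc n)} (hL : IsCompact L) : ∀ᵐ x ∂gm L, x ∈ L :=
  (withDensity_absolutelyContinuous _ _).ae_le (ae_restrict_mem hL.measurableSet)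

lemma lap_gm_eq {L : Set (Euc n)} (hL : IsCompact L) (θ : Euc n) {φ : Euc n → ℝ} (hφ : Continuous φ) :
    ENNReal.ofReal (lap (gm L) (fun x => Real.exp (φ x)) θ)
      = ∫⁻ x, L.indicator (fun x => ENNReal.ofReal (Real.exp (φ x + ⟪θ, x⟫ - ‖x‖ ^ 2 / 2))) x := by
  rw [lap, integral_gm, lintegral_indicator hL.measurableSet,
    ← ofReal_integral_eq_lintegral_ofReal]
  · congr 1
    refine integral_congr_ae (Filter.Eventually.of_forall fun x => ?_)
    simp only [smul_eq_mul, ← Real.exp_add]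
    congr 1; ring
  · exact ContinuousOn.integrableOn_compact hL (by fun_prop)
  · exact Filter.Eventually.of_forall fun x => (Real.exp_pos _).le

/-- Property `(τ)` of Maurey for the tilted Gaussian weight on a convex set, a direct consequence of
the Prékopa–Leindler inequality and the parallelogram identity. -/
lemma tl_prekopa {L : Set (Euc n)} (hL : IsCompact L) (hconv : Convex ℝ L)
    (hne : (interior L).Nonempty) (θ : Euc n) {φ ψ : Euc n → ℝ} (hφ : Continuous φ) (hψ : Continuous ψ)
    (h : ∀ x y, φ x + ψ y ≤ ‖x - y‖ ^ 2 / 4) :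
    (∫ x, Real.exp (φ x) ∂tl (gm L) θ) * (∫ x, Real.exp (ψ x) ∂tl (gm L) θ) ≤ 1 := by
  have := gm_finite hL
  have := gm_neZero hne
  obtain ⟨R, hR⟩ := hL.isBounded.exists_norm_le
  have hR' : ∀ᵐ x ∂gm L, ‖x‖ ≤ R := (gm_ae hL).mono hR
  have hZ := lap_one_pos hR' θ
  have pos : ∀ φ : Euc n → ℝ, 0 ≤ lap (gm L) (fun x => Real.exp (φ x)) θ := fun φ =>
    integral_nonneg fun x => by positivity
  have main := prekopa_leindler n
    (L.indicator (fun x => ENNReal.ofReal (Real.exp (φ x + ⟪θ, x⟫ - ‖x‖ ^ 2 / 2))))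
    (L.indicator (fun x => ENNReal.ofReal (Real.exp (ψ x + ⟪θ, x⟫ - ‖x‖ ^ 2 / 2))))
    (L.indicator (fun x => ENNReal.ofReal (Real.exp ((0 : ℝ) + ⟪θ, x⟫ - ‖x‖ ^ 2 / 2))))
    (Measurable.indicator (by fun_prop) hL.measurableSet)
    (Measurable.indicator (by fun_prop) hL.measurableSet)
    (Measurable.indicator (by fun_prop) hL.measurableSet) ?_
  · rw [← lap_gm_eq hL θ hφ, ← lap_gm_eq hL θ hψ,
      ← lap_gm_eq hL θ (φ := fun _ => 0) continuous_const, ← ENNReal.ofReal_mul (pos _),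
      ← ENNReal.ofReal_pow (pos _), ENNReal.ofReal_le_ofReal_iff (by positivity)] at main
    simp only [Real.exp_zero] at main
    simp only [integral_tl, smul_eq_mul]
    field_simp
    linarith
  · intro x y
    by_cases hx : x ∈ L
    swap
    · simp [hx]
    by_cases hy : y ∈ L
    swap
    · simp [hy]
    have hm : (1/2 : ℝ) • (x + y) ∈ L := by
      rw [smul_add]
      exact hconv hx hy (by norm_num) (by norm_num) (by norm_num)
    rw [Set.indicator_of_mem hx, Set.indicator_of_mem hy, Set.indicator_of_mem hm,
      ← ENNReal.ofReal_mul (Real.exp_pos _).le, ← ENNReal.ofReal_pow (Real.exp_pos _).le,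
      ← Real.exp_add, ← Real.exp_nat_mul]
    refine ENNReal.ofReal_le_ofReal (Real.exp_le_exp.2 ?_)
    have h1 := h x y
    have h2 := parallelogram_law_with_norm ℝ x y
    rw [norm_smul, inner_smul_right, inner_add_right]
    norm_num
    nlinarith

/-- The Brascamp–Lieb inequality for a quadratic function. -/
lemma tl_brascamp_lieb {L : Set (Euc n)} (hL : IsCompact L) (hconv : Convex ℝ L)
    (hne : (interior L).Nonempty) (θ p b : Euc n) (m : ℝ) (S : Euc n →L[ℝ] Euc n)
    (hS : ∀ x y, ⟪S x, y⟫ = ⟪x, S y⟫)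
    (h0 : ∫ x, (⟪S (x - p), x - p⟫ + ⟪b, x - p⟫ - m) ∂tl (gm L) θ = 0) :
    ∫ x, (⟪S (x - p), x - p⟫ + ⟪b, x - p⟫ - m) ^ 2 ∂tl (gm L) θ
      ≤ ∫ x, ‖(2 : ℝ) • S (x - p) + b‖ ^ 2 ∂tl (gm L) θ := by
  have := gm_finite hL
  have := gm_neZero hne
  obtain ⟨R, hR⟩ := hL.isBounded.exists_norm_le
  have hR' : ∀ᵐ x ∂gm L, ‖x‖ ≤ R := (gm_ae hL).mono hR
  have := tl_prob hR' θ
  set f : Euc n → ℝ := fun x => ⟪S (x - p), x - p⟫ + ⟪b, x - p⟫ - m with hf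
  set g : Euc n → ℝ := fun x => ‖(2 : ℝ) • S (x - p) + b‖ ^ 2 with hg
  have hfc : Continuous f := by fun_prop
  have hgc : Continuous g := by fun_prop
  obtain ⟨B₁, -, hB₁⟩ := bdd_of_continuous hfc R
  obtain ⟨B₂, -, hB₂⟩ := bdd_of_continuous hgc R
  suffices H : ∀ c : ℝ, 1 < c → ∫ x, f x ^ 2 ∂tl (gm L) θ ≤ c * ∫ x, g x ∂tl (gm L) θ by
    have hlim : Filter.Tendsto (fun c : ℝ => c * ∫ x, g x ∂tl (gm L) θ)
        (nhdsWithin 1 (Set.Ioi 1)) (nhds (1 * ∫ x, g x ∂tl (gm L) θ)) :=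
      ((continuous_id.mul continuous_const).tendsto 1).mono_left nhdsWithin_le_nhds
    rw [one_mul] at hlim
    exact ge_of_tendsto hlim (Filter.eventually_of_mem self_mem_nhdsWithin H)
  intro c hc
  refine var_le_of_exp (B := max B₁ B₂) (c := c) (ε₀ := (1 - 1 / c) / (4 * (‖S‖ + 1)))
    hfc.aestronglyMeasurable hgc.aestronglyMeasurable
    ((tl_ae hR' θ).mono fun x hx => (hB₁ x hx).trans (le_max_left _ _))
    ((tl_ae hR' θ).mono fun x hx => (hB₂ x hx).trans (le_max_right _ _)) (by linarith) ?_ h0 ?_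
  · have : 1 / c < 1 := (div_lt_one (by linarith)).2 hc
    have : 0 < 1 - 1 / c := by linarith
    positivity
  intro ε h1 h2
  refine tl_prekopa hL hconv hne θ (φ := fun x => ε * f x - ε ^ 2 * c * g x)
    (ψ := fun x => -ε * f x) (by fun_prop) (by fun_prop) fun x y => ?_
  set d := x - y with hd
  set G := (2 : ℝ) • S (x - p) + b with hG
  have e1 : f x - f y = ⟪G, d⟫ - ⟪S d, d⟫ := by
    have hy : y - p = (x - p) - d := by rw [hd]; abel
    have quad : ∀ z d : Euc n, ⟪S z, z⟫ + ⟪b, z⟫ - m - (⟪S (z - d), z - d⟫ + ⟪b, z - d⟫ - m)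
        = ⟪(2 : ℝ) • S z + b, d⟫ - ⟪S d, d⟫ := by
      intro z d
      have h3 := hS d z
      rw [real_inner_comm] at h3
      simp only [map_sub, inner_sub_left, inner_sub_right, inner_add_left,
        inner_smul_left, RCLike.conj_to_real]
      rw [real_inner_comm d (S z), real_inner_comm z (S d), h3, real_inner_comm]
      ring
    simp only [hf, hG, hy]
    exact quad _ _
  have e2 : ⟪G, d⟫ ≤ ‖G‖ * ‖d‖ := real_inner_le_norm _ _
  have e3 : -⟪S d, d⟫ ≤ ‖S‖ * ‖d‖ ^ 2 := by
    have := (neg_le_abs _).trans (abs_real_inner_le_norm (S d) d)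
    refine this.trans ?_
    rw [sq, ← mul_assoc]; gcongr; exact S.le_opNorm d
  have hgx : g x = ‖G‖ ^ 2 := rfl
  have e4 : 4 * (ε * ‖S‖) ≤ 1 - 1 / c := by
    have h3 : ε * (4 * (‖S‖ + 1)) < 1 - 1 / c := by
      rwa [lt_div_iff₀ (by positivity)] at h2
    nlinarith
  have e5 : ε * (‖G‖ * ‖d‖) ≤ ‖d‖ ^ 2 / (4 * c) + ε ^ 2 * c * ‖G‖ ^ 2 := by
    have hc0 : 0 < c := by linarith
    have : 0 ≤ (‖d‖ / 2 - ε * c * ‖G‖) ^ 2 / c := by positivity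
    have e : (‖d‖ / 2 - ε * c * ‖G‖) ^ 2 / c
      = ‖d‖ ^ 2 / (4 * c) + ε ^ 2 * c * ‖G‖ ^ 2 - ε * (‖G‖ * ‖d‖) := by field_simp; ring
    linarith
  have e6 : ‖d‖ ^ 2 / (4 * c) = 1 / c * ‖d‖ ^ 2 / 4 := by field_simp
  rw [hgx]
  have e7 : ε * f x - ε ^ 2 * c * ‖G‖ ^ 2 + -ε * f y
      = ε * (f x - f y) - ε ^ 2 * c * ‖G‖ ^ 2 := by ring
  have e8 : ε * (f x - f y) ≤ ε * (‖G‖ * ‖d‖) + ε * (‖S‖ * ‖d‖ ^ 2) := by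
    rw [e1, ← mul_add]; gcongr; linarith
  have e9 : 4 * (ε * ‖S‖) * ‖d‖ ^ 2 ≤ (1 - 1 / c) * ‖d‖ ^ 2 := by gcongr
  change ε * f x - ε ^ 2 * c * ‖G‖ ^ 2 + -ε * f y ≤ ‖d‖ ^ 2 / 4
  linarith

end BrascampLieb

/-! ### Covariance of the tilted Gaussian weight on a convex body -/

section Cov

variable {n : ℕ}


/-- The covariance operator of the tilt of the Gaussian weight on `L`, as the derivative of the
barycentre. -/
def cov (L : Set (Euc n)) (θ : Euc n) : Euc n →L[ℝ] Euc n := fderiv ℝ (bary (gm L)) θ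

variable {L : Set (Euc n)}

lemma gm_bdd (hL : IsConvexBody L) : ∃ R, 0 ≤ R ∧ (∀ x ∈ L, ‖x‖ ≤ R) ∧ ∀ᵐ x ∂gm L, ‖x‖ ≤ R := by
  obtain ⟨R, hR⟩ := hL.1.isBounded.exists_norm_le
  have h : ∀ x ∈ L, ‖x‖ ≤ max R 0 := fun x hx => (hR x hx).trans (le_max_left _ _)
  exact ⟨max R 0, le_max_right _ _, h, (gm_ae hL.1).mono h⟩

lemma cov_inner (hL : IsConvexBody L) (θ a b : Euc n) : ⟪cov L θ a, b⟫
    = ∫ x, ⟪x - bary (gm L) θ, a⟫ * ⟪x - bary (gm L) θ, b⟫ ∂tl (gm L) θ := by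
  have := gm_finite hL.1
  have := gm_neZero hL.2.2
  obtain ⟨R, -, -, hR⟩ := gm_bdd hL
  exact inner_fderiv_bary hR θ a b

lemma cov_symm (hL : IsConvexBody L) (θ a b : Euc n) : ⟪cov L θ a, b⟫ = ⟪a, cov L θ b⟫ := by
  rw [real_inner_comm (cov L θ b), cov_inner hL, cov_inner hL]
  simp only [mul_comm]

lemma cov_nonneg (hL : IsConvexBody L) (θ a : Euc n) : 0 ≤ ⟪cov L θ a, a⟫ := by
  rw [cov_inner hL]
  exact integral_nonneg fun x => mul_self_nonneg _

lemma cov_le (hL : IsConvexBody L) (θ a : Euc n) : ⟪cov L θ a, a⟫ ≤ ‖a‖ ^ 2 := by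
  have := gm_finite hL.1
  have := gm_neZero hL.2.2
  obtain ⟨R, -, -, hR⟩ := gm_bdd hL
  have := tl_prob hR θ
  have h := tl_brascamp_lieb hL.1 hL.2.1 hL.2.2 θ (bary (gm L) θ) a 0 0 (by simp)
    (by simpa [real_inner_comm] using integral_centred hR θ a)
  rw [cov_inner hL]
  simpa [real_inner_comm, sq] using h

lemma contDiff_bary_gm (hL : IsConvexBody L) (k : ℕ) : ContDiff ℝ k (bary (gm L)) := by
  have := gm_finite hL.1
  have := gm_neZero hL.2.2
  obtain ⟨R, -, -, hR⟩ := gm_bdd hL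
  exact contDiff_bary hR k

lemma contDiff_cov (hL : IsConvexBody L) : ContDiff ℝ 1 (cov L) :=
  (contDiff_bary_gm hL 2).fderiv_right (m := 1) (by norm_num)

lemma hasFDerivAt_bary (hL : IsConvexBody L) (θ : Euc n) :
    HasFDerivAt (bary (gm L)) (cov L θ) θ :=
  ((contDiff_bary_gm hL 1).differentiable (by simp) θ).hasFDerivAt

lemma norm_le_of_form_le {H : Type*} [NormedAddCommGroup H] [InnerProductSpace ℝ H]
    {S : H →L[ℝ] H} {c : ℝ} (hc : 0 ≤ c) (hS : ∀ a b, ⟪S a, b⟫ = ⟪a, S b⟫)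
    (h0 : ∀ a, 0 ≤ ⟪S a, a⟫) (h1 : ∀ a, ⟪S a, a⟫ ≤ c * ‖a‖ ^ 2) : ‖S‖ ≤ c := by
  refine S.opNorm_le_bound hc fun a => ?_
  -- Cauchy–Schwarz for the form of `S`, applied to `a` and `S a`
  have key : ⟪S a, S a⟫ ^ 2 ≤ ⟪S a, a⟫ * ⟪S (S a), S a⟫ := by
    have : ∀ t : ℝ, 0 ≤ ⟪S (S a), S a⟫ * (t * t) + (2 * ⟪S a, S a⟫) * t + ⟪S a, a⟫ := by
      intro t
      have := h0 (t • S a + a)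
      simp only [map_add, map_smul, inner_add_left, inner_add_right, inner_smul_left,
        inner_smul_right, RCLike.conj_to_real] at this
      have h2 : ⟪S (S a), a⟫ = ⟪S a, S a⟫ := hS _ _
      rw [h2] at this
      linarith
    have := discrim_le_zero this
    unfold discrim at this
    nlinarith
  have h2 := h1 a
  have h3 := h1 (S a)
  rw [real_inner_self_eq_norm_sq] at key
  have h4 : (‖S a‖ ^ 2) ^ 2 ≤ (c * ‖a‖ ^ 2) * (c * ‖S a‖ ^ 2) :=
    key.trans (mul_le_mul h2 h3 (h0 _) (by positivity))
  rcases (norm_nonneg (S a)).eq_or_lt with h | h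
  · rw [← h]; positivity
  · have h5 : ‖S a‖ ^ 2 ≤ (c * ‖a‖) ^ 2 := by
      have : 0 < ‖S a‖ ^ 2 := by positivity
      refine le_of_mul_le_mul_right ?_ this
      nlinarith
    exact (sq_le_sq₀ h.le (by positivity)).1 h5

lemma cov_norm_le (hL : IsConvexBody L) (θ : Euc n) : ‖cov L θ‖ ≤ 1 :=
  norm_le_of_form_le zero_le_one (cov_symm hL θ) (cov_nonneg hL θ) fun a => by
    rw [one_mul]; exact cov_le hL θ a

lemma dcov_inner (hL : IsConvexBody L) (θ v a b : Euc n) : ⟪fderiv ℝ (cov L) θ v a, b⟫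
    = ∫ x, ⟪x - bary (gm L) θ, v⟫ * (⟪x - bary (gm L) θ, a⟫ * ⟪x - bary (gm L) θ, b⟫)
      ∂tl (gm L) θ := by
  have := gm_finite hL.1
  have := gm_neZero hL.2.2
  obtain ⟨R, -, -, hR⟩ := gm_bdd hL
  exact inner_fderiv_fderiv_bary hR θ v a b

lemma dcov_symm (hL : IsConvexBody L) (θ v a b : Euc n) :
    ⟪fderiv ℝ (cov L) θ v a, b⟫ = ⟪a, fderiv ℝ (cov L) θ v b⟫ := by
  rw [real_inner_comm (fderiv ℝ (cov L) θ v b), dcov_inner hL, dcov_inner hL]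
  simp only [mul_comm]

lemma dcov_swap (hL : IsConvexBody L) (θ v a : Euc n) :
    fderiv ℝ (cov L) θ v a = fderiv ℝ (cov L) θ a v := by
  refine ext_inner_right ℝ fun b => ?_
  rw [dcov_inner hL, dcov_inner hL]
  simp only [mul_left_comm]

/-- The Hilbert–Schmidt norm of the derivative of the covariance is at most `2|v|`: this is
Brascamp–Lieb for the quadratic form of that derivative. -/
lemma dcov_hs (hL : IsConvexBody L) (θ v : Euc n) (e : OrthonormalBasis (Fin n) ℝ (Euc n)) :
    ∑ k, ‖fderiv ℝ (cov L) θ v (e k)‖ ^ 2 ≤ 4 * ‖v‖ ^ 2 := by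
  have := gm_finite hL.1
  have := gm_neZero hL.2.2
  obtain ⟨R, -, -, hR⟩ := gm_bdd hL
  have := tl_prob hR θ
  set S := fderiv ℝ (cov L) θ v with hS
  set M := bary (gm L) θ with hM
  set m := ∫ x, ⟪S (x - M), x - M⟫ ∂tl (gm L) θ with hm
  have hint : ∀ g : Euc n → ℝ, Continuous g → Integrable g (tl (gm L) θ) :=
    fun g hg => tl_integrable hR θ hg
  have h0 : ∫ x, (⟪S (x - M), x - M⟫ + ⟪(0 : Euc n), x - M⟫ - m) ∂tl (gm L) θ = 0 := by
    simp only [inner_zero_left, add_zero]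
    rw [integral_sub (hint _ (by fun_prop)) (integrable_const _)]
    simp [hm]
  have hBL := tl_brascamp_lieb hL.1 hL.2.1 hL.2.2 θ M 0 m S (dcov_symm hL θ v) h0
  set H := ∑ k, ‖S (e k)‖ ^ 2 with hH
  have hH0 : 0 ≤ H := by positivity
  have b1 : ∫ x, ‖(2 : ℝ) • S (x - M) + 0‖ ^ 2 ∂tl (gm L) θ ≤ 4 * H := by
    have : ∀ x, ‖(2 : ℝ) • S (x - M) + 0‖ ^ 2 = ∑ k, 4 * (⟪x - M, S (e k)⟫ * ⟪x - M, S (e k)⟫) := by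
      intro x
      rw [add_zero, norm_smul, mul_pow, ← e.sum_sq_norm_inner_right (S (x - M)), Finset.mul_sum]
      refine Finset.sum_congr rfl fun k _ => ?_
      rw [real_inner_comm, dcov_symm hL, Real.norm_eq_abs, sq_abs]; norm_num; ring
    simp only [this]
    rw [integral_finsetSum _ fun k _ => hint _ (by fun_prop), hH, Finset.mul_sum]
    refine Finset.sum_le_sum fun k _ => ?_
    rw [integral_const_mul, ← cov_inner hL]
    gcongr
    exact cov_le hL θ _
  have b2 : H = ∫ x, ⟪x - M, v⟫ * (⟪S (x - M), x - M⟫ + ⟪(0 : Euc n), x - M⟫ - m) ∂tl (gm L) θ := by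
    have e1 : ∀ x, ⟪x - M, v⟫ * (⟪S (x - M), x - M⟫ + ⟪(0 : Euc n), x - M⟫ - m)
        = ∑ k, ⟪x - M, v⟫ * (⟪x - M, S (e k)⟫ * ⟪x - M, e k⟫) - m * ⟪x - M, v⟫ := by
      intro x
      rw [← e.sum_inner_mul_inner (S (x - M)) (x - M), ← Finset.mul_sum, inner_zero_left]
      have : ∀ k, ⟪S (x - M), e k⟫ * ⟪e k, x - M⟫ = ⟪x - M, S (e k)⟫ * ⟪x - M, e k⟫ := by
        intro k
        rw [dcov_symm hL, real_inner_comm (x - M) (e k)]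
      simp only [this]; ring
    simp only [e1]
    rw [integral_sub (hint _ (by fun_prop)) (hint _ (by fun_prop)), integral_const_mul,
      integral_centred hR, integral_finsetSum _ fun k _ => hint _ (by fun_prop), mul_zero, sub_zero]
    refine Finset.sum_congr rfl fun k _ => ?_
    rw [← dcov_inner hL, dcov_symm hL, real_inner_self_eq_norm_sq]
  -- Cauchy–Schwarz in the form `2ab ≤ 4a² + b²/4`
  have b3 : 2 * H ≤ 4 * ∫ x, ⟪x - M, v⟫ * ⟪x - M, v⟫ ∂tl (gm L) θ
      + 1 / 4 * ∫ x, (⟪S (x - M), x - M⟫ + ⟪(0 : Euc n), x - M⟫ - m) ^ 2 ∂tl (gm L) θ := by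
    rw [b2, ← integral_const_mul, ← integral_const_mul, ← integral_const_mul, ← integral_add
      (hint _ (by fun_prop)) (hint _ (by fun_prop))]
    refine integral_mono (hint _ (by fun_prop)) (hint _ (by fun_prop)) fun x => ?_
    nlinarith [sq_nonneg (2 * ⟪x - M, v⟫
      - 1 / 2 * (⟪S (x - M), x - M⟫ + ⟪(0 : Euc n), x - M⟫ - m))]
  have b4 := cov_le hL θ v
  rw [cov_inner hL] at b4
  linarith

end Cov

/-! ### The non-commutative Khintchine inequality -/

section Khintchine

variable {n : ℕ}

/-- The trace as a continuous linear functional. -/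
def trL (n : ℕ) : (Euc n →L[ℝ] Euc n) →L[ℝ] ℝ :=
  LinearMap.toContinuousLinearMap ((LinearMap.trace ℝ (Euc n)) ∘ₗ ContinuousLinearMap.coeLM ℝ)

lemma trL_eq_sum (S : Euc n →L[ℝ] Euc n) {ι : Type*} [Fintype ι] (b : OrthonormalBasis ι ℝ (Euc n)) :
    trL n S = ∑ i, ⟪S (b i), b i⟫ := by
  change LinearMap.trace ℝ (Euc n) (S : Euc n →ₗ[ℝ] Euc n) = _
  rw [LinearMap.trace_eq_sum_inner _ b]
  simp [real_inner_comm]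

lemma exists_eigenbasis (X : Euc n →L[ℝ] Euc n) (hX : ∀ a b, ⟪X a, b⟫ = ⟪a, X b⟫) :
    ∃ (f : OrthonormalBasis (Fin n) ℝ (Euc n)) (l : Fin n → ℝ), ∀ i, X (f i) = l i • f i := by
  have hs : (X : Euc n →ₗ[ℝ] Euc n).IsSymmetric := hX
  refine ⟨hs.eigenvectorBasis (by simp), hs.eigenvalues (by simp), fun i => ?_⟩
  exact hs.apply_eigenvectorBasis (by simp) i

lemma pow_apply_eigen {X : Euc n →L[ℝ] Euc n} {v : Euc n} {l : ℝ} (h : X v = l • v) (m : ℕ) :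
    (X ^ m) v = l ^ m • v := by
  induction m with
  | zero => simp
  | succ m ih => rw [pow_succ, mul_apply_eq_comp, h, map_smul, ih, smul_smul, pow_succ']

lemma pow_symm {X : Euc n →L[ℝ] Euc n} (hX : ∀ a b, ⟪X a, b⟫ = ⟪a, X b⟫) (m : ℕ) (a b : Euc n) :
    ⟪(X ^ m) a, b⟫ = ⟪a, (X ^ m) b⟫ := by
  induction m generalizing a b with
  | zero => simp
  | succ m ih =>
    rw [pow_succ, mul_apply_eq_comp, ih, hX, ← mul_apply_eq_comp, ← pow_succ',
      ← pow_succ]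

lemma tr_pow_eq {X : Euc n →L[ℝ] Euc n} {f : OrthonormalBasis (Fin n) ℝ (Euc n)} {l : Fin n → ℝ}
    (h : ∀ i, X (f i) = l i • f i) (m : ℕ) : trL n (X ^ m) = ∑ i, l i ^ m := by
  rw [trL_eq_sum _ f]
  refine Finset.sum_congr rfl fun i _ => ?_
  rw [pow_apply_eigen (h i), inner_smul_left]; simp

lemma pow_mul_pow_add_le (x y : ℝ) (i j q : ℕ) (h : i + j = 2 * q) :
    x ^ i * y ^ j + x ^ j * y ^ i ≤ x ^ (2 * q) + y ^ (2 * q) := by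
  have h1 : x ^ i * y ^ j ≤ |x| ^ i * |y| ^ j := by
    rw [← abs_pow, ← abs_pow, ← abs_mul]; exact le_abs_self _
  have h2 : x ^ j * y ^ i ≤ |x| ^ j * |y| ^ i := by
    rw [← abs_pow, ← abs_pow, ← abs_mul]; exact le_abs_self _
  have h3 : 0 ≤ (|x| ^ i - |y| ^ i) * (|x| ^ j - |y| ^ j) := by
    rcases le_total |x| |y| with h | h
    · exact mul_nonneg_of_nonpos_of_nonpos (sub_nonpos.2 (by gcongr)) (sub_nonpos.2 (by gcongr))
    · exact mul_nonneg (sub_nonneg.2 (by gcongr)) (sub_nonneg.2 (by gcongr))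
  have h4 : x ^ (2 * q) = |x| ^ i * |x| ^ j := by
    rw [← pow_add, h, pow_mul, pow_mul, sq_abs]
  have h5 : y ^ (2 * q) = |y| ^ i * |y| ^ j := by
    rw [← pow_add, h, pow_mul, pow_mul, sq_abs]
  rw [h4, h5]; linarith

variable (T : Euc n →L[ℝ] Euc n →L[ℝ] Euc n)

/-- The traces occurring in the Gaussian integration by parts are largest when the two copies of
`T e_k` are adjacent. -/
lemma sum_tr_le {ι : Type*} [Fintype ι] (S : ι → Euc n →L[ℝ] Euc n)
    (hS : ∀ k a b, ⟪S k a, b⟫ = ⟪a, S k b⟫) (hSS : ∀ u, ∑ k, ‖S k u‖ ^ 2 ≤ 4 * ‖u‖ ^ 2)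
    {X : Euc n →L[ℝ] Euc n} (hX : ∀ a b, ⟪X a, b⟫ = ⟪a, X b⟫) (i j q : ℕ) (h : i + j = 2 * q) :
    ∑ k, trL n (S k * (X ^ i * S k * X ^ j)) ≤ 4 * trL n (X ^ (2 * q)) := by
  obtain ⟨f, l, hl⟩ := exists_eigenbasis X hX
  have e1 : ∀ k, trL n (S k * (X ^ i * S k * X ^ j))
      = ∑ a, ∑ b, l a ^ j * l b ^ i * ⟪S k (f a), f b⟫ ^ 2 := by
    intro k
    rw [trL_eq_sum _ f]
    refine Finset.sum_congr rfl fun a _ => ?_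
    rw [mul_apply_eq_comp, mul_apply_eq_comp, mul_apply_eq_comp,
      pow_apply_eigen (hl a), map_smul, map_smul, map_smul, inner_smul_left, hS,
      ← f.sum_inner_mul_inner, Finset.mul_sum]
    refine Finset.sum_congr rfl fun b _ => ?_
    rw [pow_symm hX, pow_apply_eigen (hl b), inner_smul_right, real_inner_comm (f b)]
    simp only [RCLike.conj_to_real]
    rw [real_inner_comm (S k (f a)) (f b)]
    ring
  have e2 : ∀ k, ∑ a, ∑ b, l a ^ j * l b ^ i * ⟪S k (f a), f b⟫ ^ 2
      = ∑ a, ∑ b, l a ^ i * l b ^ j * ⟪S k (f a), f b⟫ ^ 2 := by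
    intro k
    rw [Finset.sum_comm]
    refine Finset.sum_congr rfl fun a _ => Finset.sum_congr rfl fun b _ => ?_
    rw [hS, real_inner_comm]; ring
  have e3 : ∀ k, ∑ a, ∑ b, l b ^ (2 * q) * ⟪S k (f a), f b⟫ ^ 2
      = ∑ a, l a ^ (2 * q) * ‖S k (f a)‖ ^ 2 := by
    intro k
    rw [Finset.sum_comm]
    refine Finset.sum_congr rfl fun a _ => ?_
    rw [← f.sum_sq_norm_inner_right, Finset.mul_sum]
    refine Finset.sum_congr rfl fun b _ => ?_
    rw [hS, Real.norm_eq_abs, sq_abs]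
  have e3' : ∀ k, ∑ a, ∑ b, l a ^ (2 * q) * ⟪S k (f a), f b⟫ ^ 2
      = ∑ a, l a ^ (2 * q) * ‖S k (f a)‖ ^ 2 := by
    intro k
    refine Finset.sum_congr rfl fun a _ => ?_
    rw [← f.sum_sq_norm_inner_right, Finset.mul_sum]
    refine Finset.sum_congr rfl fun b _ => ?_
    rw [real_inner_comm, Real.norm_eq_abs, sq_abs]
  have e4 : ∀ k, trL n (S k * (X ^ i * S k * X ^ j)) ≤ ∑ a, l a ^ (2 * q) * ‖S k (f a)‖ ^ 2 := by
    intro k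
    have h1 : 2 * trL n (S k * (X ^ i * S k * X ^ j))
        = ∑ a, ∑ b, (l a ^ i * l b ^ j + l a ^ j * l b ^ i) * ⟪S k (f a), f b⟫ ^ 2 := by
      simp only [add_mul, Finset.sum_add_distrib]
      rw [← e2, ← e1]; ring
    have h2 : ∑ a, ∑ b, (l a ^ i * l b ^ j + l a ^ j * l b ^ i) * ⟪S k (f a), f b⟫ ^ 2
        ≤ ∑ a, ∑ b, (l a ^ (2 * q) + l b ^ (2 * q)) * ⟪S k (f a), f b⟫ ^ 2 := by
      refine Finset.sum_le_sum fun a _ => Finset.sum_le_sum fun b _ => ?_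
      exact mul_le_mul_of_nonneg_right (pow_mul_pow_add_le _ _ _ _ _ h) (sq_nonneg _)
    simp only [add_mul, Finset.sum_add_distrib] at h2
    rw [e3, e3'] at h2
    simp only [add_mul, Finset.sum_add_distrib] at h1
    linarith
  calc ∑ k, trL n (S k * (X ^ i * S k * X ^ j))
      ≤ ∑ k, ∑ a, l a ^ (2 * q) * ‖S k (f a)‖ ^ 2 := Finset.sum_le_sum fun k _ => e4 k
    _ = ∑ a, l a ^ (2 * q) * ∑ k, ‖S k (f a)‖ ^ 2 := by
        rw [Finset.sum_comm]; simp only [Finset.mul_sum]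
    _ ≤ ∑ a, l a ^ (2 * q) * 4 := by
        refine Finset.sum_le_sum fun a _ => ?_
        have := hSS (f a)
        simp only [f.norm_eq_one, one_pow, mul_one] at this
        exact mul_le_mul_of_nonneg_left this (by rw [pow_mul]; positivity)
    _ = 4 * trL n (X ^ (2 * q)) := by rw [tr_pow_eq hl, ← Finset.sum_mul, mul_comm]

lemma polyBdd_pow (m : ℕ) : PolyBdd fun z => (T z) ^ m := by
  induction m with
  | zero => simpa using PolyBdd.const (X := Euc n) (1 : Euc n →L[ℝ] Euc n)
  | succ m ih =>
    refine ih.of_le_mul (PolyBdd.clm T) fun z => ?_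
    rw [pow_succ]; exact norm_mul_le _ _

lemma hasFDerivAt_tr (S : Euc n →L[ℝ] Euc n) (m : ℕ) (z v : Euc n) :
    fderiv ℝ (fun z => trL n (S * (T z) ^ m)) z v
      = ∑ i ∈ Finset.range m, trL n (S * ((T z) ^ (m - 1 - i) * T v * (T z) ^ i)) := by
  have h1 := (T.hasFDerivAt (x := z)).pow' m
  have h2 := (trL n).hasFDerivAt.comp z (h1.const_mul S)
  have h3 : HasFDerivAt (fun z => trL n (S * (T z) ^ m)) _ z := h2
  rw [h3.fderiv]
  simp [Finset.mul_sum]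

lemma contDiff_tr (S : Euc n →L[ℝ] Euc n) (m : ℕ) :
    ContDiff ℝ 1 fun z => trL n (S * (T z) ^ m) :=
  (trL n).contDiff.comp (contDiff_const.mul (T.contDiff.pow m))

lemma polyBdd_fderiv_tr (S : Euc n →L[ℝ] Euc n) (m : ℕ) :
    PolyBdd (fderiv ℝ fun z => trL n (S * (T z) ^ m)) := by
  have hg : PolyBdd fun z => ∑ i ∈ Finset.range m,
      ‖trL n‖ * ‖S‖ * ‖T‖ * (‖T z ^ (m - 1 - i)‖ * ‖T z ^ i‖) :=
    PolyBdd.sum _ fun i _ => (PolyBdd.const _).mul ((polyBdd_pow T _).norm.mul (polyBdd_pow T _).norm)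
  refine hg.of_le fun z => ?_
  refine ContinuousLinearMap.opNorm_le_bound _ (norm_nonneg _) fun v => ?_
  rw [hasFDerivAt_tr]
  refine (norm_sum_le _ _).trans ?_
  rw [Real.norm_of_nonneg (Finset.sum_nonneg fun i _ => by positivity), Finset.sum_mul]
  refine Finset.sum_le_sum fun i _ => ?_
  calc ‖trL n (S * (T z ^ (m - 1 - i) * T v * T z ^ i))‖
      ≤ ‖trL n‖ * (‖S‖ * ((‖T z ^ (m - 1 - i)‖ * (‖T‖ * ‖v‖)) * ‖T z ^ i‖)) := by
        refine ((trL n).le_opNorm _).trans ?_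
        gcongr
        refine (norm_mul_le _ _).trans ?_
        gcongr
        refine (norm_mul_le _ _).trans ?_
        gcongr
        refine (norm_mul_le _ _).trans ?_
        gcongr
        exact T.le_opNorm v
    _ = _ := by ring

lemma integrable_tr (m : ℕ) : Integrable (fun z => trL n ((T z) ^ m)) (gau (Euc n)) := by
  refine PolyBdd.integrable ?_ ?_
  · exact (PolyBdd.const (trL n)).of_le_mul (polyBdd_pow T m) fun z => (trL n).le_opNorm _
  · exact Continuous.aestronglyMeasurable (by fun_prop)

lemma moment_step (hT : ∀ z a b, ⟪T z a, b⟫ = ⟪a, T z b⟫)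
    (hTT : ∀ u, ∑ k, ‖T (EuclideanSpace.basisFun (Fin n) ℝ k) u‖ ^ 2 ≤ 4 * ‖u‖ ^ 2) (q : ℕ) :
    ∫ z, trL n ((T z) ^ (2 * (q + 1))) ∂gau (Euc n)
      ≤ 4 * (2 * q + 1) * ∫ z, trL n ((T z) ^ (2 * q)) ∂gau (Euc n) := by
  set e := EuclideanSpace.basisFun (Fin n) ℝ with he
  have h1 : ∀ z, trL n ((T z) ^ (2 * (q + 1)))
      = ∑ k, ⟪z, e k⟫ * trL n (T (e k) * (T z) ^ (2 * q + 1)) := by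
    intro z
    have : T z = ∑ k, ⟪z, e k⟫ • T (e k) := by
      conv_lhs => rw [← e.sum_repr' z]
      simp [real_inner_comm]
    rw [show 2 * (q + 1) = (2 * q + 1) + 1 by ring, pow_succ']
    conv_lhs => enter [2, 1]; rw [this]
    rw [Finset.sum_mul, map_sum]
    refine Finset.sum_congr rfl fun k _ => ?_
    rw [show (⟪z, e k⟫ • T (e k)) * T z ^ (2 * q + 1) = ⟪z, e k⟫ • (T (e k) * T z ^ (2 * q + 1))
      from rfl, map_smul, smul_eq_mul]
  have hp : ∀ k, PolyBdd fun z => trL n (T (e k) * (T z) ^ (2 * q + 1)) := fun k =>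
    PolyBdd.of_fderiv ((contDiff_tr T _ _).differentiable (by simp)) (polyBdd_fderiv_tr T _ _)
  have hw : ∀ k, PolyBdd fun z : Euc n => ⟪z, e k⟫ := fun k => by
    simpa [real_inner_comm] using PolyBdd.clm (innerSL ℝ (e k))
  simp only [h1]
  rw [integral_finsetSum _ fun k _ => ((hw k).mul (hp k)).integrable
    (Continuous.aestronglyMeasurable (by fun_prop))]
  have h2 : ∀ k, ∫ z, ⟪z, e k⟫ * trL n (T (e k) * (T z) ^ (2 * q + 1)) ∂gau (Euc n)
      = ∫ z, ∑ i ∈ Finset.range (2 * q + 1),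
        trL n (T (e k) * ((T z) ^ (2 * q - i) * T (e k) * (T z) ^ i)) ∂gau (Euc n) := by
    intro k
    rw [stein (contDiff_tr T _ _) (polyBdd_fderiv_tr T _ _)]
    simp only [hasFDerivAt_tr, Nat.add_sub_cancel]
  have hi : ∀ k i, Integrable (fun z => trL n (T (e k) * ((T z) ^ (2 * q - i) * T (e k) * (T z) ^ i)))
      (gau (Euc n)) := by
    intro k i
    refine PolyBdd.integrable ?_ (Continuous.aestronglyMeasurable (by fun_prop))
    refine (PolyBdd.const (trL n)).of_le_mul
      (PolyBdd.of_le_mul (PolyBdd.const (T (e k))) (PolyBdd.of_le_mul (PolyBdd.of_le_mul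
      (polyBdd_pow T (2 * q - i)) (PolyBdd.const (T (e k))) fun z => norm_mul_le _ _)
        (polyBdd_pow T i)
        fun z => norm_mul_le _ _) fun z => norm_mul_le _ _) fun z => (trL n).le_opNorm _
  simp only [h2]
  rw [← integral_finsetSum _ fun k _ => integrable_finsetSum _ fun i _ => hi k i,
    ← integral_const_mul]
  refine integral_mono (integrable_finsetSum _ fun k _ => integrable_finsetSum _ fun i _ => hi k i)
    ((integrable_tr T _).const_mul _) fun z => ?_
  simp only
  rw [Finset.sum_comm]
  calc ∑ i ∈ Finset.range (2 * q + 1), ∑ k,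
        trL n (T (e k) * ((T z) ^ (2 * q - i) * T (e k) * (T z) ^ i))
      ≤ ∑ i ∈ Finset.range (2 * q + 1), 4 * trL n ((T z) ^ (2 * q)) := by
        refine Finset.sum_le_sum fun i hi => ?_
        have := Finset.mem_range.1 hi
        exact sum_tr_le (fun k => T (e k)) (fun k => hT (e k)) hTT (hT z) _ _ _ (by omega)
    _ = _ := by simp; ring

lemma moment_le (hT : ∀ z a b, ⟪T z a, b⟫ = ⟪a, T z b⟫)
    (hTT : ∀ u, ∑ k, ‖T (EuclideanSpace.basisFun (Fin n) ℝ k) u‖ ^ 2 ≤ 4 * ‖u‖ ^ 2) (P q : ℕ)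
    (hq : q ≤ P) :
    ∫ z, trL n ((T z) ^ (2 * q)) ∂gau (Euc n) ≤ n * (8 * P) ^ q := by
  induction q with
  | zero =>
    simp only [mul_zero, pow_zero, mul_one]
    rw [trL_eq_sum _ (EuclideanSpace.basisFun (Fin n) ℝ)]
    simp [gau]
  | succ q ih =>
    refine (moment_step T hT hTT q).trans ?_
    have h1 : (q : ℝ) + 1 ≤ P := by exact_mod_cast hq
    have h0 : 0 ≤ ∫ z, trL n ((T z) ^ (2 * q)) ∂gau (Euc n) := integral_nonneg fun z => by
      obtain ⟨f, l, hl⟩ := exists_eigenbasis (T z) (hT z)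
      simp only [Pi.zero_apply]
      rw [tr_pow_eq hl]
      exact Finset.sum_nonneg fun i _ => by rw [pow_mul]; positivity
    calc 4 * (2 * q + 1) * ∫ z, trL n ((T z) ^ (2 * q)) ∂gau (Euc n)
        ≤ (8 * P) * (n * (8 * P) ^ q) := by
          refine mul_le_mul (by linarith) (ih (by omega)) h0 (by positivity)
      _ = _ := by ring

lemma norm_le_tr {X : Euc n →L[ℝ] Euc n} (hX : ∀ a b, ⟪X a, b⟫ = ⟪a, X b⟫) (P : ℕ) (hP : 0 < P)
    {s : ℝ} (hs : 0 < s) : ‖X‖ ≤ s + trL n (X ^ (2 * P)) / s ^ (2 * P - 1) := by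
  obtain ⟨f, l, hl⟩ := exists_eigenbasis X hX
  rw [tr_pow_eq hl]
  have hpos : ∀ i, 0 ≤ l i ^ (2 * P) := fun i => by rw [pow_mul]; positivity
  set c := s + (∑ i, l i ^ (2 * P)) / s ^ (2 * P - 1) with hc
  have hS0 : 0 ≤ ∑ i, l i ^ (2 * P) := Finset.sum_nonneg fun i _ => hpos i
  have hc0 : 0 ≤ c := by positivity
  have hlc : ∀ i, |l i| ≤ c := by
    intro i
    rcases le_total |l i| s with h | h
    · exact h.trans (le_add_of_nonneg_right (by positivity))
    · have h1 : |l i| * s ^ (2 * P - 1) ≤ ∑ i, l i ^ (2 * P) := by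
        calc |l i| * s ^ (2 * P - 1) ≤ |l i| * |l i| ^ (2 * P - 1) := by gcongr
          _ = |l i| ^ (2 * P) := by
            rw [← pow_succ']; congr 1; omega
          _ = l i ^ (2 * P) := by rw [pow_mul, pow_mul, sq_abs]
          _ ≤ _ := Finset.single_le_sum (f := fun i => l i ^ (2 * P)) (fun i _ => hpos i)
            (Finset.mem_univ i)
      have h2 : |l i| ≤ (∑ i, l i ^ (2 * P)) / s ^ (2 * P - 1) := by
        rwa [le_div_iff₀ (by positivity)]
      exact h2.trans (le_add_of_nonneg_left hs.le)
  refine X.opNorm_le_bound hc0 fun v => ?_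
  refine (sq_le_sq₀ (norm_nonneg _) (by positivity)).1 ?_
  rw [mul_pow, ← f.sum_sq_norm_inner_right (X v), ← f.sum_sq_norm_inner_right v, Finset.mul_sum]
  refine Finset.sum_le_sum fun i _ => ?_
  rw [← hX, hl, inner_smul_left, norm_mul, mul_pow]
  gcongr
  simpa using hlc i

/-- The non-commutative Khintchine inequality. -/
lemma khintchine (hn : 2 ≤ n) (hT : ∀ z a b, ⟪T z a, b⟫ = ⟪a, T z b⟫)
    (hTT : ∀ u, ∑ k, ‖T (EuclideanSpace.basisFun (Fin n) ℝ k) u‖ ^ 2 ≤ 4 * ‖u‖ ^ 2) :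
    ∫ z, ‖T z‖ ∂gau (Euc n) ≤ 14 * √(Real.log (n + 1)) := by
  set P := ⌈Real.log (n + 1)⌉₊ with hPdef
  have hn' : (2 : ℝ) ≤ n := by exact_mod_cast hn
  have hlog : 1 ≤ Real.log (n + 1) := by
    rw [Real.le_log_iff_exp_le (by linarith)]
    have := Real.exp_one_lt_d9; linarith
  have hP1 : Real.log (n + 1) ≤ P := Nat.le_ceil _
  have hP2 : (P : ℝ) ≤ 2 * Real.log (n + 1) := by
    have := Nat.ceil_lt_add_one (a := Real.log (n + 1)) (by linarith)
    linarith
  have hP0 : (0 : ℝ) < P := by linarith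
  have hP : 0 < P := by exact_mod_cast hP0
  set s := √(8 * P * Real.exp 1) with hs
  have hs0 : 0 < s := Real.sqrt_pos.2 (by positivity)
  have hss : s ^ 2 = 8 * P * Real.exp 1 := Real.sq_sqrt (by positivity)
  have h1 : ∫ z, ‖T z‖ ∂gau (Euc n)
      ≤ ∫ z, (s + trL n ((T z) ^ (2 * P)) / s ^ (2 * P - 1)) ∂gau (Euc n) := by
    refine integral_mono ((PolyBdd.clm T).norm.integrable
      (Continuous.aestronglyMeasurable (by fun_prop)))
      ((integrable_const s).add ((integrable_tr T _).div_const _)) fun z => norm_le_tr (hT z) P hP hs0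
  rw [integral_add (integrable_const s) ((integrable_tr T _).div_const _), integral_div] at h1
  have h2 := moment_le T hT hTT P P le_rfl
  have h3 : (n : ℝ) * (8 * P) ^ P / s ^ (2 * P - 1) ≤ s := by
    have e1 : s ^ (2 * P) = (8 * P) ^ P * Real.exp P := by
      rw [pow_mul, hss, mul_pow, ← Real.exp_nat_mul, mul_one]
    rw [div_le_iff₀ (by positivity), ← pow_succ', show 2 * P - 1 + 1 = 2 * P by omega, e1, mul_comm]
    gcongr
    have := (Real.log_le_iff_le_exp (by positivity)).1 hP1
    linarith
  have h4 : ∫ z, ‖T z‖ ∂gau (Euc n) ≤ 2 * s := by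
    have : (∫ z, trL n ((T z) ^ (2 * P)) ∂gau (Euc n)) / s ^ (2 * P - 1) ≤ s :=
      le_trans (by gcongr) h3
    have h5 : ∫ _ : Euc n, s ∂gau (Euc n) = s := by simp [gau]
    linarith
  refine h4.trans ?_
  have h5 : s ≤ 7 * √(Real.log (n + 1)) := by
    refine Real.sqrt_le_iff.2 ⟨by positivity, ?_⟩
    rw [mul_pow, Real.sq_sqrt (by linarith)]
    have := Real.exp_one_lt_d9
    nlinarith [Real.exp_pos 1]
  linarith

end Khintchine

/-! ### Concentration of the covariance -/

section Concentration

variable {n : ℕ} {L : Set (Euc n)}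

lemma dcov_khintchine (hL : IsConvexBody L) (hn : 2 ≤ n) (θ : Euc n) :
    ∫ z, ‖fderiv ℝ (cov L) θ z‖ ∂gau (Euc n) ≤ 14 * √(Real.log (n + 1)) := by
  refine khintchine _ hn (dcov_symm hL θ) fun u => ?_
  simp only [dcov_swap hL θ _ u]
  exact dcov_hs hL θ u _

lemma dcov_norm_le (hL : IsConvexBody L) (θ : Euc n) : ‖fderiv ℝ (cov L) θ‖ ≤ 2 := by
  refine ContinuousLinearMap.opNorm_le_bound _ zero_le_two fun v => ?_
  refine ContinuousLinearMap.opNorm_le_bound _ (by positivity) fun u => ?_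
  set S := fderiv ℝ (cov L) θ v
  set e := EuclideanSpace.basisFun (Fin n) ℝ
  refine (sq_le_sq₀ (norm_nonneg _) (by positivity)).1 ?_
  rw [← e.sum_sq_norm_inner_right (S u)]
  calc ∑ k, ‖⟪e k, S u⟫‖ ^ 2 ≤ ∑ k, ‖S (e k)‖ ^ 2 * ‖u‖ ^ 2 := by
        refine Finset.sum_le_sum fun k _ => ?_
        rw [← dcov_symm hL, ← mul_pow]
        gcongr
        exact norm_inner_le_norm _ _
    _ = (∑ k, ‖S (e k)‖ ^ 2) * ‖u‖ ^ 2 := by rw [Finset.sum_mul]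
    _ ≤ (4 * ‖v‖ ^ 2) * ‖u‖ ^ 2 := by gcongr; exact dcov_hs hL θ v e
    _ = _ := by ring

/-- The mean covariance under a Gaussian tilt of size `r`. -/
def mcov (L : Set (Euc n)) (r : ℝ) : Euc n →L[ℝ] Euc n := ∫ z, cov L (r • z) ∂gau (Euc n)

lemma integrable_cov (hL : IsConvexBody L) (r : ℝ) :
    Integrable (fun z => cov L (r • z)) (gau (Euc n)) := by
  have := (contDiff_cov hL).continuous
  exact (PolyBdd.of_bdd fun z => cov_norm_le hL (r • z)).integrable
    (Continuous.aestronglyMeasurable (by fun_prop))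

lemma cov_concentration (hL : IsConvexBody L) (hn : 2 ≤ n) {r : ℝ} (hr : 0 ≤ r) :
    ∫ z, ‖cov L (r • z) - mcov L r‖ ∂gau (Euc n) ≤ 22 * r * √(Real.log (n + 1)) := by
  set F : Euc n → (Euc n →L[ℝ] Euc n) := fun z => cov L (r • z) with hFdef
  have hF : ContDiff ℝ 1 F := (contDiff_cov hL).comp (contDiff_const_smul r)
  have hd : ∀ z, fderiv ℝ F z = r • fderiv ℝ (cov L) (r • z) := by
    intro z
    have h1 := ((contDiff_cov hL).differentiable (by simp) (r • z)).hasFDerivAt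
    have h2 : HasFDerivAt (fun z : Euc n => r • z) (r • ContinuousLinearMap.id ℝ (Euc n)) z :=
      (hasFDerivAt_id z).const_smul r
    have h3 : HasFDerivAt F _ z := h1.comp z h2
    rw [h3.fderiv]
    ext v; simp
  have hF' : PolyBdd (fderiv ℝ F) := by
    refine PolyBdd.of_bdd (f := fderiv ℝ F) (C := r * 2) fun z => ?_
    rw [hd]
    refine (ContinuousLinearMap.opNorm_smul_le r _).trans ?_
    rw [Real.norm_of_nonneg hr]
    gcongr
    exact dcov_norm_le hL _
  have hFb : ∀ z, ‖F z‖ ≤ 1 := fun z => cov_norm_le hL _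
  have hFc : Continuous F := hF.continuous
  have hi := integrable_cov hL r
  have i2 : Integrable (fun p : Euc n × Euc n => ‖F p.2 - F p.1‖) (gau2 (Euc n)) :=
    ((PolyBdd.of_bdd hFb).comp_snd.sub (PolyBdd.of_bdd hFb).comp_fst).norm.integrable
      (Continuous.aestronglyMeasurable (by fun_prop))
  have i3 : Integrable (fun p : Euc n × Euc n => ‖fderiv ℝ F p.1 p.2‖) (gau2 (Euc n)) := by
    refine PolyBdd.integrable (PolyBdd.norm ?_) ?_
    · exact (PolyBdd.comp_fst (f := fderiv ℝ F) hF').of_le_mul (PolyBdd.id.comp_snd (X := Euc n))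
        (fun p => ContinuousLinearMap.le_opNorm _ _)
    · have := hF.continuous_fderiv (by norm_num)
      exact Continuous.aestronglyMeasurable (by fun_prop)
  have h1 : ∫ z, ‖F z - mcov L r‖ ∂gau (Euc n) ≤ ∫ p, ‖F p.2 - F p.1‖ ∂gau2 (Euc n) := by
    rw [gau2, integral_prod _ i2]
    refine integral_mono (f := fun z => ‖F z - mcov L r‖) (hi.sub (integrable_const _)).norm
      i2.integral_prod_left fun z => ?_
    simp only
    have : F z - mcov L r = -∫ y, (F y - F z) ∂gau (Euc n) := by
      rw [integral_sub hi (integrable_const _), mcov]; simp [gau, hFdef]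
    rw [this, norm_neg]
    exact norm_integral_le_integral_norm _
  have h2 : ∫ p, ‖fderiv ℝ F p.1 p.2‖ ∂gau2 (Euc n) ≤ r * (14 * √(Real.log (n + 1))) := by
    rw [gau2, integral_prod _ i3]
    calc ∫ x, ∫ y, ‖fderiv ℝ F x y‖ ∂gau (Euc n) ∂gau (Euc n)
        ≤ ∫ _, r * (14 * √(Real.log (n + 1))) ∂gau (Euc n) := by
          refine integral_mono i3.integral_prod_left (integrable_const _) fun x => ?_
          simp only [hd, smul_apply, norm_smul, Real.norm_of_nonneg hr]
          rw [integral_const_mul]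
          gcongr
          exact dcov_khintchine hL hn _
      _ = _ := by simp [gau]
  have h3 := norm_sub_mean_le hF hF'
  have h4 := Real.pi_lt_d6
  have h5 : 0 ≤ r * √(Real.log (n + 1)) := by positivity
  calc _ ≤ (π / 2) * (r * (14 * √(Real.log (n + 1)))) := by
        refine h1.trans (h3.trans ?_); gcongr
    _ ≤ _ := by nlinarith

end Concentration

/-! ### The functional whose maximiser gives the position -/

section Position

variable {n : ℕ} {L : Set (Euc n)}

/-- Partition function of the Gaussian weight on `L`. -/
def pf (L : Set (Euc n)) (θ : Euc n) : ℝ := lap (gm L) (fun _ => (1 : ℝ)) θ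

/-- The functional `J(L) = E log Z_L(r G) - (log vol L) / 2`, bounded above over all bodies;
approximate maximisers over an affine orbit are in a good position. -/
def posFun (r : ℝ) (L : Set (Euc n)) : ℝ :=
  (∫ z, Real.log (pf L (r • z)) ∂gau (Euc n)) - Real.log (volume.real L) / 2

lemma pf_eq (L : Set (Euc n)) (θ : Euc n) :
    pf L θ = ∫ x in L, Real.exp (⟪θ, x⟫ - ‖x‖ ^ 2 / 2) := by
  rw [pf, lap, integral_gm]
  refine integral_congr_ae (Filter.Eventually.of_forall fun x => ?_)
  simp only [smul_eq_mul, mul_one]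
  rw [← Real.exp_add]; congr 1; ring

lemma pf_pos (hL : IsConvexBody L) (θ : Euc n) : 0 < pf L θ := by
  have := gm_finite hL.1
  have := gm_neZero hL.2.2
  obtain ⟨R, -, -, hR⟩ := gm_bdd hL
  exact lap_one_pos hR θ

lemma vol_pos (hL : IsConvexBody L) : 0 < volume.real L :=
  ENNReal.toReal_pos (Measure.measure_pos_of_nonempty_interior _ hL.2.2).ne' hL.1.measure_lt_top.ne

lemma continuous_pf (hL : IsConvexBody L) : Continuous (pf L) := by
  have := gm_finite hL.1
  have := gm_neZero hL.2.2
  obtain ⟨R, -, -, hR⟩ := gm_bdd hL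
  exact (contDiff_lap hR 0 continuous_const).continuous

lemma pf_le_exp (hL : IsConvexBody L) {R : ℝ} (hR : ∀ x ∈ L, ‖x‖ ≤ R) (θ θ' : Euc n) :
    pf L θ ≤ Real.exp (R * ‖θ - θ'‖) * pf L θ' := by
  rw [pf_eq, pf_eq, ← integral_const_mul]
  refine setIntegral_mono_on (ContinuousOn.integrableOn_compact hL.1 (by fun_prop))
    (ContinuousOn.integrableOn_compact hL.1 (by fun_prop)) hL.1.measurableSet fun x hx => ?_
  rw [← Real.exp_add]
  refine Real.exp_le_exp.2 ?_
  have h1 : ⟪θ, x⟫ = ⟪θ - θ', x⟫ + ⟪θ', x⟫ := by rw [inner_sub_left]; ring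
  have h2 := real_inner_le_norm (θ - θ') x
  have h3 := mul_le_mul_of_nonneg_left (hR x hx) (norm_nonneg (θ - θ'))
  rw [h1]; linarith

lemma integrable_log_pf (hL : IsConvexBody L) (r : ℝ) :
    Integrable (fun z => Real.log (pf L (r • z))) (gau (Euc n)) := by
  obtain ⟨R, hR0, hR, -⟩ := gm_bdd hL
  refine PolyBdd.integrable ?_ (Continuous.aestronglyMeasurable ?_)
  · refine PolyBdd.of_le (g := fun z : Euc n => |Real.log (pf L 0)| + (R * |r|) * ‖z‖)
      ((PolyBdd.const _).add ((PolyBdd.const _).mul PolyBdd.id.norm)) fun z => ?_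
    have h1 := Real.log_le_log (pf_pos hL _) (pf_le_exp hL hR (r • z) 0)
    have h2 := Real.log_le_log (pf_pos hL _) (pf_le_exp hL hR 0 (r • z))
    rw [Real.log_mul (Real.exp_pos _).ne' (pf_pos hL _).ne', Real.log_exp] at h1 h2
    simp only [sub_zero, zero_sub, norm_neg, norm_smul, Real.norm_eq_abs] at h1 h2
    rw [Real.norm_eq_abs, Real.norm_of_nonneg (by positivity), abs_le]
    have := neg_abs_le (Real.log (pf L 0))
    have := le_abs_self (Real.log (pf L 0))
    constructor <;> linarith
  · have := continuous_pf hL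
    exact Continuous.log (by fun_prop) fun z => (pf_pos hL _).ne'

lemma pf_sq_le (hL : IsConvexBody L) (θ : Euc n) :
    pf L θ ^ 2 ≤ volume.real L * (Real.exp (2 * ‖θ‖ ^ 2) * ∫ x : Euc n, Real.exp (-‖x‖ ^ 2 / 2)) := by
  have hV := vol_pos hL
  set h : Euc n → ℝ := fun x => Real.exp (⟪θ, x⟫ - ‖x‖ ^ 2 / 2) with hh
  have hg : Integrable fun x : Euc n => Real.exp (-‖x‖ ^ 2 / 2) := by
    have := GaussianFourier.integrable_cexp_neg_mul_sq_norm_add (V := Euc n) (b := 1 / 2) (by norm_num) 0 0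
    refine this.norm.congr (Filter.Eventually.of_forall fun x => ?_)
    simp only [Complex.norm_exp]
    congr 1
    simp
    norm_cast
    ring
  have hB : ∫ x in L, h x ^ 2 ≤ Real.exp (2 * ‖θ‖ ^ 2) * ∫ x : Euc n, Real.exp (-‖x‖ ^ 2 / 2) := by
    rw [← integral_const_mul]
    refine (integral_mono_of_nonneg (Filter.Eventually.of_forall fun x => by positivity)
      (hg.const_mul _).integrableOn (Filter.Eventually.of_forall fun x => ?_)).trans
      (setIntegral_le_integral (hg.const_mul _) (Filter.Eventually.of_forall fun x => by positivity))
    simp only [hh]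
    rw [← Real.exp_nat_mul, ← Real.exp_add]
    refine Real.exp_le_exp.2 ?_
    have h2 := real_inner_le_norm θ x
    push_cast
    nlinarith [sq_nonneg (2 * ‖θ‖ - ‖x‖)]
  have hi1 : IntegrableOn h L := ContinuousOn.integrableOn_compact hL.1 (by fun_prop)
  have hi2 : IntegrableOn (fun x => h x ^ 2) L :=
    ContinuousOn.integrableOn_compact hL.1 (by fun_prop)
  have hZ : pf L θ = ∫ x in L, h x := pf_eq L θ
  -- Cauchy–Schwarz, from the nonnegativity of the variance of `h` on `L`
  have key : ∀ s : ℝ, 0 ≤ (∫ x in L, h x ^ 2) - 2 * s * pf L θ + s ^ 2 * volume.real L := by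
    intro s
    have h0 : 0 ≤ ∫ x in L, (h x - s) ^ 2 := integral_nonneg fun x => sq_nonneg _
    have h1 : ∀ x, (h x - s) ^ 2 = h x ^ 2 - 2 * s * h x + s ^ 2 := fun x => by ring
    simp only [h1] at h0
    have hc : IntegrableOn (fun _ : Euc n => s ^ 2) L := integrableOn_const hL.1.measure_lt_top.ne
    have hi3 : IntegrableOn (fun x => 2 * s * h x) L := hi1.const_mul _
    have hi4 : IntegrableOn (fun x => h x ^ 2 - 2 * s * h x) L := hi2.sub hi3
    rw [integral_add hi4 hc, integral_sub hi2 hi3, integral_const_mul, ← hZ] at h0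
    simpa [mul_comm] using h0
  have hk := key (pf L θ / volume.real L)
  have h3 : 2 * (pf L θ / volume.real L) * pf L θ = 2 * (pf L θ ^ 2 / volume.real L) := by ring
  have h4 : (pf L θ / volume.real L) ^ 2 * volume.real L = pf L θ ^ 2 / volume.real L := by
    field_simp
  rw [h3, h4] at hk
  have h5 : pf L θ ^ 2 / volume.real L ≤ ∫ x in L, h x ^ 2 := by linarith
  rw [div_le_iff₀ hV] at h5
  nlinarith

lemma posFun_bdd (r : ℝ) : ∃ B, ∀ L : Set (Euc n), IsConvexBody L → posFun r L ≤ B := by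
  set c := ∫ x : Euc n, Real.exp (-‖x‖ ^ 2 / 2)
  refine ⟨∫ z, (r ^ 2 * ‖z‖ ^ 2 + Real.log c / 2) ∂gau (Euc n), fun L hL => ?_⟩
  have hV := vol_pos hL
  have hc : 0 < c := by
    have h1 := pf_sq_le hL 0
    have h2 := pow_pos (pf_pos hL 0) 2
    by_contra h
    have : volume.real L * (Real.exp (2 * ‖(0 : Euc n)‖ ^ 2) * c) ≤ 0 :=
      mul_nonpos_of_nonneg_of_nonpos hV.le
        (mul_nonpos_of_nonneg_of_nonpos (Real.exp_pos _).le (not_lt.1 h))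
    linarith
  have hi : Integrable (fun z : Euc n => r ^ 2 * ‖z‖ ^ 2 + Real.log c / 2) (gau (Euc n)) :=
    (((PolyBdd.const _).mul (PolyBdd.id.norm.pow 2)).add (PolyBdd.const _)).integrable
      (Continuous.aestronglyMeasurable (by fun_prop))
  have h : posFun r L = ∫ z, (Real.log (pf L (r • z)) - Real.log (volume.real L) / 2) ∂gau (Euc n) := by
    rw [integral_sub (integrable_log_pf hL r) (integrable_const _)]
    simp [posFun, gau]
  rw [h]
  refine integral_mono ((integrable_log_pf hL r).sub (integrable_const _)) hi fun z => ?_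
  have h1 := Real.log_le_log (pow_pos (pf_pos hL _) 2) (pf_sq_le hL (r • z))
  rw [Real.log_mul hV.ne' (by positivity), Real.log_mul (Real.exp_pos _).ne' hc.ne', Real.log_exp,
    Real.log_pow, norm_smul, mul_pow, Real.norm_eq_abs, sq_abs] at h1
  push_cast at h1
  simp only
  linarith

lemma isConvexBody_affine (hL : IsConvexBody L) (Φ : Euc n ≃ₗ[ℝ] Euc n) (v : Euc n) :
    IsConvexBody ((fun x => Φ x + v) '' L) := by
  have h : (fun x => Φ x + v) = (Homeomorph.addRight v) ∘ Φ.toContinuousLinearEquiv.toHomeomorph := by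
    ext; simp
  refine ⟨hL.1.image ?_, ?_, ?_⟩
  · rw [h]; exact (Homeomorph.continuous _).comp (Homeomorph.continuous _)
  · have : (fun x => Φ x + v) '' L = (fun x => x + v) '' ((Φ : Euc n →ₗ[ℝ] Euc n) '' L) := by
      rw [Set.image_image]; rfl
    rw [this]
    have h2 := ((hL.2.1.linear_image (Φ : Euc n →ₗ[ℝ] Euc n)).vadd v)
    rw [← Set.image_vadd] at h2
    simpa only [vadd_eq_add, add_comm] using h2
  · rw [h, Set.image_comp, ← Homeomorph.image_interior, ← Homeomorph.image_interior]
    exact (hL.2.2.image _).image _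

end Position

section Position2

variable {n : ℕ} {L : Set (Euc n)}

lemma integral_affine_image (hL : IsConvexBody L) (Φ : Euc n ≃ₗ[ℝ] Euc n) (v : Euc n)
    (g : Euc n → ℝ) : ∫ x in (fun x => Φ x + v) '' L, g x
      = |LinearMap.det (Φ : Euc n →ₗ[ℝ] Euc n)| * ∫ x in L, g (Φ x + v) := by
  rw [integral_image_eq_integral_abs_det_fderiv_smul (f' := fun _ => Φ.toContinuousLinearEquiv)
    volume hL.1.measurableSet]
  · rw [← integral_const_mul]; rfl
  · intro x _
    exact ((Φ.toContinuousLinearEquiv.hasFDerivAt (x := x)).add_const v).hasFDerivWithinAt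
  · intro x _ y _ h
    simpa using h

lemma tl_integral_bdd (hL : IsConvexBody L) {F : Type} [NormedAddCommGroup F] [NormedSpace ℝ F]
    {g : Euc n → F} (hg : Continuous g) : ∃ C, ∀ θ, ‖∫ x, g x ∂tl (gm L) θ‖ ≤ C := by
  have := gm_finite hL.1
  have := gm_neZero hL.2.2
  obtain ⟨R, -, -, hR⟩ := gm_bdd hL
  obtain ⟨C, -, hC⟩ := bdd_of_continuous hg R
  refine ⟨C, fun θ => ?_⟩
  have := tl_prob hR θ
  simpa using norm_integral_le_of_norm_le_const ((tl_ae hR θ).mono hC)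

lemma continuous_tl_integral (hL : IsConvexBody L) {F : Type} [NormedAddCommGroup F]
    [NormedSpace ℝ F] [CompleteSpace F]
    {g : Euc n → F} (hg : Continuous g) : Continuous fun θ => ∫ x, g x ∂tl (gm L) θ := by
  have := gm_finite hL.1
  have := gm_neZero hL.2.2
  obtain ⟨R, -, -, hR⟩ := gm_bdd hL
  exact (contDiff_integral_tl hR 0 hg).continuous

lemma polyBdd_tl_integral (hL : IsConvexBody L) {F : Type} [NormedAddCommGroup F] [NormedSpace ℝ F]
    {g : Euc n → F} (hg : Continuous g) (r : ℝ) :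
    PolyBdd fun z : Euc n => ∫ x, g x ∂tl (gm L) (r • z) := by
  obtain ⟨C, hC⟩ := tl_integral_bdd hL hg
  exact PolyBdd.of_bdd fun z => hC _

lemma tl_gm_prob (hL : IsConvexBody L) (θ : Euc n) : IsProbabilityMeasure (tl (gm L) θ) := by
  have := gm_finite hL.1
  have := gm_neZero hL.2.2
  obtain ⟨R, -, -, hR⟩ := gm_bdd hL
  exact tl_prob hR θ

lemma tl_gm_integrable (hL : IsConvexBody L) (θ : Euc n) {F : Type} [NormedAddCommGroup F]
    [NormedSpace ℝ F] {g : Euc n → F} (hg : Continuous g) : Integrable g (tl (gm L) θ) := by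
  have := gm_finite hL.1
  have := gm_neZero hL.2.2
  obtain ⟨R, -, -, hR⟩ := gm_bdd hL
  exact tl_integrable hR θ hg

/-- Jensen's inequality for the effect of an affine map on the partition function. -/
lemma log_pf_affine (hL : IsConvexBody L) (Φ : Euc n ≃ₗ[ℝ] Euc n) (v θ : Euc n) :
    Real.log |LinearMap.det (Φ : Euc n →ₗ[ℝ] Euc n)| + Real.log (pf L θ)
      + ∫ x, (⟪θ, Φ x + v - x⟫ - (‖Φ x + v‖ ^ 2 - ‖x‖ ^ 2) / 2) ∂tl (gm L) θ
      ≤ Real.log (pf ((fun x => Φ x + v) '' L) θ) := by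
  have hΦ : Continuous Φ := Φ.toContinuousLinearEquiv.continuous
  set g : Euc n → ℝ := fun x => ⟪θ, Φ x + v - x⟫ - (‖Φ x + v‖ ^ 2 - ‖x‖ ^ 2) / 2 with hg
  have hgc : Continuous g := by fun_prop
  have hprob := tl_gm_prob hL θ
  have := gm_finite hL.1
  have := gm_neZero hL.2.2
  have hJ : Real.exp (∫ x, g x ∂tl (gm L) θ) ≤ ∫ x, Real.exp (g x) ∂tl (gm L) θ :=
    convexOn_exp.map_integral_le (μ := tl (gm L) θ) (f := g) Real.continuous_exp.continuousOn isClosed_univ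
      (Filter.Eventually.of_forall fun _ => Set.mem_univ _) (tl_gm_integrable hL θ hgc)
      (tl_gm_integrable hL θ (Real.continuous_exp.comp hgc))
  have hdet : 0 < |LinearMap.det (Φ : Euc n →ₗ[ℝ] Euc n)| :=
    abs_pos.2 (LinearEquiv.isUnit_det' Φ).ne_zero
  have heq : pf ((fun x => Φ x + v) '' L) θ = |LinearMap.det (Φ : Euc n →ₗ[ℝ] Euc n)| *
      (pf L θ * ∫ x, Real.exp (g x) ∂tl (gm L) θ) := by
    rw [pf_eq, integral_affine_image hL, integral_tl, smul_eq_mul]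
    have h0 := (pf_pos hL θ).ne'
    change _ = _ * (pf L θ * ((pf L θ)⁻¹ * _))
    rw [mul_inv_cancel_left₀ h0, lap, integral_gm]
    congr 1
    refine integral_congr_ae (Filter.Eventually.of_forall fun x => ?_)
    simp only [smul_eq_mul, hg]
    rw [← Real.exp_add, ← Real.exp_add, inner_sub_right]
    congr 1; ring
  have hE := (Real.exp_pos _).trans_le hJ
  rw [heq, Real.log_mul hdet.ne' (mul_pos (pf_pos hL θ) hE).ne', Real.log_mul (pf_pos hL θ).ne' hE.ne',
    add_assoc]
  gcongr
  rwa [Real.le_log_iff_exp_le hE]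

lemma posFun_affine (hL : IsConvexBody L) (Φ : Euc n ≃ₗ[ℝ] Euc n) (v : Euc n) (r : ℝ) :
    posFun r L + Real.log |LinearMap.det (Φ : Euc n →ₗ[ℝ] Euc n)| / 2
      + ∫ z, ∫ x, (⟪r • z, Φ x + v - x⟫ - (‖Φ x + v‖ ^ 2 - ‖x‖ ^ 2) / 2) ∂tl (gm L) (r • z)
        ∂gau (Euc n)
      ≤ posFun r ((fun x => Φ x + v) '' L) := by
  have hΦ : Continuous Φ := Φ.toContinuousLinearEquiv.continuous
  have hdet : 0 < |LinearMap.det (Φ : Euc n →ₗ[ℝ] Euc n)| :=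
    abs_pos.2 (LinearEquiv.isUnit_det' Φ).ne_zero
  have hvol : volume.real ((fun x => Φ x + v) '' L)
      = |LinearMap.det (Φ : Euc n →ₗ[ℝ] Euc n)| * volume.real L := by
    have := integral_affine_image hL Φ v fun _ => 1
    simpa using this
  have hi : Integrable (fun z => ∫ x, (⟪r • z, Φ x + v - x⟫ - (‖Φ x + v‖ ^ 2 - ‖x‖ ^ 2) / 2)
      ∂tl (gm L) (r • z)) (gau (Euc n)) := by
    have h1 : Continuous fun x => Φ x + v - x := by fun_prop
    have h2 : Continuous fun x => (‖Φ x + v‖ ^ 2 - ‖x‖ ^ 2) / 2 := by fun_prop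
    have heq : (fun z => ∫ x, (⟪r • z, Φ x + v - x⟫ - (‖Φ x + v‖ ^ 2 - ‖x‖ ^ 2) / 2)
      ∂tl (gm L) (r • z)) = fun z => ⟪r • z, ∫ x, (Φ x + v - x) ∂tl (gm L) (r • z)⟫
        - ∫ x, (‖Φ x + v‖ ^ 2 - ‖x‖ ^ 2) / 2 ∂tl (gm L) (r • z) := by
      ext z
      rw [integral_sub (tl_gm_integrable hL _ (by fun_prop)) (tl_gm_integrable hL _ h2),
        integral_inner (tl_gm_integrable hL _ h1)]
    rw [heq]
    have c0 : Continuous fun z : Euc n => r • z := continuous_const_smul r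
    have c1 := (continuous_tl_integral hL h1).comp c0
    have c2 := (continuous_tl_integral hL h2).comp c0
    refine PolyBdd.integrable (PolyBdd.sub ?_ (polyBdd_tl_integral hL h2 r))
      ((c0.inner c1).sub c2).aestronglyMeasurable
    exact (PolyBdd.clm (r • ContinuousLinearMap.id ℝ (Euc n))).of_le_mul
      (polyBdd_tl_integral hL h1 r) fun z => norm_inner_le_norm _ _
  have hL' := isConvexBody_affine hL Φ v
  have h3 : ∫ z, ((Real.log |LinearMap.det (Φ : Euc n →ₗ[ℝ] Euc n)| + Real.log (pf L (r • z)))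
      + ∫ x, (⟪r • z, Φ x + v - x⟫ - (‖Φ x + v‖ ^ 2 - ‖x‖ ^ 2) / 2) ∂tl (gm L) (r • z)) ∂gau (Euc n)
      ≤ ∫ z, Real.log (pf ((fun x => Φ x + v) '' L) (r • z)) ∂gau (Euc n) :=
    integral_mono (((integrable_const _).add (integrable_log_pf hL r)).add hi)
      (integrable_log_pf hL' r) fun z => log_pf_affine hL Φ v (r • z)
  have hi2 : Integrable (fun z => Real.log |LinearMap.det (Φ : Euc n →ₗ[ℝ] Euc n)| +
      Real.log (pf L (r • z))) (gau (Euc n)) := (integrable_const _).add (integrable_log_pf hL r)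
  rw [integral_add hi2 hi, integral_add (integrable_const _) (integrable_log_pf hL r)] at h3
  simp only [integral_const, probReal_univ, one_smul] at h3
  rw [posFun, posFun, hvol, Real.log_mul hdet.ne' (vol_pos hL).ne']
  linarith

end Position2

section Position3

variable {n : ℕ} {L : Set (Euc n)}

/-- The mean barycentre under a Gaussian tilt of size `r`. -/
def mbar (L : Set (Euc n)) (r : ℝ) : Euc n := ∫ z, bary (gm L) (r • z) ∂gau (Euc n)

lemma polyBdd_bary (hL : IsConvexBody L) (r : ℝ) : PolyBdd fun z : Euc n => bary (gm L) (r • z) :=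
  polyBdd_tl_integral hL continuous_id r

lemma continuous_bary (hL : IsConvexBody L) (r : ℝ) :
    Continuous fun z : Euc n => bary (gm L) (r • z) :=
  (contDiff_bary_gm hL 0).continuous.comp (continuous_const_smul r)

lemma integrable_bary (hL : IsConvexBody L) (r : ℝ) :
    Integrable (fun z => bary (gm L) (r • z)) (gau (Euc n)) :=
  (polyBdd_bary hL r).integrable (continuous_bary hL r).aestronglyMeasurable

lemma inner_bary_gm (hL : IsConvexBody L) (θ a : Euc n) :
    ∫ x, ⟪x, a⟫ ∂tl (gm L) θ = ⟪bary (gm L) θ, a⟫ := by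
  have := gm_finite hL.1
  have := gm_neZero hL.2.2
  obtain ⟨R, -, -, hR⟩ := gm_bdd hL
  exact (inner_bary hR θ a).symm

lemma inner_mbar (hL : IsConvexBody L) (r : ℝ) (a : Euc n) :
    ∫ z, ⟪bary (gm L) (r • z), a⟫ ∂gau (Euc n) = ⟪mbar L r, a⟫ := by
  simp only [real_inner_comm a]
  rw [integral_inner (integrable_bary hL r), mbar]

lemma inner_mcov (hL : IsConvexBody L) (r : ℝ) (a b : Euc n) :
    ∫ z, ⟪cov L (r • z) a, b⟫ ∂gau (Euc n) = ⟪mcov L r a, b⟫ := by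
  have h := ContinuousLinearMap.integral_comp_comm
    ((innerSL ℝ b).comp (ContinuousLinearMap.apply ℝ (Euc n) a)) (integrable_cov hL r)
  simpa [mcov, real_inner_comm] using h

lemma second_moment (hL : IsConvexBody L) (θ w : Euc n) :
    ∫ x, ⟪x, w⟫ ^ 2 ∂tl (gm L) θ = ⟪cov L θ w, w⟫ + ⟪bary (gm L) θ, w⟫ ^ 2 := by
  have := tl_gm_prob hL θ
  rw [cov_inner hL]
  have h : ∀ x, ⟪x - bary (gm L) θ, w⟫ * ⟪x - bary (gm L) θ, w⟫
      = ⟪x, w⟫ ^ 2 - 2 * ⟪bary (gm L) θ, w⟫ * ⟪x, w⟫ + ⟪bary (gm L) θ, w⟫ ^ 2 := by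
    intro x; rw [inner_sub_left]; ring
  simp only [h]
  rw [integral_add, integral_sub, integral_const_mul, inner_bary_gm hL]
  · simp; ring
  · exact tl_gm_integrable hL θ (by fun_prop)
  · exact tl_gm_integrable hL θ (by fun_prop)
  · exact tl_gm_integrable hL θ (by fun_prop)
  · exact integrable_const _

lemma hasFDerivAt_inner_bary (hL : IsConvexBody L) (r : ℝ) (w z : Euc n) :
    HasFDerivAt (fun z => ⟪bary (gm L) (r • z), w⟫)
      (r • (innerSL ℝ w).comp (cov L (r • z))) z := by
  have h2 : HasFDerivAt (fun z : Euc n => r • z) (r • ContinuousLinearMap.id ℝ (Euc n)) z :=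
    (hasFDerivAt_id z).const_smul r
  have h3 := (innerSL ℝ w).hasFDerivAt.comp z ((hasFDerivAt_bary hL (r • z)).comp z h2)
  refine (h3.congr_fderiv ?_).congr_of_eventuallyEq (Filter.Eventually.of_forall fun y => ?_)
  · ext v; simp
  · simp [real_inner_comm]

lemma contDiff_inner_bary (hL : IsConvexBody L) (r : ℝ) (w : Euc n) :
    ContDiff ℝ 1 (fun z : Euc n => ⟪bary (gm L) (r • z), w⟫) := by
  have h := (innerSL ℝ w).contDiff.comp
    (((contDiff_bary_gm hL 1).comp (contDiff_const_smul r)))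
  simpa [Function.comp_def, real_inner_comm] using h

lemma norm_fderiv_inner_bary (hL : IsConvexBody L) {r : ℝ} (hr : 0 ≤ r) (w z : Euc n) :
    ‖fderiv ℝ (fun z : Euc n => ⟪bary (gm L) (r • z), w⟫) z‖ ≤ r * ‖w‖ := by
  rw [(hasFDerivAt_inner_bary hL r w z).fderiv]
  refine ContinuousLinearMap.opNorm_le_bound _ (by positivity) fun v => ?_
  simp only [smul_apply, ContinuousLinearMap.comp_apply, innerSL_apply_apply, norm_smul,
    Real.norm_of_nonneg hr]
  rw [mul_assoc]
  gcongr
  refine (norm_inner_le_norm _ _).trans ?_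
  gcongr
  calc ‖cov L (r • z) v‖ ≤ ‖cov L (r • z)‖ * ‖v‖ := ContinuousLinearMap.le_opNorm _ _
    _ ≤ 1 * ‖v‖ := by gcongr; exact cov_norm_le hL _
    _ = _ := one_mul _

lemma stein_bary (hL : IsConvexBody L) {r : ℝ} (hr : 0 ≤ r) (w : Euc n) :
    ∫ z, ⟪z, w⟫ * ⟪bary (gm L) (r • z), w⟫ ∂gau (Euc n) = r * ⟪mcov L r w, w⟫ := by
  rw [stein (contDiff_inner_bary hL r w) (PolyBdd.of_bdd (norm_fderiv_inner_bary hL hr w)),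
    ← inner_mcov hL, ← integral_const_mul]
  refine integral_congr_ae (Filter.Eventually.of_forall fun z => ?_)
  simp only [(hasFDerivAt_inner_bary hL r w z).fderiv, smul_apply,
    ContinuousLinearMap.comp_apply, innerSL_apply_apply, smul_eq_mul]
  rw [real_inner_comm]

lemma var_bary_le (hL : IsConvexBody L) {r : ℝ} (hr : 0 ≤ r) (w : Euc n) :
    ∫ z, ⟪bary (gm L) (r • z), w⟫ ^ 2 ∂gau (Euc n) ≤ (r * ‖w‖) ^ 2 + ⟪mbar L r, w⟫ ^ 2 := by
  have := gau_var_le (contDiff_inner_bary hL r w) (norm_fderiv_inner_bary hL hr w)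
  rw [inner_mbar hL] at this
  linarith

lemma gain_translation (hL : IsConvexBody L) (r : ℝ) :
    ∫ z, ∫ x, (⟪r • z, x + -mbar L r - x⟫ - (‖x + -mbar L r‖ ^ 2 - ‖x‖ ^ 2) / 2)
      ∂tl (gm L) (r • z) ∂gau (Euc n) = ‖mbar L r‖ ^ 2 / 2 := by
  set m := mbar L r with hm
  have h1 : ∀ z : Euc n, ∫ x, (⟪r • z, x + -m - x⟫ - (‖x + -m‖ ^ 2 - ‖x‖ ^ 2) / 2)
      ∂tl (gm L) (r • z) = (-r) * ⟪z, m⟫ + ⟪bary (gm L) (r • z), m⟫ - ‖m‖ ^ 2 / 2 := by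
    intro z
    have := tl_gm_prob hL (r • z)
    have h2 : ∀ x : Euc n, ⟪r • z, x + -m - x⟫ - (‖x + -m‖ ^ 2 - ‖x‖ ^ 2) / 2
        = ⟪x, m⟫ + ((-r) * ⟪z, m⟫ - ‖m‖ ^ 2 / 2) := by
      intro x
      rw [← sub_eq_add_neg, norm_sub_sq_real]
      simp only [inner_sub_right, real_inner_smul_left]
      ring
    simp only [h2]
    rw [integral_add (tl_gm_integrable hL _ (by fun_prop)) (integrable_const _), inner_bary_gm hL]
    simp; ring
  simp only [h1]
  have i1 : Integrable (fun z : Euc n => -r * ⟪z, m⟫) (gau (Euc n)) := by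
    have := (integrable_clm_gau (innerSL ℝ m)).const_mul (-r)
    simpa [real_inner_comm] using this
  have i2 : Integrable (fun z : Euc n => ⟪bary (gm L) (r • z), m⟫) (gau (Euc n)) :=
    (integrable_bary hL r).inner_const m
  have i3 : Integrable (fun z : Euc n => -r * ⟪z, m⟫ + ⟪bary (gm L) (r • z), m⟫) (gau (Euc n)) :=
    i1.add i2
  rw [integral_sub i3 (integrable_const _), integral_add i1 i2, integral_const_mul,
    integral_inner_gau, inner_mbar hL, ← hm, real_inner_self_eq_norm_sq]
  simp; ring

/-- The map `x ↦ x + ε ⟨w, x⟩ w`. -/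
def rankOne (w : Euc n) (ε : ℝ) : Euc n →ₗ[ℝ] Euc n :=
  LinearMap.transvection (innerₛₗ ℝ w) (ε • w)

lemma rankOne_apply (w : Euc n) (ε : ℝ) (x : Euc n) : rankOne w ε x = x + (ε * ⟪x, w⟫) • w := by
  simp [rankOne, LinearMap.transvection.apply, smul_smul, real_inner_comm, mul_comm]

lemma rankOne_det (w : Euc n) (ε : ℝ) : LinearMap.det (rankOne w ε) = 1 + ε * ‖w‖ ^ 2 := by
  simp [rankOne]

lemma gain_rankOne (hL : IsConvexBody L) {r : ℝ} (hr : 0 ≤ r) (w : Euc n) (hw : ‖w‖ = 1) (ε : ℝ) :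
    ∫ z, ∫ x, (⟪r • z, rankOne w ε x + 0 - x⟫ - (‖rankOne w ε x + 0‖ ^ 2 - ‖x‖ ^ 2) / 2)
      ∂tl (gm L) (r • z) ∂gau (Euc n) = ε * r ^ 2 * ⟪mcov L r w, w⟫
      - (ε + ε ^ 2 / 2) * (⟪mcov L r w, w⟫ + ∫ z, ⟪bary (gm L) (r • z), w⟫ ^ 2 ∂gau (Euc n)) := by
  have h1 : ∀ z : Euc n,
      ∫ x, (⟪r • z, rankOne w ε x + 0 - x⟫ - (‖rankOne w ε x + 0‖ ^ 2 - ‖x‖ ^ 2) / 2)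
      ∂tl (gm L) (r • z) = (ε * r) * (⟪z, w⟫ * ⟪bary (gm L) (r • z), w⟫) -
        (ε + ε ^ 2 / 2) * (⟪cov L (r • z) w, w⟫ + ⟪bary (gm L) (r • z), w⟫ ^ 2) := by
    intro z
    have := tl_gm_prob hL (r • z)
    have h2 : ∀ x : Euc n,
        ⟪r • z, rankOne w ε x + 0 - x⟫ - (‖rankOne w ε x + 0‖ ^ 2 - ‖x‖ ^ 2) / 2
        = (ε * r * ⟪z, w⟫) * ⟪x, w⟫ - (ε + ε ^ 2 / 2) * ⟪x, w⟫ ^ 2 := by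
      intro x
      rw [rankOne_apply, add_zero, add_sub_cancel_left, norm_add_sq_real, norm_smul, mul_pow, hw,
        Real.norm_eq_abs, sq_abs, real_inner_smul_right, real_inner_smul_right, real_inner_smul_left]
      ring
    simp only [h2]
    rw [integral_sub (tl_gm_integrable hL _ (by fun_prop)) (tl_gm_integrable hL _ (by fun_prop)),
      integral_const_mul, integral_const_mul, inner_bary_gm hL, second_moment hL]
    ring
  simp only [h1]
  have pb : PolyBdd fun z : Euc n => ⟪bary (gm L) (r • z), w⟫ :=
    (polyBdd_bary hL r).of_le_mul (PolyBdd.const w) fun z => norm_inner_le_norm _ _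
  have pz : PolyBdd fun z : Euc n => ⟪z, w⟫ :=
    PolyBdd.id.of_le_mul (PolyBdd.const w) fun z => norm_inner_le_norm _ _
  have cb := continuous_bary hL r
  have i1 : Integrable (fun z : Euc n => (ε * r) * (⟪z, w⟫ * ⟪bary (gm L) (r • z), w⟫))
      (gau (Euc n)) :=
    ((pz.mul pb).integrable (Continuous.aestronglyMeasurable (by fun_prop))).const_mul _
  have i2 : Integrable (fun z : Euc n => ⟪cov L (r • z) w, w⟫) (gau (Euc n)) := by
    have h := ContinuousLinearMap.integrable_comp
      ((innerSL ℝ w).comp (ContinuousLinearMap.apply ℝ (Euc n) w)) (integrable_cov hL r)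
    simpa [real_inner_comm] using h
  have i3 : Integrable (fun z : Euc n => ⟪bary (gm L) (r • z), w⟫ ^ 2) (gau (Euc n)) :=
    (pb.pow 2).integrable (Continuous.aestronglyMeasurable (by fun_prop))
  have i4 : Integrable (fun z : Euc n => (ε + ε ^ 2 / 2) *
      (⟪cov L (r • z) w, w⟫ + ⟪bary (gm L) (r • z), w⟫ ^ 2)) (gau (Euc n)) :=
    (i2.add i3).const_mul _
  rw [integral_sub i1 i4, integral_const_mul, integral_const_mul,
    integral_add i2 i3, stein_bary hL hr, inner_mcov hL]
  ring

end Position3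

section Position4

variable {n : ℕ} {L : Set (Euc n)}

lemma position_of_near_max (hL : IsConvexBody L) {r η : ℝ} (hr0 : 0 ≤ r) (hr : r ≤ 1 / 100)
    (hη0 : 0 < η) (hη : η ≤ 1 / 100)
    (hmax : ∀ (Φ : Euc n ≃ₗ[ℝ] Euc n) (v : Euc n),
      posFun r ((fun x => Φ x + v) '' L) ≤ posFun r L + η ^ 2) :
    ‖mbar L r‖ ^ 2 ≤ 2 * η ^ 2 ∧ ∀ w, 3 / 8 * ‖w‖ ^ 2 ≤ ⟪mcov L r w, w⟫ ∧
      ⟪mcov L r w, w⟫ ≤ 5 / 8 * ‖w‖ ^ 2 := by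
  have hm : ‖mbar L r‖ ^ 2 ≤ 2 * η ^ 2 := by
    have h1 := posFun_affine hL (LinearEquiv.refl ℝ _) (-mbar L r) r
    have h2 := hmax (LinearEquiv.refl ℝ _) (-mbar L r)
    simp only [LinearEquiv.refl_apply] at h1 h2
    rw [gain_translation hL] at h1
    simp only [LinearEquiv.refl_toLinearMap, LinearMap.det_id, abs_one, Real.log_one] at h1
    linarith
  have unit : ∀ w : Euc n, ‖w‖ = 1 → 3 / 8 ≤ ⟪mcov L r w, w⟫ ∧ ⟪mcov L r w, w⟫ ≤ 5 / 8 := by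
    intro w hw
    set a := ⟪mcov L r w, w⟫ with ha
    set b := ∫ z, ⟪bary (gm L) (r • z), w⟫ ^ 2 ∂gau (Euc n) with hb
    have hb0 : 0 ≤ b := integral_nonneg fun z => sq_nonneg _
    have hb1 : b ≤ 1 / 1000 := by
      have h1 := var_bary_le hL hr0 w
      have h2 : ⟪mbar L r, w⟫ ^ 2 ≤ ‖mbar L r‖ ^ 2 := by
        have := abs_real_inner_le_norm (mbar L r) w
        rw [hw, mul_one] at this
        rw [← sq_abs]; gcongr
      rw [hw, mul_one] at h1
      nlinarith
    have ha0 : 0 ≤ a := by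
      rw [ha, ← inner_mcov hL]; exact integral_nonneg fun z => cov_nonneg hL _ _
    have ha1 : a ≤ 1 := by
      rw [ha, ← inner_mcov hL]
      refine (integral_mono_of_nonneg (g := fun _ => (1 : ℝ))
        (Filter.Eventually.of_forall fun z => cov_nonneg hL _ _)
        (integrable_const _) (Filter.Eventually.of_forall fun z => ?_)).trans (by simp)
      have := cov_le hL (r • z) w
      rw [hw] at this; simpa using this
    have key : ∀ ε : ℝ, |ε| ≤ 1 / 10 →
        (ε - 2 * ε ^ 2) / 2 + (ε * r ^ 2 * a - (ε + ε ^ 2 / 2) * (a + b)) ≤ η ^ 2 := by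
      intro ε hε
      have hε' := abs_le.1 hε
      have hpos : 0 < 1 + ε := by linarith
      have hdet : LinearMap.det (rankOne w ε) = 1 + ε := by rw [rankOne_det, hw]; ring
      have hdet0 : LinearMap.det (rankOne w ε) ≠ 0 := by rw [hdet]; exact hpos.ne'
      set Φ := (rankOne w ε).equivOfDetNeZero hdet0 with hΦ
      have h1 := posFun_affine hL Φ 0 r
      have h2 := hmax Φ 0
      have h3 : ∀ x, Φ x = rankOne w ε x := fun x => rfl
      have h4 : (Φ : Euc n →ₗ[ℝ] Euc n) = rankOne w ε := by ext1 x; rfl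
      simp only [h3] at h1 h2
      rw [gain_rankOne hL hr0 w hw, h4, hdet, abs_of_pos hpos] at h1
      have h5 : ε - 2 * ε ^ 2 ≤ Real.log (1 + ε) := by
        rw [Real.le_log_iff_exp_le hpos]
        have hy : |ε - 2 * ε ^ 2| ≤ 1 := by rw [abs_le]; constructor <;> nlinarith
        have h6 := (abs_le.1 (Real.abs_exp_sub_one_sub_id_le hy)).2
        have h7 : (ε - 2 * ε ^ 2) ^ 2 ≤ 2 * ε ^ 2 := by
          have : (ε - 2 * ε ^ 2) ^ 2 = ε ^ 2 * (1 - 2 * ε) ^ 2 := by ring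
          have h8 : (1 - 2 * ε) ^ 2 ≤ 2 := by nlinarith
          rw [this]; nlinarith [sq_nonneg ε]
        linarith
      linarith
    have hηa : |η| ≤ 1 / 10 := by rw [abs_of_pos hη0]; linarith
    have k1 := key η hηa
    have k2 := key (-η) (by rwa [abs_neg])
    have k1' : η * (1 / 2 - (a + b) + r ^ 2 * a) ≤ η * (3 * η) := by nlinarith
    have k2' : η * ((a + b) - r ^ 2 * a - 1 / 2) ≤ η * (3 * η) := by nlinarith
    have k1'' := le_of_mul_le_mul_left k1' hη0
    have k2'' := le_of_mul_le_mul_left k2' hη0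
    have hr2 : r ^ 2 ≤ 1 / 10000 := by nlinarith
    have hr3 : r ^ 2 * a ≤ 1 / 10000 := by nlinarith [sq_nonneg r]
    have hr4 : 0 ≤ r ^ 2 * a := by positivity
    constructor <;> linarith
  refine ⟨hm, fun w => ?_⟩
  rcases eq_or_ne w 0 with rfl | hw
  · simp
  · have hw' : 0 < ‖w‖ := norm_pos_iff.2 hw
    have h := unit (‖w‖⁻¹ • w) (by rw [norm_smul, norm_inv, norm_norm, inv_mul_cancel₀ hw'.ne'])
    rw [map_smul, real_inner_smul_left, real_inner_smul_right] at h
    have e : ⟪mcov L r w, w⟫ = (‖w‖⁻¹ * (‖w‖⁻¹ * ⟪mcov L r w, w⟫)) * ‖w‖ ^ 2 := by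
      field_simp
    rw [e]
    constructor <;> gcongr <;> tauto

/-- Every convex body has an affine image that is almost centred and whose mean covariance
is close to half the identity. -/
lemma exists_position {K : Set (Euc n)} (hK : IsConvexBody K) {r η : ℝ} (hr0 : 0 ≤ r)
    (hr : r ≤ 1 / 100) (hη0 : 0 < η) (hη : η ≤ 1 / 100) :
    ∃ (T : Euc n ≃ₗ[ℝ] Euc n) (v : Euc n), IsConvexBody ((fun x => T x + v) '' K) ∧
      ‖mbar ((fun x => T x + v) '' K) r‖ ^ 2 ≤ 2 * η ^ 2 ∧
      ∀ w, 3 / 8 * ‖w‖ ^ 2 ≤ ⟪mcov ((fun x => T x + v) '' K) r w, w⟫ ∧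
        ⟪mcov ((fun x => T x + v) '' K) r w, w⟫ ≤ 5 / 8 * ‖w‖ ^ 2 := by
  set S : Set ℝ := Set.range fun p : (Euc n ≃ₗ[ℝ] Euc n) × Euc n =>
    posFun r ((fun x => p.1 x + p.2) '' K) with hS
  have hne : S.Nonempty := ⟨_, (LinearEquiv.refl ℝ _, 0), rfl⟩
  have hbd : BddAbove S := by
    obtain ⟨B, hB⟩ := posFun_bdd (n := n) r
    exact ⟨B, by rintro _ ⟨p, rfl⟩; exact hB _ (isConvexBody_affine hK _ _)⟩
  obtain ⟨_, ⟨⟨T, v⟩, rfl⟩, h⟩ := exists_lt_of_lt_csSup hne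
    (sub_lt_self (sSup S) (show 0 < η ^ 2 by positivity))
  refine ⟨T, v, isConvexBody_affine hK _ _,
    position_of_near_max (isConvexBody_affine hK T v) hr0 hr hη0 hη fun Φ u => ?_⟩
  have h2 : (fun x => Φ x + u) '' (fun x => T x + v) '' K
      = (fun x => (T.trans Φ) x + (Φ v + u)) '' K := by
    rw [Set.image_image]; simp [add_assoc]
  have h3 : posFun r ((fun x => Φ x + u) '' (fun x => T x + v) '' K) ≤ sSup S := by
    rw [h2]; exact le_csSup hbd ⟨(T.trans Φ, Φ v + u), rfl⟩
  simp only at h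
  linarith

end Position4

/-! ### Support functions of finite sets -/

section SupportFunction

variable {E : Type*} [NormedAddCommGroup E] [InnerProductSpace ℝ E]

open Classical in
/-- The support function of the finite set `Q ∪ {0}`. -/
def sf (Q : Finset E) (x : E) : ℝ :=
  (insert 0 Q).sup' (Finset.insert_nonempty _ _) fun q => ⟪q, x⟫

lemma sf_nonneg (Q : Finset E) (x : E) : 0 ≤ sf Q x := by
  classical
  simp [sf]

lemma le_sf {Q : Finset E} {q : E} (hq : q ∈ Q) (x : E) : ⟪q, x⟫ ≤ sf Q x := by
  classical
  exact Finset.le_sup' (fun q => ⟪q, x⟫) (Finset.mem_insert_of_mem hq)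

lemma sf_le {Q : Finset E} {x : E} {c : ℝ} (hc : 0 ≤ c) (h : ∀ q ∈ Q, ⟪q, x⟫ ≤ c) :
    sf Q x ≤ c := by
  classical
  refine Finset.sup'_le _ _ fun q hq => ?_
  rcases Finset.mem_insert.1 hq with rfl | hq
  · simpa using hc
  · exact h q hq

lemma sf_add_le (Q : Finset E) (x y : E) : sf Q (x + y) ≤ sf Q x + sf Q y :=
  sf_le (add_nonneg (sf_nonneg _ _) (sf_nonneg _ _)) fun q hq => by
    rw [inner_add_right]; exact add_le_add (le_sf hq x) (le_sf hq y)

lemma sf_smul_le (Q : Finset E) {c : ℝ} (hc : 0 ≤ c) (x : E) : sf Q (c • x) ≤ c * sf Q x :=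
  sf_le (mul_nonneg hc (sf_nonneg _ _)) fun q hq => by
    rw [inner_smul_right]; exact mul_le_mul_of_nonneg_left (le_sf hq x) hc

lemma sf_smul (Q : Finset E) {c : ℝ} (hc : 0 < c) (x : E) : sf Q (c • x) = c * sf Q x := by
  refine le_antisymm (sf_smul_le Q hc.le x) ?_
  have h := sf_smul_le Q (inv_pos.2 hc).le (c • x)
  rw [smul_smul, inv_mul_cancel₀ hc.ne', one_smul] at h
  rwa [← le_inv_mul_iff₀ hc]

lemma continuous_sf (Q : Finset E) : Continuous (sf Q) := by
  classical
  exact Continuous.finset_sup'_apply _ fun q _ => by fun_prop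

lemma finset_norm_bdd (Q : Finset E) : ∃ B, 0 ≤ B ∧ ∀ q ∈ Q, ‖q‖ ≤ B :=
  ⟨∑ q ∈ Q, ‖q‖, Finset.sum_nonneg fun _ _ => norm_nonneg _,
    fun _ hq => Finset.single_le_sum (f := fun q : E => ‖q‖) (fun _ _ => norm_nonneg _) hq⟩

lemma norm_sf_le {Q : Finset E} {B : ℝ} (hB : 0 ≤ B) (h : ∀ q ∈ Q, ‖q‖ ≤ B) (x : E) :
    ‖sf Q x‖ ≤ B * ‖x‖ := by
  rw [Real.norm_of_nonneg (sf_nonneg _ _)]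
  exact sf_le (by positivity) fun q hq => (real_inner_le_norm _ _).trans (by gcongr; exact h q hq)

lemma PolyBdd.sf {X : Type*} [NormedAddCommGroup X] {f : X → E} (hf : PolyBdd f) (Q : Finset E) :
    PolyBdd fun x => sf Q (f x) := by
  obtain ⟨B, hB, h⟩ := finset_norm_bdd Q
  refine (PolyBdd.const B).of_le_mul hf fun x => ?_
  rw [Real.norm_of_nonneg hB]
  exact norm_sf_le hB h _

variable [MeasurableSpace E] [BorelSpace E] [SecondCountableTopology E]

/-- A measurable choice of a maximiser in the support function. -/
lemma exists_argmax (Q : Finset E) : ∃ q : E → E, Measurable q ∧ (∀ x, q x ∈ Q ∨ q x = 0) ∧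
    ∀ x, ⟪q x, x⟫ = sf Q x := by
  classical
  induction Q using Finset.induction_on with
  | empty => exact ⟨fun _ => 0, measurable_const, fun _ => Or.inr rfl, fun x => by simp [sf]⟩
  | insert p Q _ ih =>
    obtain ⟨q, hm, hq, hs⟩ := ih
    refine ⟨fun x => if ⟪p, x⟫ ≤ ⟪q x, x⟫ then q x else p, ?_, ?_, ?_⟩
    · exact Measurable.ite (measurableSet_le (by fun_prop) (by fun_prop)) hm measurable_const
    · intro x
      simp only [Finset.mem_insert]
      split_ifs
      · rcases hq x with h | h <;> tauto
      · tauto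
    · intro x
      have h1 : sf (insert p Q) x ≤ max ⟪p, x⟫ (sf Q x) := by
        refine sf_le ((sf_nonneg Q x).trans (le_max_right _ _)) fun q' hq' => ?_
        rcases Finset.mem_insert.1 hq' with rfl | h
        · exact le_max_left _ _
        · exact (le_sf h x).trans (le_max_right _ _)
      have h2 : sf Q x ≤ sf (insert p Q) x :=
        sf_le (sf_nonneg _ _) fun q' hq' => le_sf (Finset.mem_insert_of_mem hq') x
      have h3 := le_sf (Finset.mem_insert_self p Q) x
      simp only [hs x]
      split_ifs with h
      · rw [hs x]; rw [max_eq_right h] at h1; linarith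
      · rw [max_eq_left (not_le.1 h).le] at h1; linarith

end SupportFunction

/-! ### Comparison of a Gaussian vector with its image under a monotone map -/

section Comparison

variable {n : ℕ}

lemma gau_reflect (e : Euc n) (he : ‖e‖ = 1) {g : Euc n → ℝ} (hg : Continuous g) :
    ∫ z, g (z - (2 * ⟪e, z⟫) • e) ∂gau (Euc n) = ∫ z, g z ∂gau (Euc n) := by
  set R : Euc n →L[ℝ] Euc n :=
    ContinuousLinearMap.id ℝ _ - (2 : ℝ) • (innerSL ℝ e).smulRight e with hR
  have hRa : ∀ z, R z = z - (2 * ⟪e, z⟫) • e := by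
    intro z; simp [hR, smul_smul]
  have hRs : ∀ a b, ⟪R a, b⟫ = ⟪a, R b⟫ := by
    intro a b
    simp only [hRa, inner_sub_left, inner_sub_right, inner_smul_left, inner_smul_right,
      RCLike.conj_to_real, real_inner_comm e a]
    ring
  have hn : ∀ z, ‖R z‖ = ‖z‖ := by
    intro z
    rw [← sq_eq_sq₀ (norm_nonneg _) (norm_nonneg _), hRa, norm_sub_sq_real, norm_smul, he,
      inner_smul_right, Real.norm_eq_abs, mul_one, sq_abs, real_inner_comm z e]
    ring
  have hadj : ContinuousLinearMap.adjoint R = R := by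
    ext1 x
    refine ext_inner_right ℝ fun y => ?_
    rw [ContinuousLinearMap.adjoint_inner_left, hRs]
  have hmap := gau_map_coisometry R (fun y => by rw [hadj, hn])
  conv_rhs => rw [← hmap]
  rw [integral_map (by fun_prop) hg.aestronglyMeasurable]
  simp only [hRa]

variable {Q : Finset (Euc n)} {q : Euc n → Euc n}

lemma argmax_ge (hq : ∀ x, q x ∈ Q ∨ q x = 0) (hs : ∀ x, ⟪q x, x⟫ = sf Q x) (x h : Euc n) :
    sf Q x - sf Q (x - h) ≤ ⟪q x, h⟫ := by
  have h1 : ⟪q x, x - h⟫ ≤ sf Q (x - h) := by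
    rcases hq x with h2 | h2
    · exact le_sf h2 _
    · rw [h2, inner_zero_left]; exact sf_nonneg _ _
  rw [inner_sub_right, hs] at h1
  linarith

lemma argmax_bdd (hq : ∀ x, q x ∈ Q ∨ q x = 0) : ∃ B, 0 ≤ B ∧ ∀ x, ‖q x‖ ≤ B := by
  obtain ⟨B, hB, h⟩ := finset_norm_bdd Q
  refine ⟨B, hB, fun x => ?_⟩
  rcases hq x with h2 | h2
  · exact h _ h2
  · rw [h2, norm_zero]; exact hB

lemma integrable_argmax (hm : Measurable q) (hq : ∀ x, q x ∈ Q ∨ q x = 0) (y : Euc n) (c : ℝ)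
    (S : Euc n →L[ℝ] Euc n) :
    Integrable (fun z => ⟪q (y + c • z), S z⟫) (gau (Euc n)) := by
  obtain ⟨B, hB, h⟩ := argmax_bdd hq
  refine PolyBdd.integrable ((PolyBdd.of_bdd (f := fun z : Euc n => q (y + c • z))
    fun z => h _).of_le_mul (PolyBdd.clm S) fun z => norm_inner_le_norm _ _) ?_
  exact Measurable.aestronglyMeasurable (by fun_prop)

/-- `E ⟨q(y + cZ), e⟩ ⟨e, Z⟩ ≥ 0`, by comparing with the reflection of `Z` in `e`. -/
lemma argmax_dir_nonneg (hm : Measurable q) (hq : ∀ x, q x ∈ Q ∨ q x = 0)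
    (hs : ∀ x, ⟪q x, x⟫ = sf Q x) (y : Euc n) {c : ℝ} (hc : 0 < c) (e : Euc n) (he : ‖e‖ = 1) :
    0 ≤ ∫ z, ⟪q (y + c • z), ⟪e, z⟫ • e⟫ ∂gau (Euc n) := by
  have i0 : Integrable (fun z => ⟪q (y + c • z), ⟪e, z⟫ • e⟫) (gau (Euc n)) :=
    integrable_argmax hm hq y c ((innerSL ℝ e).smulRight e)
  have hcs := continuous_sf Q
  have pz : PolyBdd fun z : Euc n => y + c • z :=
    (PolyBdd.const y).add (PolyBdd.clm (c • ContinuousLinearMap.id ℝ (Euc n)))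
  have pr : PolyBdd fun z : Euc n => y + c • (z - (2 * ⟪e, z⟫) • e) := by
    refine (PolyBdd.const y).add ?_
    refine (PolyBdd.clm (c • (ContinuousLinearMap.id ℝ (Euc n) -
      (2 : ℝ) • (innerSL ℝ e).smulRight e))).of_le fun z => le_of_eq ?_
    simp [smul_smul]
  have i1 : Integrable (fun z => sf Q (y + c • z)) (gau (Euc n)) :=
    (pz.sf Q).integrable (Continuous.aestronglyMeasurable (by fun_prop))
  have i2 : Integrable (fun z => sf Q (y + c • (z - (2 * ⟪e, z⟫) • e))) (gau (Euc n)) :=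
    (pr.sf Q).integrable (Continuous.aestronglyMeasurable (by fun_prop))
  have h : ∫ z, (sf Q (y + c • z) - sf Q (y + c • (z - (2 * ⟪e, z⟫) • e))) ∂gau (Euc n)
      ≤ ∫ z, (2 * c) * ⟪q (y + c • z), ⟪e, z⟫ • e⟫ ∂gau (Euc n) := by
    refine integral_mono (i1.sub i2) (i0.const_mul _) fun z => ?_
    have := argmax_ge hq hs (y + c • z) ((2 * c) • ⟪e, z⟫ • e)
    rw [inner_smul_right] at this
    have h2 : y + c • z - (2 * c) • ⟪e, z⟫ • e = y + c • (z - (2 * ⟪e, z⟫) • e) := by module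
    rw [h2] at this
    exact this
  rw [integral_sub i1 i2, gau_reflect e he (g := fun z => sf Q (y + c • z)) (by fun_prop), sub_self,
    integral_const_mul] at h
  exact nonneg_of_mul_nonneg_right (by linarith) (by positivity : 0 < 2 * c)

lemma argmax_psd (hm : Measurable q) (hq : ∀ x, q x ∈ Q ∨ q x = 0)
    (hs : ∀ x, ⟪q x, x⟫ = sf Q x) (y : Euc n) {c : ℝ} (hc : 0 < c) (S : Euc n →L[ℝ] Euc n)
    (hS : ∀ a b, ⟪S a, b⟫ = ⟪a, S b⟫) {a : ℝ} (ha : ∀ v, a * ‖v‖ ^ 2 ≤ ⟪S v, v⟫) :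
    a * ∫ z, ⟪q (y + c • z), z⟫ ∂gau (Euc n) ≤ ∫ z, ⟪q (y + c • z), S z⟫ ∂gau (Euc n) := by
  obtain ⟨f, l, hl⟩ := exists_eigenbasis S hS
  have hf : ∀ i, ‖f i‖ = 1 := fun i => f.orthonormal.1 i
  have hla : ∀ i, a ≤ l i := fun i => by
    have := ha (f i)
    rw [hl, real_inner_smul_left, real_inner_self_eq_norm_sq, hf] at this
    simpa using this
  have i0 : ∀ i, Integrable (fun z => ⟪q (y + c • z), ⟪f i, z⟫ • f i⟫) (gau (Euc n)) := fun i =>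
    integrable_argmax hm hq y c ((innerSL ℝ (f i)).smulRight (f i))
  have e1 : ∀ z, ⟪q (y + c • z), z⟫ = ∑ i, ⟪q (y + c • z), ⟪f i, z⟫ • f i⟫ := fun z => by
    rw [← inner_sum, f.sum_repr' z]
  have e2 : ∀ z, ⟪q (y + c • z), S z⟫ = ∑ i, l i * ⟪q (y + c • z), ⟪f i, z⟫ • f i⟫ := fun z => by
    have : S z = ∑ i, l i • ⟪f i, z⟫ • f i := by
      conv_lhs => rw [← f.sum_repr' z]
      simp only [map_sum, map_smul, hl]
      exact Finset.sum_congr rfl fun i _ => smul_comm _ _ _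
    rw [this, inner_sum]
    simp only [inner_smul_right]
  simp only [e1, e2]
  rw [integral_finsetSum _ (fun i _ => i0 i), integral_finsetSum _ (fun i _ => (i0 i).const_mul _),
    Finset.mul_sum]
  refine Finset.sum_le_sum fun i _ => ?_
  rw [integral_const_mul]
  exact mul_le_mul_of_nonneg_right (hla i) (argmax_dir_nonneg hm hq hs y hc (f i) (hf i))

end Comparison

/-! ### The comparison inequality -/

section Comparison

variable {n : ℕ} {Q : Finset (Euc n)} {q : Euc n → Euc n}

lemma integrable_sf_lin (Q : Finset (Euc n)) (y : Euc n) (c : ℝ) :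
    Integrable (fun z => sf Q (y + c • z)) (gau (Euc n)) := by
  have hcs := continuous_sf Q
  have pz : PolyBdd fun z : Euc n => y + c • z :=
    (PolyBdd.const y).add (PolyBdd.clm (c • ContinuousLinearMap.id ℝ (Euc n)))
  exact (pz.sf Q).integrable (Continuous.aestronglyMeasurable (by fun_prop))

lemma integrable_sf (Q : Finset (Euc n)) : Integrable (sf Q) (gau (Euc n)) := by
  simpa using integrable_sf_lin Q 0 1

lemma integral_sf_nonneg (Q : Finset (Euc n)) : 0 ≤ ∫ z, sf Q z ∂gau (Euc n) :=
  integral_nonneg fun z => sf_nonneg Q z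

lemma integrable_sf_rot (Q : Finset (Euc n)) (s c : ℝ) :
    Integrable (fun p : Euc n × Euc n => sf Q (s • p.1 + c • p.2)) (gau2 (Euc n)) := by
  have hcs := continuous_sf Q
  have pz : PolyBdd fun p : Euc n × Euc n => s • p.1 + c • p.2 :=
    PolyBdd.clm (s • ContinuousLinearMap.fst ℝ (Euc n) (Euc n) +
      c • ContinuousLinearMap.snd ℝ (Euc n) (Euc n))
  exact (pz.sf Q).integrable (Continuous.aestronglyMeasurable (by fun_prop))

lemma integral_sf_rot (Q : Finset (Euc n)) (θ : ℝ) :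
    ∫ p : Euc n × Euc n, sf Q (sin θ • p.1 + cos θ • p.2) ∂gau2 (Euc n) =
      ∫ z, sf Q z ∂gau (Euc n) := by
  have hcs := continuous_sf Q
  have h := integral_rot (E := Euc n) (fun p => sf Q (sin θ • p.1 + cos θ • p.2))
    (Continuous.stronglyMeasurable (by fun_prop)) θ
  simp only [← snd_eq_rot] at h
  rw [← h, gau2, integral_fun_snd]
  simp

lemma integrable_argmax_rot (hm : Measurable q) (hq : ∀ x, q x ∈ Q ∨ q x = 0)
    {D : Euc n → Euc n →L[ℝ] Euc n} (hD : Continuous D) {K : ℝ} (hK : ∀ y, ‖D y‖ ≤ K) (s c : ℝ) :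
    Integrable (fun p : Euc n × Euc n => ⟪q (s • p.1 + c • p.2), D p.1 p.2⟫) (gau2 (Euc n)) := by
  obtain ⟨B, hB, h⟩ := argmax_bdd hq
  have hDm : Continuous fun p : Euc n × Euc n => D p.1 p.2 :=
    (hD.comp continuous_fst).clm_apply continuous_snd
  refine PolyBdd.integrable ((PolyBdd.of_bdd (f := fun p : Euc n × Euc n => B * ‖D p.1‖)
    (C := B * K) fun p => ?_).of_le_mul (PolyBdd.id.comp_snd) fun p => ?_) ?_
  · rw [Real.norm_of_nonneg (by positivity)]; gcongr; exact hK _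
  · rw [Real.norm_of_nonneg (show 0 ≤ B * ‖D p.1‖ by positivity)]
    refine (norm_inner_le_norm _ _).trans ?_
    rw [mul_assoc]
    gcongr
    · exact h _
    · exact ContinuousLinearMap.le_opNorm _ _
  · have := hDm.measurable
    exact Measurable.aestronglyMeasurable (by fun_prop)

lemma compare_angle (hm : Measurable q) (hq : ∀ x, q x ∈ Q ∨ q x = 0)
    (hs : ∀ x, ⟪q x, x⟫ = sf Q x) {D : Euc n → Euc n →L[ℝ] Euc n} (hD : Continuous D) {K : ℝ}
    (hK : ∀ y, ‖D y‖ ≤ K) (hsym : ∀ y a b, ⟪D y a, b⟫ = ⟪a, D y b⟫)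
    (hpsd : ∀ y v, 0 ≤ ⟪D y v, v⟫) {Gd : Set (Euc n)} (hGd : MeasurableSet Gd) {a : ℝ}
    (ha : 0 ≤ a) (hga : ∀ y ∈ Gd, ∀ v, a * ‖v‖ ^ 2 ≤ ⟪D y v, v⟫)
    {θ : ℝ} (hθ : 0 < cos θ) (hθ' : 0 ≤ sin θ) :
    a * (∫ z, sf Q z ∂gau (Euc n)) * ((1 - sin θ) / cos θ - (gau (Euc n)).real Gdᶜ) ≤
      ∫ p, ⟪q (sin θ • p.1 + cos θ • p.2), D p.1 p.2⟫ ∂gau2 (Euc n) := by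
  set M := ∫ z, sf Q z ∂gau (Euc n) with hM
  set s := sin θ
  set c := cos θ
  have hint := integrable_argmax_rot hm hq hD hK s c
  have hM0 : 0 ≤ M := integral_sf_nonneg Q
  have i1 := integrable_sf_rot Q s c
  have i2 : Integrable (fun y => sf Q (s • y)) (gau (Euc n)) := by
    simpa using integrable_sf_lin Q 0 s
  have i3 : Integrable (fun y => ∫ z, sf Q (s • y + c • z) ∂gau (Euc n)) (gau (Euc n)) :=
    i1.integral_prod_left
  have i4 : Integrable (fun y => Gdᶜ.indicator (fun _ => (1 : ℝ)) y) (gau (Euc n)) :=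
    (integrable_const (1 : ℝ)).indicator hGd.compl
  have hlow : ∀ y, a / c * ((∫ z, sf Q (s • y + c • z) ∂gau (Euc n)) - sf Q (s • y)) -
      a * M * Gdᶜ.indicator (fun _ => (1 : ℝ)) y ≤
      ∫ z, ⟪q (s • y + c • z), D y z⟫ ∂gau (Euc n) := by
    intro y
    by_cases hy : y ∈ Gd
    · rw [Set.indicator_of_notMem (by simpa using hy), mul_zero, sub_zero]
      refine le_trans ?_ (argmax_psd hm hq hs (s • y) hθ (D y) (hsym y) (hga y hy))
      rw [div_mul_eq_mul_div, mul_div_assoc]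
      refine mul_le_mul_of_nonneg_left ?_ ha
      rw [div_le_iff₀ hθ, mul_comm, ← integral_const_mul]
      have e : (∫ z, sf Q (s • y + c • z) ∂gau (Euc n)) - sf Q (s • y) =
          ∫ z, (sf Q (s • y + c • z) - sf Q (s • y)) ∂gau (Euc n) := by
        rw [integral_sub (integrable_sf_lin Q _ c) (integrable_const _)]; simp
      rw [e]
      refine integral_mono ((integrable_sf_lin Q _ c).sub (integrable_const _))
        ((integrable_argmax hm hq (s • y) c (ContinuousLinearMap.id ℝ _)).const_mul c) fun z => ?_
      have := argmax_ge hq hs (s • y + c • z) (c • z)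
      rw [add_sub_cancel_right, inner_smul_right] at this
      exact this
    · rw [Set.indicator_of_mem (by simpa using hy), mul_one]
      have h0 := argmax_psd hm hq hs (s • y) hθ (D y) (hsym y) (a := 0)
        (fun v => by simpa using hpsd y v)
      rw [zero_mul] at h0
      refine le_trans ?_ h0
      have h1 : (∫ z, sf Q (s • y + c • z) ∂gau (Euc n)) ≤ sf Q (s • y) + c * M := by
        have : (∫ z, sf Q (s • y + c • z) ∂gau (Euc n)) ≤
            ∫ z, (sf Q (s • y) + c * sf Q z) ∂gau (Euc n) := by
          refine integral_mono (integrable_sf_lin Q _ c)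
            ((integrable_const _).add ((integrable_sf Q).const_mul c)) fun z => ?_
          exact (sf_add_le Q _ _).trans (add_le_add le_rfl (sf_smul_le Q hθ.le z))
        rw [integral_add (integrable_const _) ((integrable_sf Q).const_mul c),
          integral_const_mul] at this
        simpa using this
      have h2 : a / c * ((∫ z, sf Q (s • y + c • z) ∂gau (Euc n)) - sf Q (s • y)) ≤
          a / c * (c * M) := mul_le_mul_of_nonneg_left (by linarith) (by positivity)
      have h3 : a / c * (c * M) = a * M := by field_simp
      linarith
  have hprod : ∫ p, ⟪q (s • p.1 + c • p.2), D p.1 p.2⟫ ∂gau2 (Euc n) =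
      ∫ y, ∫ z, ⟪q (s • y + c • z), D y z⟫ ∂gau (Euc n) ∂gau (Euc n) := integral_prod _ hint
  have hpsf : ∫ y, ∫ z, sf Q (s • y + c • z) ∂gau (Euc n) ∂gau (Euc n) = M := by
    rw [hM, ← integral_sf_rot Q θ]; exact (integral_prod _ i1).symm
  have hssf : ∫ y, sf Q (s • y) ∂gau (Euc n) = s * M := by
    rcases hθ'.eq_or_lt with h | h
    · have : s = 0 := h.symm
      rw [this]; simp [sf, Finset.sup'_const]
    · simp only [sf_smul Q h]; rw [integral_const_mul]
  have j1 : Integrable (fun y => a / c * ((∫ z, sf Q (s • y + c • z) ∂gau (Euc n)) - sf Q (s • y)))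
      (gau (Euc n)) := (i3.sub i2).const_mul _
  have j2 : Integrable (fun y => a * M * Gdᶜ.indicator (fun _ => (1 : ℝ)) y) (gau (Euc n)) :=
    i4.const_mul _
  rw [hprod]
  refine le_trans (le_of_eq ?_) (integral_mono (j1.sub j2) hint.integral_prod_left hlow)
  rw [integral_sub' j1 j2, integral_const_mul, integral_const_mul, integral_sub i3 i2, hpsf, hssf,
    integral_indicator_const _ hGd.compl]
  simp only [smul_eq_mul, mul_one]
  field_simp

/-- A Gaussian vector is dominated, in the mean of every support function, by its image under a
monotone map whose derivative is bounded below with probability `9/10`. -/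
lemma comparison (Q : Finset (Euc n)) {F : Euc n → Euc n} (hF : ContDiff ℝ 1 F) {K : ℝ}
    (hK : ∀ y, ‖fderiv ℝ F y‖ ≤ K) (hsym : ∀ y a b, ⟪fderiv ℝ F y a, b⟫ = ⟪a, fderiv ℝ F y b⟫)
    (hpsd : ∀ y v, 0 ≤ ⟪fderiv ℝ F y v, v⟫) (h0 : ∫ z, F z ∂gau (Euc n) = 0)
    {Gd : Set (Euc n)} (hGd : MeasurableSet Gd) {a : ℝ}
    (ha : 0 ≤ a) (hga : ∀ y ∈ Gd, ∀ v, a * ‖v‖ ^ 2 ≤ ⟪fderiv ℝ F y v, v⟫)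
    (hbad : (gau (Euc n)).real Gdᶜ ≤ 1 / 10) :
    a / 5 * ∫ z, sf Q z ∂gau (Euc n) ≤ ∫ z, sf Q (F z) ∂gau (Euc n) := by
  obtain ⟨q, hm, hq, hs⟩ := exists_argmax Q
  obtain ⟨B, hB, hqB⟩ := argmax_bdd hq
  have hD := hF.continuous_fderiv (by norm_num)
  have hDb : PolyBdd (fderiv ℝ F) := PolyBdd.of_bdd (f := fderiv ℝ F) hK
  have hFb : PolyBdd F := PolyBdd.of_fderiv (hF.differentiable (by norm_num)) hDb
  have hFc := hF.continuous
  have hcs := continuous_sf Q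
  have hFi : Integrable F (gau (Euc n)) := hFb.integrable hFc.aestronglyMeasurable
  set M := ∫ z, sf Q z ∂gau (Euc n) with hM
  have hM0 : 0 ≤ M := integral_sf_nonneg Q
  have hkm : StronglyMeasurable fun x => innerSL ℝ (q x) :=
    ((innerSL ℝ).continuous.measurable.comp hm).stronglyMeasurable
  have key := cov_identity hF hDb (k := fun x => innerSL ℝ (q x)) hkm
    (PolyBdd.of_bdd (f := fun x => innerSL ℝ (q x)) (C := B) fun x => by
      rw [innerSL_apply_norm]; exact hqB x)
  simp only [innerSL_apply_apply] at key
  have hqF : Integrable (fun z => ⟪q z, F z⟫) (gau (Euc n)) :=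
    PolyBdd.integrable ((PolyBdd.of_bdd (f := q) hqB).of_le_mul hFb fun z => norm_inner_le_norm _ _)
      (Measurable.aestronglyMeasurable (by have := hFc.measurable; fun_prop))
  have hlhs : ∫ p, ⟪q p.2, F p.2 - F p.1⟫ ∂gau2 (Euc n) = ∫ z, ⟪q z, F z⟫ ∂gau (Euc n) := by
    have j1 : Integrable (fun p : Euc n × Euc n => ⟪q p.2, F p.2⟫) (gau2 (Euc n)) :=
      hqF.comp_snd (gau (Euc n))
    have j2 : Integrable (fun p : Euc n × Euc n => ⟪q p.2, F p.1⟫) (gau2 (Euc n)) :=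
      PolyBdd.integrable ((PolyBdd.of_bdd (f := fun p : Euc n × Euc n => q p.2)
        fun p => hqB p.2).of_le_mul hFb.comp_fst fun z => norm_inner_le_norm _ _)
      (Measurable.aestronglyMeasurable (by have := hFc.measurable; fun_prop))
    simp only [inner_sub_right]
    rw [integral_sub j1 j2]
    have e1 : ∫ p : Euc n × Euc n, ⟪q p.2, F p.2⟫ ∂gau2 (Euc n) = ∫ z, ⟪q z, F z⟫ ∂gau (Euc n) := by
      rw [gau2, integral_fun_snd (fun z => ⟪q z, F z⟫)]; simp
    have e2 : ∫ p : Euc n × Euc n, ⟪q p.2, F p.1⟫ ∂gau2 (Euc n) = 0 := by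
      rw [gau2, integral_prod_symm _ j2]
      have : ∀ y, ∫ x, ⟪q y, F x⟫ ∂gau (Euc n) = 0 := fun y => by
        rw [integral_inner hFi, h0, inner_zero_right]
      simp [this]
    rw [e1, e2, sub_zero]
  rw [hlhs] at key
  have hup : ∫ z, ⟪q z, F z⟫ ∂gau (Euc n) ≤ ∫ z, sf Q (F z) ∂gau (Euc n) := by
    refine integral_mono hqF ((hFb.sf Q).integrable
      (Continuous.aestronglyMeasurable (by fun_prop))) fun z => ?_
    rcases hq z with h | h
    · exact le_sf h _
    · simp only [h, inner_zero_left]; exact sf_nonneg _ _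
  refine le_trans ?_ (key ▸ hup)
  set h : ℝ → ℝ := fun θ =>
    ∫ p, ⟪q (sin θ • p.1 + cos θ • p.2), fderiv ℝ F p.1 p.2⟫ ∂gau2 (Euc n) with hh
  have hpi := Real.pi_gt_three
  have hmeas : StronglyMeasurable h := by
    refine StronglyMeasurable.integral_prod_right (f := fun θ (p : Euc n × Euc n) =>
      ⟪q (sin θ • p.1 + cos θ • p.2), fderiv ℝ F p.1 p.2⟫) ?_
    have hDm : Continuous fun r : ℝ × (Euc n × Euc n) => fderiv ℝ F r.2.1 r.2.2 :=
      (hD.comp (continuous_fst.comp continuous_snd)).clm_apply (continuous_snd.comp continuous_snd)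
    have := hDm.measurable
    refine Measurable.stronglyMeasurable ?_
    simp only [Function.uncurry_def]
    fun_prop
  have hbdd : ∀ θ, ‖h θ‖ ≤ ∫ p : Euc n × Euc n, B * (K * ‖p.2‖) ∂gau2 (Euc n) := by
    intro θ
    refine (norm_integral_le_integral_norm _).trans ?_
    refine integral_mono (integrable_argmax_rot hm hq hD hK _ _).norm ?_ fun p => ?_
    · exact ((((PolyBdd.id (X := Euc n)).comp_snd (X := Euc n)).norm.integrable
        (Continuous.aestronglyMeasurable (by fun_prop))).const_mul K).const_mul B
    · refine (norm_inner_le_norm _ _).trans ?_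
      have := (fderiv ℝ F p.1).le_of_opNorm_le (hK p.1) p.2
      have h2 := hqB (sin θ • p.1 + cos θ • p.2)
      gcongr
  have hii : ∀ u v : ℝ, IntervalIntegrable h volume u v := fun u v =>
    ⟨Integrable.of_bound hmeas.aestronglyMeasurable _ (Filter.Eventually.of_forall hbdd),
     Integrable.of_bound hmeas.aestronglyMeasurable _ (Filter.Eventually.of_forall hbdd)⟩
  rw [← intervalIntegral.integral_add_adjacent_intervals (hii 0 (π / 6)) (hii (π / 6) (π / 2))]
  have hI1 : π / 6 * (2 / 5 * a * M) ≤ ∫ θ in 0..(π / 6), h θ := by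
    have e : π / 6 * (2 / 5 * a * M) = ∫ θ in (0 : ℝ)..(π / 6), 2 / 5 * a * M := by
      rw [intervalIntegral.integral_const]; simp
    rw [e]
    refine intervalIntegral.integral_mono_on (by positivity) (by simp) (hii _ _) fun θ hθ => ?_
    have hs0 : 0 ≤ sin θ := sin_nonneg_of_nonneg_of_le_pi hθ.1 (by linarith [hθ.2])
    have hs1 : sin θ ≤ 1 / 2 := by
      rw [← sin_pi_div_six]
      exact sin_le_sin_of_le_of_le_pi_div_two (by linarith [hθ.1]) (by linarith) hθ.2
    have hc : 0 < cos θ := cos_pos_of_mem_Ioo ⟨by linarith [hθ.1], by linarith [hθ.2]⟩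
    refine le_trans ?_ (compare_angle hm hq hs hD hK hsym hpsd hGd ha hga hc hs0)
    have h1 : (1 : ℝ) / 2 ≤ (1 - sin θ) / cos θ := by
      rw [le_div_iff₀ hc]; linarith [cos_le_one θ]
    have : 0 ≤ a * M := by positivity
    nlinarith
  have hI2 : 0 ≤ ∫ θ in (π / 6)..(π / 2), h θ := by
    have e : (0 : ℝ) = ∫ θ in (π / 6)..(π / 2), (0 : ℝ) := by simp
    rw [e]
    refine intervalIntegral.integral_mono_on_of_le_Ioo (by linarith) (by simp) (hii _ _)
      fun θ hθ => ?_
    have hs0 : 0 ≤ sin θ := sin_nonneg_of_nonneg_of_le_pi (by linarith [hθ.1]) (by linarith [hθ.2])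
    have hc : 0 < cos θ := cos_pos_of_mem_Ioo ⟨by linarith [hθ.1], by linarith [hθ.2]⟩
    have := compare_angle hm hq hs hD hK hsym hpsd MeasurableSet.univ le_rfl (fun y _ v => by
      simpa using hpsd y v) hc hs0
    simpa using this
  have : 0 ≤ a * M := by positivity
  nlinarith

end Comparison

/-! ### Fourth moments of Gaussian vectors -/

section Wick

variable {E : Type*} [NormedAddCommGroup E] [InnerProductSpace ℝ E] [FiniteDimensional ℝ E]
  [MeasurableSpace E] [BorelSpace E]

lemma polyBdd_inner_left (a : E) : PolyBdd fun x : E => ⟪x, a⟫ := by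
  simpa [real_inner_comm] using PolyBdd.clm (innerSL ℝ a)

/-- Wick's formula for four linear forms. -/
lemma wick4 (a b c d : E) : ∫ x, ⟪x, a⟫ * (⟪x, b⟫ * (⟪x, c⟫ * ⟪x, d⟫)) ∂gau E =
    ⟪a, b⟫ * ⟪c, d⟫ + ⟪a, c⟫ * ⟪b, d⟫ + ⟪a, d⟫ * ⟪b, c⟫ := by
  have hi : ∀ w x : E, HasFDerivAt (fun x : E => ⟪x, w⟫) (innerSL ℝ w) x := fun w x => by
    have := (innerSL ℝ w).hasFDerivAt (x := x)
    simpa [Function.comp_def, real_inner_comm] using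
      this.congr_of_eventuallyEq (Filter.Eventually.of_forall fun y => (real_inner_comm y w).symm)
  have hd : ∀ x : E, HasFDerivAt (fun x : E => ⟪x, b⟫ * (⟪x, c⟫ * ⟪x, d⟫))
      (⟪x, b⟫ • (⟪x, c⟫ • innerSL ℝ d + ⟪x, d⟫ • innerSL ℝ c) + (⟪x, c⟫ * ⟪x, d⟫) • innerSL ℝ b) x :=
    fun x => (hi b x).mul ((hi c x).mul (hi d x))
  have pb := polyBdd_inner_left b
  have pc := polyBdd_inner_left c
  have pd := polyBdd_inner_left d
  have hp : PolyBdd (fderiv ℝ fun x : E => ⟪x, b⟫ * (⟪x, c⟫ * ⟪x, d⟫)) := by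
    have : (fderiv ℝ fun x : E => ⟪x, b⟫ * (⟪x, c⟫ * ⟪x, d⟫)) = fun x =>
      ⟪x, b⟫ • (⟪x, c⟫ • innerSL ℝ d + ⟪x, d⟫ • innerSL ℝ c) + (⟪x, c⟫ * ⟪x, d⟫) • innerSL ℝ b :=
      funext fun x => (hd x).fderiv
    rw [this]
    have hsm : ∀ {f : E → ℝ} {g : E → E →L[ℝ] ℝ}, PolyBdd f → PolyBdd g →
        PolyBdd fun x => f x • g x := fun hf hg => hf.of_le_mul hg fun x => (norm_smul _ _).le
    exact (hsm pb ((hsm pc (PolyBdd.const _)).add (hsm pd (PolyBdd.const _)))).add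
      (hsm (pc.mul pd) (PolyBdd.const _))
  have h := stein (F := fun x : E => ⟪x, b⟫ * (⟪x, c⟫ * ⟪x, d⟫))
    ((contDiff_id.inner ℝ contDiff_const).mul
      ((contDiff_id.inner ℝ contDiff_const).mul (contDiff_id.inner ℝ contDiff_const))) hp a
  rw [show (fun x : E => ⟪x, a⟫ * (⟪x, b⟫ * (⟪x, c⟫ * ⟪x, d⟫))) = _ from rfl, h]
  have e : ∀ x : E, fderiv ℝ (fun x : E => ⟪x, b⟫ * (⟪x, c⟫ * ⟪x, d⟫)) x a =
      ⟪a, d⟫ * (⟪x, b⟫ * ⟪x, c⟫) + ⟪a, c⟫ * (⟪x, b⟫ * ⟪x, d⟫) + ⟪a, b⟫ * (⟪x, c⟫ * ⟪x, d⟫) := by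
    intro x
    rw [(hd x).fderiv]
    simp only [add_apply, smul_apply, innerSL_apply_apply, smul_eq_mul, real_inner_comm a]
    ring
  simp only [e]
  have i2 : ∀ u v : E, Integrable (fun x => ⟪x, u⟫ * ⟪x, v⟫) (gau E) := fun u v =>
    ((polyBdd_inner_left u).mul (polyBdd_inner_left v)).integrable
      (Continuous.aestronglyMeasurable (by fun_prop))
  have j1 : Integrable (fun x => ⟪a, d⟫ * (⟪x, b⟫ * ⟪x, c⟫)) (gau E) := (i2 b c).const_mul _
  have j2 : Integrable (fun x => ⟪a, c⟫ * (⟪x, b⟫ * ⟪x, d⟫)) (gau E) := (i2 b d).const_mul _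
  have j3 : Integrable (fun x => ⟪a, b⟫ * (⟪x, c⟫ * ⟪x, d⟫)) (gau E) := (i2 c d).const_mul _
  have j12 : Integrable (fun x => ⟪a, d⟫ * (⟪x, b⟫ * ⟪x, c⟫) + ⟪a, c⟫ * (⟪x, b⟫ * ⟪x, d⟫)) (gau E) :=
    j1.add j2
  rw [integral_add j12 j3, integral_add j1 j2, integral_const_mul, integral_const_mul,
    integral_const_mul, integral_inner_inner_gau, integral_inner_inner_gau,
    integral_inner_inner_gau]
  ring

/-- An elementary minorant of `|s|` with computable Gaussian mean. -/
lemma abs_minorant {lam s : ℝ} (hlam : 0 < lam) (hs : 0 ≤ s) :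
    s ^ 2 - s ^ 4 / (3 * lam ^ 2) ≤ 2 / 3 * lam * s := by
  have h : 2 / 3 * lam * s - (s ^ 2 - s ^ 4 / (3 * lam ^ 2)) =
      s * (s - lam) ^ 2 * (s + 2 * lam) / (3 * lam ^ 2) := by
    field_simp; ring
  have : 0 ≤ s * (s - lam) ^ 2 * (s + 2 * lam) / (3 * lam ^ 2) := by positivity
  linarith

lemma norm_le_abs_moment (w : E) : 1 / 2 * ‖w‖ ≤ ∫ x, |⟪x, w⟫| ∂gau E := by
  rcases (norm_nonneg w).eq_or_lt with h0 | h0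
  · rw [← h0, mul_zero]; exact integral_nonneg fun x => abs_nonneg _
  have pw := polyBdd_inner_left w
  have i1 : Integrable (fun x => |⟪x, w⟫|) (gau E) :=
    pw.norm.integrable (Continuous.aestronglyMeasurable (by fun_prop))
  have i2 : Integrable (fun x => ⟪x, w⟫ ^ 2) (gau E) :=
    (pw.pow 2).integrable (Continuous.aestronglyMeasurable (by fun_prop))
  have i4 : Integrable (fun x => ⟪x, w⟫ ^ 4 / (3 * (2 * ‖w‖) ^ 2)) (gau E) :=
    ((pw.pow 4).integrable (Continuous.aestronglyMeasurable (by fun_prop))).div_const _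
  have h := integral_mono (i2.sub i4) (i1.const_mul (2 / 3 * (2 * ‖w‖))) fun x => by
    have := abs_minorant (lam := 2 * ‖w‖) (by positivity) (abs_nonneg ⟪x, w⟫)
    rwa [sq_abs, show |⟪x, w⟫| ^ 4 = ⟪x, w⟫ ^ 4 from Even.pow_abs (by decide) _] at this
  rw [integral_sub' i2 i4, integral_const_mul, integral_div] at h
  have e2 : ∫ x, ⟪x, w⟫ ^ 2 ∂gau E = ‖w‖ ^ 2 := by
    rw [← real_inner_self_eq_norm_sq, ← integral_inner_inner_gau]; simp only [sq]
  have e4 : ∫ x, ⟪x, w⟫ ^ 4 ∂gau E = 3 * ‖w‖ ^ 4 := by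
    have := wick4 w w w w
    rw [real_inner_self_eq_norm_sq] at this
    rw [show 3 * ‖w‖ ^ 4 = ‖w‖ ^ 2 * ‖w‖ ^ 2 + ‖w‖ ^ 2 * ‖w‖ ^ 2 + ‖w‖ ^ 2 * ‖w‖ ^ 2 by ring, ← this]
    congr 1; ext x; ring
  rw [e2, e4] at h
  have h3 : ‖w‖ ^ 2 - 3 * ‖w‖ ^ 4 / (3 * (2 * ‖w‖) ^ 2) = 3 / 4 * ‖w‖ ^ 2 := by field_simp; ring
  rw [h3] at h
  have h5 : ‖w‖ * (9 / 16 * ‖w‖) ≤ ‖w‖ * ∫ x, |⟪x, w⟫| ∂gau E := by linarith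
  have := le_of_mul_le_mul_left h5 h0
  linarith

end Wick

section Radius

variable {n : ℕ}

/-- The radius is at most four times the Gaussian mean of the support function. -/
lemma norm_le_integral_sf {P : Finset (Euc n)} {x : Euc n} (hx : x ∈ P) :
    ‖x‖ ≤ 4 * ∫ z, sf P z ∂gau (Euc n) := by
  have i1 : Integrable (fun z => |⟪z, x⟫|) (gau (Euc n)) :=
    (polyBdd_inner_left x).norm.integrable (Continuous.aestronglyMeasurable (by fun_prop))
  have i0 : Integrable (fun z => ⟪z, x⟫) (gau (Euc n)) :=
    (polyBdd_inner_left x).integrable (Continuous.aestronglyMeasurable (by fun_prop))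
  have i2 : Integrable (fun z => |⟪z, x⟫| + ⟪z, x⟫) (gau (Euc n)) := i1.add i0
  have h : ∫ z, (|⟪z, x⟫| + ⟪z, x⟫) ∂gau (Euc n) ≤ ∫ z, 2 * sf P z ∂gau (Euc n) := by
    refine integral_mono i2 ((integrable_sf P).const_mul 2) fun z => ?_
    have h1 := le_sf hx z
    have h2 := sf_nonneg P z
    rw [real_inner_comm] at h1
    rcases abs_cases ⟪z, x⟫ with ⟨h, -⟩ | ⟨h, -⟩ <;> simp only [h] <;> linarith
  rw [integral_add i1 i0, integral_inner_gau, integral_const_mul] at h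
  have := norm_le_abs_moment x
  linarith

end Radius

/-! ### Mean widths of a body in good position and of its polar -/

section MeanWidth

variable {n : ℕ} {L : Set (Euc n)}

/-- Contracting the body towards one of its points `y` does not increase the partition function;
to first order this reads as follows. -/
lemma virial (hL : IsConvexBody L) (θ : Euc n) {y : Euc n} (hy : y ∈ L) :
    ∫ x, ⟪θ - x, y - x⟫ ∂tl (gm L) θ ≤ n := by
  have := tl_gm_prob hL θ
  set a := ∫ x, ⟪θ - x, y - x⟫ ∂tl (gm L) θ with ha
  set b := ∫ x, ‖y - x‖ ^ 2 ∂tl (gm L) θ with hb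
  have hb0 : 0 ≤ b := integral_nonneg fun x => by positivity
  have key : ∀ ε : ℝ, 0 < ε → ε ≤ 1 / 2 → a ≤ n + ε * (2 * n + b) := by
    intro ε h0 h1
    have hne : (1 - ε) ≠ 0 := by linarith
    set Φ : Euc n ≃ₗ[ℝ] Euc n := LinearEquiv.smulOfNeZero ℝ (Euc n) (1 - ε) hne with hΦ
    have hΦa : ∀ x, Φ x = (1 - ε) • x := fun x => rfl
    have hdet : LinearMap.det (Φ : Euc n →ₗ[ℝ] Euc n) = (1 - ε) ^ n := by
      have : (Φ : Euc n →ₗ[ℝ] Euc n) = (1 - ε) • LinearMap.id := by ext1 x; simp [hΦa]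
      rw [this, LinearMap.det_smul]; simp
    have hsub : (fun x => Φ x + ε • y) '' L ⊆ L := by
      rintro _ ⟨x, hx, rfl⟩
      change (1 - ε) • x + ε • y ∈ L
      exact hL.2.1 hx hy (show (0 : ℝ) ≤ 1 - ε by linarith) h0.le (by ring)
    have hmono : Real.log (pf ((fun x => Φ x + ε • y) '' L) θ) ≤ Real.log (pf L θ) := by
      refine Real.log_le_log (pf_pos (isConvexBody_affine hL Φ _) θ) ?_
      rw [pf_eq, pf_eq]
      exact setIntegral_mono_set (ContinuousOn.integrableOn_compact hL.1 (by fun_prop))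
        (Filter.Eventually.of_forall fun x => (Real.exp_pos _).le) hsub.eventuallyLE
    have h := (log_pf_affine hL Φ (ε • y) θ).trans hmono
    have e : ∀ x, ⟪θ, Φ x + ε • y - x⟫ - (‖Φ x + ε • y‖ ^ 2 - ‖x‖ ^ 2) / 2 =
        ε * ⟪θ - x, y - x⟫ - ε ^ 2 / 2 * ‖y - x‖ ^ 2 := by
      intro x
      have e1 : Φ x + ε • y = x + ε • (y - x) := by rw [hΦa]; module
      rw [e1, norm_add_sq_real, norm_smul, inner_smul_right, add_sub_cancel_left, inner_smul_right,
        inner_sub_left, mul_pow, Real.norm_eq_abs, sq_abs]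
      ring
    simp only [e] at h
    have i1 : Integrable (fun x => ε * ⟪θ - x, y - x⟫) (tl (gm L) θ) :=
      (tl_gm_integrable hL θ (by fun_prop)).const_mul _
    have i2 : Integrable (fun x => ε ^ 2 / 2 * ‖y - x‖ ^ 2) (tl (gm L) θ) :=
      (tl_gm_integrable hL θ (by fun_prop)).const_mul _
    rw [integral_sub i1 i2, integral_const_mul, integral_const_mul, hdet,
      abs_of_nonneg (by have : 0 ≤ 1 - ε := by linarith
                        positivity), Real.log_pow] at h
    have hlog : -ε - 2 * ε ^ 2 ≤ Real.log (1 - ε) := by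
      have := Real.one_sub_inv_le_log_of_pos (show 0 < 1 - ε by linarith)
      have h2 : -ε - 2 * ε ^ 2 ≤ 1 - (1 - ε)⁻¹ := by
        rw [show 1 - (1 - ε)⁻¹ = -ε / (1 - ε) by field_simp; ring, le_div_iff₀ (by linarith)]
        nlinarith [mul_nonneg (sq_nonneg ε) (sub_nonneg.2 h1)]
      linarith
    have hn : (0 : ℝ) ≤ n := Nat.cast_nonneg n
    have h2 : (n : ℝ) * (-ε - 2 * ε ^ 2) ≤ n * Real.log (1 - ε) := mul_le_mul_of_nonneg_left hlog hn
    have h3 : ε * a ≤ ε * (n + ε * (2 * n + b)) := by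
      have : 0 ≤ ε ^ 2 * b := by positivity
      nlinarith
    exact le_of_mul_le_mul_left h3 h0
  have hn : (0 : ℝ) ≤ n := Nat.cast_nonneg n
  refine le_of_forall_pos_le_add fun δ hδ => ?_
  refine (key (min (1 / 2) (δ / (2 * n + b + 1))) (by positivity) (min_le_left _ _)).trans ?_
  have h1 : min (1 / 2) (δ / (2 * n + b + 1)) ≤ δ / (2 * n + b + 1) := min_le_right _ _
  have h2 : min (1 / 2) (δ / (2 * n + b + 1)) * (2 * n + b) ≤ δ / (2 * n + b + 1) * (2 * n + b + 1) := by
    exact mul_le_mul h1 (by linarith) (by positivity) (by positivity)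
  rw [div_mul_cancel₀ _ (by positivity)] at h2
  linarith

lemma virial_bary (hL : IsConvexBody L) (θ : Euc n) {y : Euc n} (hy : y ∈ L) :
    ⟪θ - bary (gm L) θ, y - bary (gm L) θ⟫ ≤ n := by
  have := tl_gm_prob hL θ
  have := gm_finite hL.1
  have := gm_neZero hL.2.2
  obtain ⟨R, -, -, hR⟩ := gm_bdd hL
  set M := bary (gm L) θ with hM
  refine le_trans ?_ (virial hL θ hy)
  have e : ∀ x, ⟪θ - x, y - x⟫ =
      (⟪θ - M, y - M⟫ - ⟪x - M, (θ - M) + (y - M)⟫) + ‖x - M‖ ^ 2 := by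
    intro x
    rw [show θ - x = (θ - M) - (x - M) by abel, show y - x = (y - M) - (x - M) by abel,
      inner_sub_left, inner_sub_right (θ - M) (y - M), inner_sub_right (x - M) (y - M),
      real_inner_self_eq_norm_sq, inner_add_right, real_inner_comm (x - M) (θ - M)]
    ring
  rw [integral_congr_ae (Filter.Eventually.of_forall e)]
  have i1 : Integrable (fun x => ⟪x - M, (θ - M) + (y - M)⟫) (tl (gm L) θ) :=
    tl_gm_integrable hL θ (by fun_prop)
  have i2 : Integrable (fun x => ‖x - M‖ ^ 2) (tl (gm L) θ) :=
    tl_gm_integrable hL θ (by fun_prop)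
  have i3 : Integrable (fun x => ⟪θ - M, y - M⟫ - ⟪x - M, (θ - M) + (y - M)⟫) (tl (gm L) θ) :=
    (integrable_const _).sub i1
  rw [integral_add i3 i2, integral_sub (integrable_const _) i1, integral_centred hR θ]
  have : 0 ≤ ∫ x, ‖x - M‖ ^ 2 ∂tl (gm L) θ := integral_nonneg fun x => by positivity
  simp only [integral_const, probReal_univ, one_smul, sub_zero]
  linarith

lemma bary_mem (hL : IsConvexBody L) (θ : Euc n) : bary (gm L) θ ∈ L := by
  have := gm_finite hL.1
  have := gm_neZero hL.2.2
  have := tl_gm_prob hL θ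
  exact hL.2.1.integral_mem hL.1.isClosed (tl_ae (gm_ae hL.1) θ) (tl_gm_integrable hL θ continuous_id)

lemma mbar_mem (hL : IsConvexBody L) (r : ℝ) : mbar L r ∈ L :=
  hL.2.1.integral_mem hL.1.isClosed (Filter.Eventually.of_forall fun z => bary_mem hL (r • z))
    (integrable_bary hL r)

/-- The event that the tilted covariance is close to its mean. -/
def goodSet (L : Set (Euc n)) (r : ℝ) : Set (Euc n) := {z | ‖cov L (r • z) - mcov L r‖ ≤ 1 / 8}

lemma measurableSet_goodSet (hL : IsConvexBody L) (r : ℝ) : MeasurableSet (goodSet L r) := by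
  have := (contDiff_cov hL).continuous
  exact (isClosed_le (by fun_prop) continuous_const).measurableSet

lemma goodSet_compl (hL : IsConvexBody L) (hn : 2 ≤ n) {r : ℝ} (hr : 0 ≤ r)
    (hr2 : r * √(Real.log (n + 1)) ≤ 1 / 1760) : (gau (Euc n)).real (goodSet L r)ᶜ ≤ 1 / 10 := by
  have hc := (contDiff_cov hL).continuous
  have h := mul_meas_ge_le_integral_of_nonneg (μ := gau (Euc n))
    (f := fun z => ‖cov L (r • z) - mcov L r‖) (Filter.Eventually.of_forall fun z => norm_nonneg _)
    ((integrable_cov hL r).sub (integrable_const _)).norm (1 / 8)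
  have h2 := cov_concentration hL hn hr
  have h3 : (gau (Euc n)).real (goodSet L r)ᶜ ≤
      (gau (Euc n)).real {z | 1 / 8 ≤ ‖cov L (r • z) - mcov L r‖} := by
    refine measureReal_mono fun z hz => ?_
    simp only [goodSet, Set.mem_compl_iff, Set.mem_ofPred_eq, not_le] at hz ⊢
    exact hz.le
  linarith

lemma form_near {S T : Euc n →L[ℝ] Euc n} (h : ‖S - T‖ ≤ 1 / 8) (v : Euc n) :
    |⟪S v, v⟫ - ⟪T v, v⟫| ≤ 1 / 8 * ‖v‖ ^ 2 := by
  rw [← inner_sub_left, ← sub_apply]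
  refine (abs_real_inner_le_norm _ _).trans ?_
  rw [sq, ← mul_assoc]
  gcongr
  exact (S - T).le_of_opNorm_le h v

lemma hasFDerivAt_bary_smul (hL : IsConvexBody L) (r : ℝ) (z : Euc n) :
    HasFDerivAt (fun z : Euc n => bary (gm L) (r • z)) (r • cov L (r • z)) z := by
  have h2 : HasFDerivAt (fun z : Euc n => r • z) (r • ContinuousLinearMap.id ℝ (Euc n)) z :=
    (hasFDerivAt_id z).const_smul r
  refine ((hasFDerivAt_bary hL (r • z)).comp z h2).congr_fderiv ?_
  ext1 v
  simp

lemma contDiff_bary_smul (hL : IsConvexBody L) (r : ℝ) :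
    ContDiff ℝ 1 (fun z : Euc n => bary (gm L) (r • z)) :=
  (contDiff_bary_gm hL 1).comp (contDiff_const_smul r)

/-- The mean width of the polar body: `z ↦ b_L(r z)` takes values in `L`, and by `comparison` it
dominates a multiple of the Gaussian vector. -/
lemma polar_width (hL : IsConvexBody L) (hn : 2 ≤ n) {r : ℝ} (hr : 0 < r)
    (hr2 : r * √(Real.log (n + 1)) ≤ 1 / 1760)
    (hcov : ∀ w, 3 / 8 * ‖w‖ ^ 2 ≤ ⟪mcov L r w, w⟫) (Q : Finset (Euc n))
    (hQ : ∀ q ∈ Q, ∀ x ∈ L, ⟪q, x - mbar L r⟫ ≤ 1) :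
    ∫ z, sf Q z ∂gau (Euc n) ≤ 20 / r := by
  have hd : ∀ z, fderiv ℝ (fun z : Euc n => bary (gm L) (r • z) - mbar L r) z = r • cov L (r • z) :=
    fun z => ((hasFDerivAt_bary_smul hL r z).sub_const _).fderiv
  have h := comparison Q (F := fun z : Euc n => bary (gm L) (r • z) - mbar L r)
    ((contDiff_bary_smul hL r).sub contDiff_const) (K := r)
    (fun y => by
      rw [hd]; refine (ContinuousLinearMap.opNorm_smul_le _ _).trans ?_
      rw [Real.norm_of_nonneg hr.le]
      exact mul_le_of_le_one_right hr.le (cov_norm_le hL _))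
    (fun y a b => by
      rw [hd]; simp only [smul_apply, real_inner_smul_left, real_inner_smul_right, cov_symm hL])
    (fun y v => by
      rw [hd]; simp only [smul_apply, real_inner_smul_left]
      exact mul_nonneg hr.le (cov_nonneg hL _ _))
    (by rw [integral_sub (integrable_bary hL r) (integrable_const _)]; simp [mbar])
    (measurableSet_goodSet hL r) (a := r / 4) (by positivity)
    (fun y hy v => by
      rw [hd]; simp only [smul_apply, real_inner_smul_left]
      have h1 := abs_le.1 (form_near hy v)
      have h2 := hcov v
      rw [div_mul_eq_mul_div, mul_div_assoc]
      exact mul_le_mul_of_nonneg_left (by linarith [h1.1]) hr.le)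
    (goodSet_compl hL hn hr.le hr2)
  have h1 : ∫ z, sf Q (bary (gm L) (r • z) - mbar L r) ∂gau (Euc n) ≤ ∫ z, 1 ∂gau (Euc n) := by
    refine integral_mono_of_nonneg (Filter.Eventually.of_forall fun z => sf_nonneg _ _)
      (integrable_const _) (Filter.Eventually.of_forall fun z => ?_)
    exact sf_le zero_le_one fun q hq => hQ q hq _ (bary_mem hL _)
  simp only [integral_const, probReal_univ, one_smul] at h1
  rw [le_div_iff₀ hr]
  linarith

/-- The mean width of the body: by `comparison` it suffices to bound the support function at
`r z - b_L(r z)`, which `virial_bary` does. -/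
lemma body_width (hL : IsConvexBody L) (hn : 2 ≤ n) {r : ℝ} (hr : 0 < r) (hr1 : r ≤ 1)
    (hr2 : r * √(Real.log (n + 1)) ≤ 1 / 1760) (hm : ‖mbar L r‖ ≤ r / 160)
    (hcov : ∀ w, ⟪mcov L r w, w⟫ ≤ 5 / 8 * ‖w‖ ^ 2) (P : Finset (Euc n))
    (hP : ∀ p ∈ P, p + mbar L r ∈ L) :
    ∫ z, sf P z ∂gau (Euc n) ≤ 80 * n / r := by
  set m := mbar L r with hmdef
  have hd : ∀ z, fderiv ℝ (fun z : Euc n => r • z - (bary (gm L) (r • z) - m)) z =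
      r • (ContinuousLinearMap.id ℝ (Euc n) - cov L (r • z)) := fun z => by
    rw [smul_sub]
    exact (((hasFDerivAt_id z).const_smul r).sub
      ((hasFDerivAt_bary_smul hL r z).sub_const m)).fderiv
  have ib := integrable_bary hL r
  have iz : Integrable (fun z : Euc n => r • z) (gau (Euc n)) :=
    (PolyBdd.id.integrable (Continuous.aestronglyMeasurable (by fun_prop))).smul r
  have hid : ∫ z : Euc n, z ∂gau (Euc n) = 0 := by
    refine ext_inner_right ℝ fun w => ?_
    have iid : Integrable (fun z : Euc n => z) (gau (Euc n)) :=
      PolyBdd.id.integrable (Continuous.aestronglyMeasurable (by fun_prop))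
    rw [inner_zero_left, real_inner_comm, ← integral_inner iid w, ← integral_inner_gau w]
    exact integral_congr_ae (Filter.Eventually.of_forall fun x => real_inner_comm _ _)
  have h := comparison P (F := fun z : Euc n => r • z - (bary (gm L) (r • z) - m))
    ((contDiff_const_smul r).sub ((contDiff_bary_smul hL r).sub contDiff_const)) (K := r * 2)
    (fun y => by
      rw [hd]; refine (ContinuousLinearMap.opNorm_smul_le _ _).trans ?_
      rw [Real.norm_of_nonneg hr.le]
      refine mul_le_mul_of_nonneg_left ((norm_sub_le _ _).trans ?_) hr.le
      linarith [cov_norm_le hL (r • y), ContinuousLinearMap.norm_id_le (𝕜 := ℝ) (E := Euc n)])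
    (fun y a b => by
      rw [hd]; simp only [smul_apply, sub_apply, real_inner_smul_left, real_inner_smul_right,
        inner_sub_left, inner_sub_right, ContinuousLinearMap.id_apply, cov_symm hL])
    (fun y v => by
      rw [hd]; simp only [smul_apply, sub_apply, real_inner_smul_left, inner_sub_left,
        ContinuousLinearMap.id_apply, real_inner_self_eq_norm_sq]
      exact mul_nonneg hr.le (by linarith [cov_le hL (r • y) v]))
    (by
      have i2 : Integrable (fun z => bary (gm L) (r • z) - m) (gau (Euc n)) :=
        ib.sub (integrable_const _)
      rw [integral_sub iz i2, integral_sub ib (integrable_const _), integral_smul, hid]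
      simp [hmdef, mbar])
    (measurableSet_goodSet hL r) (a := r / 4) (by positivity)
    (fun y hy v => by
      rw [hd]; simp only [smul_apply, sub_apply, real_inner_smul_left, inner_sub_left,
        ContinuousLinearMap.id_apply, real_inner_self_eq_norm_sq]
      have h1 := abs_le.1 (form_near hy v)
      have h2 := hcov v
      rw [div_mul_eq_mul_div, mul_div_assoc]
      exact mul_le_mul_of_nonneg_left (by linarith [h1.2]) hr.le)
    (goodSet_compl hL hn hr.le hr2)
  set W := ∫ z, sf P z ∂gau (Euc n) with hW
  have hW0 : 0 ≤ W := integral_sf_nonneg P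
  set N : Euc n → ℝ := fun z => ⟪bary (gm L) (r • z) - m, r • z - bary (gm L) (r • z)⟫ with hN
  have pb := polyBdd_bary hL r
  have cb := continuous_bary hL r
  have pz : PolyBdd fun z : Euc n => r • z := PolyBdd.clm (r • ContinuousLinearMap.id ℝ (Euc n))
  have iN : Integrable N (gau (Euc n)) :=
    ((pb.sub (PolyBdd.const m)).of_le_mul (pz.sub pb) fun z => norm_inner_le_norm _ _).integrable
      (Continuous.aestronglyMeasurable (by fun_prop))
  have hpt : ∀ z, sf P (r • z - (bary (gm L) (r • z) - m)) ≤ (n + N z) + 4 * W * ‖m‖ := by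
    intro z
    have key : ∀ p, p + m ∈ L → ‖p‖ ≤ 4 * W →
        ⟪p, r • z - (bary (gm L) (r • z) - m)⟫ ≤ (n + N z) + 4 * W * ‖m‖ := by
      intro p hp hpW
      have h1 := virial_bary hL (r • z) hp
      have h2 : ⟪p, m⟫ ≤ 4 * W * ‖m‖ := (real_inner_le_norm _ _).trans (by gcongr)
      have h3 : ⟪p, r • z - (bary (gm L) (r • z) - m)⟫ =
          ⟪r • z - bary (gm L) (r • z), p + m - bary (gm L) (r • z)⟫ + N z + ⟪p, m⟫ := by
        rw [hN]
        set b := bary (gm L) (r • z)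
        have e1 : p + m - b = p - (b - m) := by abel
        have e2 : r • z - (b - m) = (r • z - b) + m := by abel
        simp only [e1, e2]
        rw [inner_add_right, inner_sub_right (r • z - b), real_inner_comm (r • z - b) p,
          real_inner_comm (r • z - b) (b - m)]
        ring
      linarith
    refine sf_le ?_ fun p hp => key p (hP p hp) (norm_le_integral_sf hp)
    have := key 0 (by rw [zero_add]; exact mbar_mem hL r) (by rw [norm_zero]; positivity)
    rwa [inner_zero_left] at this
  have hNE : ∫ z, N z ∂gau (Euc n) ≤ n := by
    set e := EuclideanSpace.basisFun (Fin n) ℝ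
    have hb : ∀ z : Euc n, N z ≤ (∑ i, r * (⟪z, e i⟫ * ⟪bary (gm L) (r • z), e i⟫)) - r * ⟪z, m⟫
        - (⟪bary (gm L) (r • z), m⟫ - ‖m‖ ^ 2) := by
      intro z
      set b := bary (gm L) (r • z)
      have e1 : N z = ⟪r • z, b⟫ - ⟪r • z, m⟫ - ‖b - m‖ ^ 2 - (⟪b, m⟫ - ‖m‖ ^ 2) := by
        change ⟪b - m, r • z - b⟫ = _
        have : r • z - b = r • z - (b - m) - m := by abel
        rw [this, inner_sub_right, inner_sub_right, real_inner_self_eq_norm_sq, inner_sub_left,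
          inner_sub_left, real_inner_self_eq_norm_sq, real_inner_comm b (r • z),
          real_inner_comm m (r • z)]
      have e2 : ⟪r • z, b⟫ = ∑ i, r * (⟪z, e i⟫ * ⟪b, e i⟫) := by
        rw [real_inner_smul_left, ← e.sum_inner_mul_inner z b, Finset.mul_sum]
        simp only [real_inner_comm b]
      rw [e1, e2, real_inner_smul_left]
      nlinarith [sq_nonneg ‖b - m‖]
    have is : ∀ i, Integrable (fun z => r * (⟪z, e i⟫ * ⟪bary (gm L) (r • z), e i⟫)) (gau (Euc n)) :=
      fun i => (((polyBdd_inner_left (e i)).mul (pb.of_le_mul (PolyBdd.const (e i)) fun z =>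
        norm_inner_le_norm _ _)).integrable (Continuous.aestronglyMeasurable (by fun_prop))).const_mul r
    have i1 : Integrable (fun z => ∑ i, r * (⟪z, e i⟫ * ⟪bary (gm L) (r • z), e i⟫)) (gau (Euc n)) :=
      integrable_finsetSum _ fun i _ => is i
    have i2 : Integrable (fun z => r * ⟪z, m⟫) (gau (Euc n)) :=
      ((polyBdd_inner_left m).integrable (Continuous.aestronglyMeasurable (by fun_prop))).const_mul r
    have i3' : Integrable (fun z => ⟪bary (gm L) (r • z), m⟫) (gau (Euc n)) :=
      (pb.of_le_mul (PolyBdd.const m) fun z => norm_inner_le_norm _ _).integrable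
        (Continuous.aestronglyMeasurable (by fun_prop))
    have i3 : Integrable (fun z => ⟪bary (gm L) (r • z), m⟫ - ‖m‖ ^ 2) (gau (Euc n)) :=
      i3'.sub (integrable_const _)
    have i12 : Integrable (fun z => (∑ i, r * (⟪z, e i⟫ * ⟪bary (gm L) (r • z), e i⟫)) - r * ⟪z, m⟫)
      (gau (Euc n)) := i1.sub i2
    have i123 : Integrable (fun z => (∑ i, r * (⟪z, e i⟫ * ⟪bary (gm L) (r • z), e i⟫)) - r * ⟪z, m⟫
        - (⟪bary (gm L) (r • z), m⟫ - ‖m‖ ^ 2)) (gau (Euc n)) := i12.sub i3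
    refine (integral_mono iN i123 hb).trans ?_
    rw [integral_sub i12 i3, integral_sub i1 i2, integral_sub i3' (integrable_const _),
      integral_finsetSum _ (fun i _ => is i), integral_const_mul, integral_inner_gau, inner_mbar hL]
    simp only [integral_const_mul, stein_bary hL hr.le, integral_const, probReal_univ, one_smul]
    rw [← hmdef, real_inner_self_eq_norm_sq, mul_zero, sub_zero, sub_self, sub_zero]
    calc ∑ i, r * (r * ⟪mcov L r (e i), e i⟫) ≤ ∑ i : Fin n, (1 : ℝ) := by
          refine Finset.sum_le_sum fun i _ => ?_
          have h1 := hcov (e i)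
          rw [e.orthonormal.1 i] at h1
          have h2 : r * r ≤ 1 := by nlinarith
          have h3 : r * r * ⟪mcov L r (e i), e i⟫ ≤ r * r * 1 :=
            mul_le_mul_of_nonneg_left (by linarith) (by positivity)
          linarith
      _ = n := by simp
  have h4 : ∫ z, sf P (r • z - (bary (gm L) (r • z) - m)) ∂gau (Euc n) ≤ 2 * n + 4 * W * ‖m‖ := by
    have i5 : Integrable (fun z => (n : ℝ) + N z) (gau (Euc n)) := (integrable_const _).add iN
    have i6 : Integrable (fun z => ((n : ℝ) + N z) + 4 * W * ‖m‖) (gau (Euc n)) :=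
      i5.add (integrable_const _)
    refine (integral_mono_of_nonneg (Filter.Eventually.of_forall fun z => sf_nonneg _ _)
      i6 (Filter.Eventually.of_forall hpt)).trans ?_
    rw [integral_add i5 (integrable_const _), integral_add (integrable_const _) iN]
    simp only [integral_const, probReal_univ, one_smul]
    linarith
  have h5 : 4 * W * ‖m‖ ≤ 4 * W * (r / 160) := mul_le_mul_of_nonneg_left hm (by positivity)
  rw [le_div_iff₀ hr]
  linarith

end MeanWidth

/-- Every convex body has an affine image containing the origin for which the Gaussian mean widths
of the image and of its polar are at most `4 n A` and `A`, with `A` of order `√(log (n + 1))`. -/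
lemma exists_good_position {n : ℕ} (hn : 2 ≤ n) {K : Set (Euc n)} (hK : IsConvexBody K) :
    ∃ (T : Euc n ≃ₗ[ℝ] Euc n) (v : Euc n), IsConvexBody ((fun x => T x + v) '' K) ∧
      0 ∈ (fun x => T x + v) '' K ∧
      (∀ Q : Finset (Euc n), (∀ q ∈ Q, ∀ x ∈ (fun x => T x + v) '' K, ⟪q, x⟫ ≤ 1) →
        ∫ z, sf Q z ∂gau (Euc n) ≤ 35200 * √(Real.log (n + 1))) ∧
      (∀ P : Finset (Euc n), (∀ p ∈ P, p ∈ (fun x => T x + v) '' K) →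
        ∫ z, sf P z ∂gau (Euc n) ≤ 4 * n * (35200 * √(Real.log (n + 1)))) := by
  have hn' : (2 : ℝ) ≤ n := by exact_mod_cast hn
  have hlog : 1 ≤ Real.log (n + 1) := by
    rw [Real.le_log_iff_exp_le (by linarith)]
    linarith [Real.exp_one_lt_d9]
  set s := √(Real.log (n + 1)) with hs
  have hs1 : 1 ≤ s := by rw [hs]; exact Real.one_le_sqrt.2 hlog
  set r := 1 / (1760 * s) with hr
  have hr0 : 0 < r := by positivity
  have hrs : r * s = 1 / 1760 := by rw [hr]; field_simp
  have hr1 : r ≤ 1 / 1760 := by rw [← hrs]; nlinarith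
  obtain ⟨T, v, hL, hm, hc⟩ := exists_position hK (r := r) (η := r / 1000) hr0.le (by linarith)
    (by positivity) (by linarith)
  set L := (fun x => T x + v) '' K with hLdef
  set m := mbar L r with hmdef
  have hm' : ‖m‖ ≤ r / 160 := by
    refine le_of_sq_le_sq ?_ (by positivity)
    nlinarith [sq_nonneg r]
  have himg : ∀ x, x ∈ (fun x => T x + (v - m)) '' K ↔ x + m ∈ L := by
    intro x
    constructor
    · rintro ⟨y, hy, rfl⟩
      exact ⟨y, hy, by simp only; abel⟩
    · rintro ⟨y, hy, h⟩
      refine ⟨y, hy, ?_⟩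
      simp only at h ⊢
      rw [← add_sub_assoc, h, add_sub_cancel_right]
  refine ⟨T, v - m, isConvexBody_affine hK T _, ?_, ?_, ?_⟩
  · rw [himg, zero_add]; exact mbar_mem hL r
  · intro Q hQ
    have := polar_width hL hn hr0 hrs.le (fun w => (hc w).1) Q fun q hq x hx =>
      hQ q hq _ ((himg _).2 (by rwa [sub_add_cancel]))
    refine this.trans (le_of_eq ?_)
    rw [hr]; field_simp; norm_num
  · intro P hP
    have := body_width hL hn hr0 (by linarith) hrs.le hm' (fun w => (hc w).2) P fun p hp =>
      (himg _).1 (hP p hp)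
    refine this.trans (le_of_eq ?_)
    rw [hr]; field_simp; norm_num

/-! ### The Sudakov–Fernique comparison inequality -/

section SudakovFernique

variable {F : Type*} [NormedAddCommGroup F] [InnerProductSpace ℝ F] [FiniteDimensional ℝ F]
  [MeasurableSpace F] [BorelSpace F] {ι : Type*} [Fintype ι] [Nonempty ι]

/-- The Gibbs weights (soft-max) of the linear forms `⟪z, c i⟫`. -/
def smx (c : ι → F) (i : ι) (z : F) : ℝ := Real.exp ⟪z, c i⟫ / ∑ j, Real.exp ⟪z, c j⟫

lemma smx_den_pos (c : ι → F) (z : F) : 0 < ∑ j, Real.exp ⟪z, c j⟫ :=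
  Finset.sum_pos (fun _ _ => Real.exp_pos _) Finset.univ_nonempty

lemma smx_nonneg (c : ι → F) (i : ι) (z : F) : 0 ≤ smx c i z :=
  div_nonneg (Real.exp_pos _).le (smx_den_pos c z).le

lemma smx_sum (c : ι → F) (z : F) : ∑ i, smx c i z = 1 := by
  simp only [smx, ← Finset.sum_div]
  exact div_self (smx_den_pos c z).ne'

lemma smx_le_one (c : ι → F) (i : ι) (z : F) : smx c i z ≤ 1 := by
  rw [← smx_sum c z]
  exact Finset.single_le_sum (f := fun i => smx c i z) (fun j _ => smx_nonneg c j z) (Finset.mem_univ i)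

lemma contDiff_smx (c : ι → F) (i : ι) : ContDiff ℝ 1 (smx c i) := by
  have h : ∀ j, ContDiff ℝ 1 fun z : F => Real.exp ⟪z, c j⟫ := fun j =>
    Real.contDiff_exp.comp (contDiff_id.inner ℝ contDiff_const)
  exact (h i).div (ContDiff.sum fun j _ => h j) fun z => (smx_den_pos c z).ne'

lemma hasFDerivAt_smx (c : ι → F) (i : ι) (z : F) :
    HasFDerivAt (smx c i) (smx c i z • (innerSL ℝ (c i) - ∑ j, smx c j z • innerSL ℝ (c j))) z := by
  have hi : ∀ a : F, HasFDerivAt (fun x : F => ⟪x, a⟫) (innerSL ℝ a) z := fun a => by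
    refine ((innerSL ℝ a).hasFDerivAt (x := z)).congr_of_eventuallyEq ?_
    exact Filter.Eventually.of_forall fun x => real_inner_comm _ _
  have h : ∀ j, HasFDerivAt (fun z : F => Real.exp ⟪z, c j⟫) (Real.exp ⟪z, c j⟫ • innerSL ℝ (c j)) z :=
    fun j => (hi (c j)).exp
  have hs : HasFDerivAt (fun z : F => ∑ j, Real.exp ⟪z, c j⟫)
      (∑ j, Real.exp ⟪z, c j⟫ • innerSL ℝ (c j)) z := HasFDerivAt.fun_sum fun j _ => h j
  have hpos := smx_den_pos c z
  have hq := (h i).mul ((hasDerivAt_inv hpos.ne').comp_hasFDerivAt z hs)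
  refine HasFDerivAt.congr_fderiv (f := smx c i) hq ?_
  ext w
  set S := ∑ j, Real.exp ⟪z, c j⟫ with hS
  have e : ∑ j, smx c j z * ⟪c j, w⟫ = (∑ j, Real.exp ⟪z, c j⟫ * ⟪c j, w⟫) / S := by
    rw [Finset.sum_div]
    exact Finset.sum_congr rfl fun j _ => by rw [smx, div_mul_eq_mul_div]
  simp only [smul_apply, sub_apply, sum_apply, innerSL_apply_apply, smul_eq_mul, e,
    add_apply, Function.comp_apply]
  rw [smx, ← hS]
  field_simp
  ring

lemma norm_fderiv_smx_le (c : ι → F) {M : ℝ} (hM : ∀ i, ‖c i‖ ≤ M) (i : ι) (z : F) :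
    ‖fderiv ℝ (smx c i) z‖ ≤ 2 * M := by
  have hM0 : 0 ≤ M := (norm_nonneg _).trans (hM i)
  rw [(hasFDerivAt_smx c i z).fderiv, norm_smul, Real.norm_of_nonneg (smx_nonneg c i z)]
  have h1 : ‖∑ j, smx c j z • innerSL ℝ (c j)‖ ≤ M := by
    refine (norm_sum_le _ _).trans ?_
    calc ∑ j, ‖smx c j z • innerSL ℝ (c j)‖ ≤ ∑ j, smx c j z * M := Finset.sum_le_sum fun j _ => by
          rw [norm_smul, Real.norm_of_nonneg (smx_nonneg c j z), innerSL_apply_norm]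
          exact mul_le_mul_of_nonneg_left (hM j) (smx_nonneg c j z)
      _ = M := by rw [← Finset.sum_mul, smx_sum, one_mul]
  have h2 : ‖innerSL ℝ (c i) - ∑ j, smx c j z • innerSL ℝ (c j)‖ ≤ 2 * M := by
    refine (norm_sub_le _ _).trans ?_
    rw [innerSL_apply_norm]
    linarith [hM i]
  calc _ ≤ 1 * (2 * M) := mul_le_mul (smx_le_one c i z) h2 (norm_nonneg _) zero_le_one
    _ = _ := one_mul _

lemma stein_smx (c : ι → F) (i : ι) (w : F) :
    ∫ z, ⟪z, w⟫ * smx c i z ∂gau F =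
      ∫ z, smx c i z * (⟪w, c i⟫ - ∑ j, smx c j z * ⟪w, c j⟫) ∂gau F := by
  have hM : ∀ i, ‖c i‖ ≤ ∑ j, ‖c j‖ := fun i =>
    Finset.single_le_sum (f := fun j => ‖c j‖) (fun j _ => norm_nonneg _) (Finset.mem_univ i)
  rw [stein (contDiff_smx c i) (PolyBdd.of_bdd (f := fderiv ℝ (smx c i)) (norm_fderiv_smx_le c hM i)) w]
  refine integral_congr_ae (Filter.Eventually.of_forall fun z => ?_)
  simp only
  rw [(hasFDerivAt_smx c i z).fderiv]
  simp only [smul_apply, sub_apply, sum_apply, innerSL_apply_apply, smul_eq_mul,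
    real_inner_comm w]

lemma gibbs_form_nonneg {p : ι → ℝ} (hp : ∀ i, 0 ≤ p i) (hs : ∑ i, p i = 1) {D : ι → ι → ℝ}
    (hD : ∀ i j, 0 ≤ D i i + D j j - D i j - D j i) :
    0 ≤ ∑ i, p i * (D i i - ∑ j, p j * D i j) := by
  have h : 0 ≤ ∑ i, ∑ j, p i * p j * (D i i + D j j - D i j - D j i) :=
    Finset.sum_nonneg fun i _ => Finset.sum_nonneg fun j _ =>
      mul_nonneg (mul_nonneg (hp i) (hp j)) (hD i j)
  have e1 : ∑ i, ∑ j, p i * p j * D i i = ∑ i, p i * D i i := Finset.sum_congr rfl fun i _ => by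
    rw [← Finset.sum_mul, ← Finset.mul_sum, hs, mul_one]
  have e2 : ∑ i, ∑ j, p i * p j * D j j = ∑ i, p i * D i i := by
    rw [Finset.sum_comm]
    refine Finset.sum_congr rfl fun i _ => ?_
    rw [← Finset.sum_mul, ← Finset.sum_mul, hs, one_mul]
  have e3 : ∑ i, ∑ j, p i * p j * D j i = ∑ i, ∑ j, p i * p j * D i j := by
    rw [Finset.sum_comm]
    exact Finset.sum_congr rfl fun i _ => Finset.sum_congr rfl fun j _ => by ring
  have e4 : ∑ i, p i * (D i i - ∑ j, p j * D i j) = ∑ i, p i * D i i - ∑ i, ∑ j, p i * p j * D i j := by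
    rw [← Finset.sum_sub_distrib]
    refine Finset.sum_congr rfl fun i _ => ?_
    rw [mul_sub, Finset.mul_sum]
    simp only [mul_assoc]
  simp only [mul_sub, mul_add, Finset.sum_sub_distrib, Finset.sum_add_distrib, e1, e2, e3] at h
  rw [e4]; linarith

lemma lse_le (c : ι → F) {M : ℝ} (z : F) (hM : ∀ i, ⟪z, c i⟫ ≤ M) :
    Real.log (∑ j, Real.exp ⟪z, c j⟫) ≤ M + Real.log (Fintype.card ι) := by
  have hc : (0 : ℝ) < Fintype.card ι := by exact_mod_cast Fintype.card_pos
  rw [Real.log_le_iff_le_exp (smx_den_pos c z), Real.exp_add, Real.exp_log hc]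
  calc _ ≤ ∑ _j : ι, Real.exp M := Finset.sum_le_sum fun j _ => Real.exp_le_exp.2 (hM j)
    _ = _ := by rw [Finset.sum_const, Finset.card_univ, nsmul_eq_mul, mul_comm]

lemma le_lse (c : ι → F) (z : F) (i : ι) : ⟪z, c i⟫ ≤ Real.log (∑ j, Real.exp ⟪z, c j⟫) := by
  rw [Real.le_log_iff_exp_le (smx_den_pos c z)]
  exact Finset.single_le_sum (f := fun j => Real.exp ⟪z, c j⟫) (fun j _ => (Real.exp_pos _).le)
    (Finset.mem_univ i)

lemma integrable_lse (c : ι → F) :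
    Integrable (fun z => Real.log (∑ j, Real.exp ⟪z, c j⟫)) (gau F) := by
  have hM : ∀ i, ‖c i‖ ≤ ∑ j, ‖c j‖ := fun i =>
    Finset.single_le_sum (f := fun j => ‖c j‖) (fun j _ => norm_nonneg _) (Finset.mem_univ i)
  set M := ∑ j, ‖c j‖
  have hM0 : 0 ≤ M := Finset.sum_nonneg fun j _ => norm_nonneg _
  have hl : 0 ≤ Real.log (Fintype.card ι) := Real.log_natCast_nonneg _
  have hb : ∀ (z : F) i, |⟪z, c i⟫| ≤ M * ‖z‖ := fun z i =>
    (abs_real_inner_le_norm _ _).trans (by rw [mul_comm]; gcongr; exact hM i)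
  have hp : PolyBdd fun z : F => Real.log (∑ j, Real.exp ⟪z, c j⟫) := by
    refine ⟨M + Real.log (Fintype.card ι), 1, by positivity, fun z => ?_⟩
    rw [Real.norm_eq_abs, pow_one, abs_le]
    have h1 := lse_le c z fun i => (le_abs_self _).trans (hb z i)
    have h2 := (neg_abs_le _).trans (le_lse c z (Classical.arbitrary ι))
    have h3 := hb z (Classical.arbitrary ι)
    have h4 : 0 ≤ Real.log (Fintype.card ι) * ‖z‖ := by positivity
    constructor <;> nlinarith [norm_nonneg z]
  exact hp.integrable (Continuous.aestronglyMeasurable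
    (Continuous.log (by fun_prop) fun z => (smx_den_pos c z).ne'))

/-- Comparison of the smoothed maxima, along the path `cos φ • a i + sin φ • b i`: by Stein's
identity the derivative is an average of the differences of the squared increments. -/
lemma lse_comparison (a b : ι → F) (hab : ∀ i j, ⟪a i, b j⟫ = 0)
    (hle : ∀ i j, ‖a i - a j‖ ^ 2 ≤ ‖b i - b j‖ ^ 2) :
    ∫ z, Real.log (∑ j, Real.exp ⟪z, a j⟫) ∂gau F ≤ ∫ z, Real.log (∑ j, Real.exp ⟪z, b j⟫) ∂gau F := by
  set c : ℝ → ι → F := fun φ i => Real.cos φ • a i + Real.sin φ • b i with hc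
  set c' : ℝ → ι → F := fun φ i => -Real.sin φ • a i + Real.cos φ • b i with hc'
  set H : ℝ → ℝ := fun φ => ∫ z, Real.log (∑ j, Real.exp ⟪z, c φ j⟫) ∂gau F with hH
  set M := ∑ j, (‖a j‖ + ‖b j‖) with hM
  have hcM : ∀ φ i, ‖c' φ i‖ ≤ M := by
    intro φ i
    refine le_trans ?_ (Finset.single_le_sum (f := fun j => ‖a j‖ + ‖b j‖)
      (fun j _ => by positivity) (Finset.mem_univ i))
    refine (norm_add_le _ _).trans ?_
    rw [norm_smul, norm_smul, norm_neg, Real.norm_eq_abs, Real.norm_eq_abs]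
    nlinarith [Real.abs_sin_le_one φ, Real.abs_cos_le_one φ, norm_nonneg (a i), norm_nonneg (b i)]
  have hder : ∀ φ, HasDerivAt H (∫ z, ∑ i, smx (c φ) i z * ⟪z, c' φ i⟫ ∂gau F) φ := by
    intro φ
    refine (hasDerivAt_integral_of_dominated_loc_of_deriv_le (bound := fun z => M * ‖z‖)
      (F := fun φ z => Real.log (∑ j, Real.exp ⟪z, c φ j⟫))
      (F' := fun φ z => ∑ i, smx (c φ) i z * ⟪z, c' φ i⟫) (x₀ := φ) (s := Set.univ) Filter.univ_mem ?_ (integrable_lse _) ?_ ?_ ?_ ?_).2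
    · exact Filter.Eventually.of_forall fun φ => (integrable_lse (c φ)).aestronglyMeasurable
    · refine Continuous.aestronglyMeasurable (continuous_finsetSum _ fun i _ => ?_)
      exact (contDiff_smx (c φ) i).continuous.mul (by fun_prop)
    · refine Filter.Eventually.of_forall fun z φ _ => ?_
      refine (norm_sum_le _ _).trans ?_
      calc ∑ i, ‖smx (c φ) i z * ⟪z, c' φ i⟫‖ ≤ ∑ i, smx (c φ) i z * (M * ‖z‖) :=
            Finset.sum_le_sum fun i _ => by
              rw [norm_mul, Real.norm_of_nonneg (smx_nonneg _ i z)]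
              refine mul_le_mul_of_nonneg_left ((norm_inner_le_norm _ _).trans ?_) (smx_nonneg _ i z)
              rw [mul_comm]; gcongr; exact hcM φ i
        _ = M * ‖z‖ := by rw [← Finset.sum_mul, smx_sum, one_mul]
    · exact ((PolyBdd.id (X := F)).norm.integrable
        (Continuous.aestronglyMeasurable (by fun_prop))).const_mul M
    · refine Filter.Eventually.of_forall fun z φ _ => ?_
      have h1 : ∀ i, HasDerivAt (fun φ => ⟪z, c φ i⟫) ⟪z, c' φ i⟫ φ := by
        intro i
        have := ((Real.hasDerivAt_cos φ).mul_const ⟪z, a i⟫).add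
          ((Real.hasDerivAt_sin φ).mul_const ⟪z, b i⟫)
        simp only [hc, hc', inner_add_right, real_inner_smul_right]
        exact this
      have h2 := (HasDerivAt.fun_sum (u := Finset.univ) fun i _ => (h1 i).exp).log
        (smx_den_pos (c φ) z).ne'
      refine h2.congr_deriv ?_
      rw [Finset.sum_div]
      exact Finset.sum_congr rfl fun i _ => by rw [smx, div_mul_eq_mul_div]
  have hnn : ∀ φ ∈ Set.Icc (0 : ℝ) (π / 2), 0 ≤ ∫ z, ∑ i, smx (c φ) i z * ⟪z, c' φ i⟫ ∂gau F := by
    intro φ hφ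
    have hs : 0 ≤ Real.sin φ := Real.sin_nonneg_of_nonneg_of_le_pi hφ.1 (by linarith [hφ.2, Real.pi_pos])
    have hco : 0 ≤ Real.cos φ := Real.cos_nonneg_of_neg_pi_div_two_le_of_le
      (by linarith [hφ.1, Real.pi_pos]) hφ.2
    have ps : ∀ i, PolyBdd (smx (c φ) i) := fun i => PolyBdd.of_bdd (C := 1) fun z => by
      rw [Real.norm_of_nonneg (smx_nonneg _ i z)]; exact smx_le_one _ i z
    have cs : ∀ i, Continuous (smx (c φ) i) := fun i => (contDiff_smx (c φ) i).continuous
    have i1 : ∀ i, Integrable (fun z => smx (c φ) i z * ⟪z, c' φ i⟫) (gau F) := fun i =>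
      ((ps i).mul (polyBdd_inner_left _)).integrable
        (Continuous.aestronglyMeasurable ((cs i).mul (by fun_prop)))
    have i2 : ∀ i, Integrable (fun z => smx (c φ) i z *
        (⟪c' φ i, c φ i⟫ - ∑ j, smx (c φ) j z * ⟪c' φ i, c φ j⟫)) (gau F) := fun i =>
      ((ps i).mul ((PolyBdd.const _).sub (PolyBdd.sum _ fun j _ => (ps j).mul (PolyBdd.const _)))).integrable
        (Continuous.aestronglyMeasurable ((cs i).mul (continuous_const.sub
          (continuous_finsetSum _ fun j _ => (cs j).mul continuous_const))))
    have e : ∫ z, ∑ i, smx (c φ) i z * ⟪z, c' φ i⟫ ∂gau F = ∫ z, ∑ i, smx (c φ) i z *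
        (⟪c' φ i, c φ i⟫ - ∑ j, smx (c φ) j z * ⟪c' φ i, c φ j⟫) ∂gau F := by
      rw [integral_finsetSum _ fun i _ => i1 i, integral_finsetSum _ fun i _ => i2 i]
      refine Finset.sum_congr rfl fun i _ => ?_
      rw [← stein_smx]
      simp only [mul_comm]
    rw [e]
    refine integral_nonneg fun z => gibbs_form_nonneg (p := fun i => smx (c φ) i z)
      (D := fun i j => ⟪c' φ i, c φ j⟫) (fun i => smx_nonneg _ i z) (smx_sum _ z) fun i j => ?_
    have hD : ∀ i j, ⟪c' φ i, c φ j⟫ = Real.sin φ * Real.cos φ * (⟪b i, b j⟫ - ⟪a i, a j⟫) := by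
      intro i j
      have hba : ⟪b i, a j⟫ = 0 := by rw [real_inner_comm]; exact hab j i
      simp only [hc, hc', inner_add_left, inner_add_right, real_inner_smul_left,
        real_inner_smul_right, hab, hba]
      ring
    have h := hle i j
    rw [norm_sub_sq_real, norm_sub_sq_real, ← real_inner_self_eq_norm_sq, ← real_inner_self_eq_norm_sq,
      ← real_inner_self_eq_norm_sq, ← real_inner_self_eq_norm_sq] at h
    simp only [hD]
    rw [real_inner_comm (b i) (b j), real_inner_comm (a i) (a j)]
    have := mul_nonneg (mul_nonneg hs hco) (sub_nonneg.2 h)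
    nlinarith
  have hmono : MonotoneOn H (Set.Icc 0 (π / 2)) := by
    refine monotoneOn_of_deriv_nonneg (convex_Icc _ _)
      (fun φ _ => (hder φ).continuousAt.continuousWithinAt)
      (fun φ _ => (hder φ).differentiableAt.differentiableWithinAt) fun φ hφ => ?_
    rw [(hder φ).deriv]
    exact hnn φ (interior_subset hφ)
  have h := hmono (Set.left_mem_Icc.2 (by positivity)) (Set.right_mem_Icc.2 (by positivity))
    (show (0 : ℝ) ≤ π / 2 by positivity)
  simpa [hH, hc] using h

/-- Sudakov–Fernique: `E maxᵢ ⟪z, a i⟫ ≤ E maxᵢ ⟪z, b i⟫` if the increments of `a` are at most those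
of `b`, stated for a minorant of the first maximum and a majorant of the second. -/
lemma sudakov_fernique (a b : ι → F) (hab : ∀ i j, ⟪a i, b j⟫ = 0)
    (hle : ∀ i j, ‖a i - a j‖ ^ 2 ≤ ‖b i - b j‖ ^ 2) {Φ Θ : F → ℝ} (iΦ : Integrable Φ (gau F))
    (iΘ : Integrable Θ (gau F)) (hΦ : ∀ z, ∃ i, Φ z ≤ ⟪z, a i⟫) (hΘ : ∀ z i, ⟪z, b i⟫ ≤ Θ z) :
    ∫ z, Φ z ∂gau F ≤ ∫ z, Θ z ∂gau F := by
  set l := Real.log (Fintype.card ι) with hl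
  have hl0 : 0 ≤ l := Real.log_natCast_nonneg _
  have key : ∀ β : ℝ, 0 < β → β * ∫ z, Φ z ∂gau F ≤ β * ∫ z, Θ z ∂gau F + l := by
    intro β hβ
    have h := lse_comparison (fun i => β • a i) (fun i => β • b i)
      (fun i j => by rw [real_inner_smul_left, real_inner_smul_right, hab]; ring)
      (fun i j => by
        rw [← smul_sub, ← smul_sub, norm_smul, norm_smul, mul_pow, mul_pow]
        exact mul_le_mul_of_nonneg_left (hle i j) (by positivity))
    have h1 : ∫ z, β * Φ z ∂gau F ≤ ∫ z, Real.log (∑ j, Real.exp ⟪z, β • a j⟫) ∂gau F := by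
      refine integral_mono (iΦ.const_mul β) (integrable_lse _) fun z => ?_
      obtain ⟨i, hi⟩ := hΦ z
      refine le_trans ?_ (le_lse (fun i => β • a i) z i)
      simp only [real_inner_smul_right]
      exact mul_le_mul_of_nonneg_left hi hβ.le
    have i2 : Integrable (fun z => β * Θ z + l) (gau F) := (iΘ.const_mul β).add (integrable_const _)
    have h2 : ∫ z, Real.log (∑ j, Real.exp ⟪z, β • b j⟫) ∂gau F ≤ ∫ z, (β * Θ z + l) ∂gau F := by
      refine integral_mono (integrable_lse _) i2 fun z => lse_le (fun i => β • b i) z fun i => ?_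
      simp only [real_inner_smul_right]
      exact mul_le_mul_of_nonneg_left (hΘ z i) hβ.le
    rw [integral_const_mul] at h1
    rw [integral_add (iΘ.const_mul β) (integrable_const _), integral_const_mul] at h2
    simp only [integral_const, probReal_univ, one_smul] at h2
    linarith
  refine le_of_forall_pos_le_add fun δ hδ => ?_
  have hβ : 0 < (l + 1) / δ := by positivity
  have h := key _ hβ
  have e : (l + 1) / δ * δ = l + 1 := div_mul_cancel₀ _ hδ.ne'
  refine le_of_mul_le_mul_left ?_ hβ
  rw [mul_add, e]; linarith

end SudakovFernique

/-! ### Gaussian matrices -/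

section Matrices

variable {n : ℕ}

/-- The space of `n × n` matrices with the Hilbert–Schmidt inner product. -/
abbrev Mat (n : ℕ) := EuclideanSpace ℝ (Fin n × Fin n)

/-- The `j`-th column of a matrix. -/
def mcol (G : Mat n) (j : Fin n) : Euc n := WithLp.toLp 2 fun i => G (i, j)

/-- The operator with a given matrix. -/
def op (G : Mat n) : Euc n →L[ℝ] Euc n :=
  ∑ j, (EuclideanSpace.proj j : Euc n →L[ℝ] ℝ).smulRight (mcol G j)

/-- The matrix of an operator. -/
def mk (W : Euc n →L[ℝ] Euc n) : Mat n :=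
  WithLp.toLp 2 fun p => (W (EuclideanSpace.single p.2 1)) p.1

/-- The rank-one matrix `q xᵀ`. -/
def tens (q x : Euc n) : Mat n := WithLp.toLp 2 fun p => q p.1 * x p.2

lemma op_apply (G : Mat n) (x : Euc n) : op G x = ∑ j, x j • mcol G j := by
  simp [op, sum_apply]

lemma op_add (G G' : Mat n) : op (G + G') = op G + op G' := by
  ext x i
  simp [op_apply, mcol, mul_add, Finset.sum_add_distrib]

lemma op_smul (c : ℝ) (G : Mat n) : op (c • G) = c • op G := by
  ext x i
  simp [op_apply, mcol, Finset.mul_sum, mul_left_comm]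

lemma op_single (G : Mat n) (j : Fin n) : op G (EuclideanSpace.single j 1) = mcol G j := by
  simp [op_apply, PiLp.single_apply]

lemma mk_op (G : Mat n) : mk (op G) = G := by
  ext p
  simp [mk, op_single, mcol]

lemma mk_add (W W' : Euc n →L[ℝ] Euc n) : mk (W + W') = mk W + mk W' := by
  ext p; simp [mk]

lemma mk_smul (c : ℝ) (W : Euc n →L[ℝ] Euc n) : mk (c • W) = c • mk W := by
  ext p; simp [mk]

lemma mk_sum {ι : Type*} (s : Finset ι) (W : ι → Euc n →L[ℝ] Euc n) :
    mk (∑ k ∈ s, W k) = ∑ k ∈ s, mk (W k) := by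
  classical
  induction s using Finset.induction_on with
  | empty => ext p; simp [mk]
  | insert a s ha ih => rw [Finset.sum_insert ha, Finset.sum_insert ha, mk_add, ih]

lemma inner_mk_tens (W : Euc n →L[ℝ] Euc n) (q x : Euc n) : ⟪mk W, tens q x⟫ = ⟪W x, q⟫ := by
  have hx : x = ∑ j, x j • EuclideanSpace.single j (1 : ℝ) := by
    ext i; simp [Pi.single_apply]
  conv_rhs => rw [hx, map_sum]
  simp only [PiLp.inner_apply, Fintype.sum_prod_type_right, mk, tens, map_smul, sum_inner,
    RCLike.inner_apply, conj_trivial]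
  refine Finset.sum_congr rfl fun j _ => Finset.sum_congr rfl fun i _ => ?_
  simp only [PiLp.smul_apply, smul_eq_mul]
  ring

lemma inner_tens_tens (q x q' x' : Euc n) : ⟪tens q x, tens q' x'⟫ = ⟪q, q'⟫ * ⟪x, x'⟫ := by
  simp only [PiLp.inner_apply, Fintype.sum_prod_type, tens, RCLike.inner_apply, conj_trivial,
    Finset.sum_mul_sum]
  exact Finset.sum_congr rfl fun j _ => Finset.sum_congr rfl fun i _ => by ring

lemma norm_tens_sq (q x : Euc n) : ‖tens q x‖ ^ 2 = ‖q‖ ^ 2 * ‖x‖ ^ 2 := by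
  rw [← real_inner_self_eq_norm_sq, inner_tens_tens, real_inner_self_eq_norm_sq,
    real_inner_self_eq_norm_sq]

/-- The Hilbert–Schmidt norm can be computed in any orthonormal basis. -/
lemma norm_mk_sq (W : Euc n →L[ℝ] Euc n) {ι : Type*} [Fintype ι] (b : OrthonormalBasis ι ℝ (Euc n)) :
    ‖mk W‖ ^ 2 = ∑ i, ‖W (b i)‖ ^ 2 := by
  have h : ∀ x, ‖W x‖ ^ 2 = ⟪(ContinuousLinearMap.adjoint W).comp W x, x⟫ := fun x => by
    rw [ContinuousLinearMap.comp_apply, ContinuousLinearMap.adjoint_inner_left,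
      real_inner_self_eq_norm_sq]
  simp only [h]
  rw [← trL_eq_sum _ b, trL_eq_sum _ (EuclideanSpace.basisFun (Fin n) ℝ), EuclideanSpace.norm_sq_eq,
    Fintype.sum_prod_type_right]
  simp only [← h]
  refine Finset.sum_congr rfl fun j _ => ?_
  rw [EuclideanSpace.norm_sq_eq]
  simp [mk]

lemma norm_sq_eq_sum_op (G : Mat n) {ι : Type*} [Fintype ι] (b : OrthonormalBasis ι ℝ (Euc n)) :
    ‖G‖ ^ 2 = ∑ i, ‖op G (b i)‖ ^ 2 := by
  rw [← norm_mk_sq, mk_op]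

/-- Multiplication of a matrix by orthogonal maps on both sides, as an isometry. -/
def conjIso (H R : Euc n ≃ₗᵢ[ℝ] Euc n) : Mat n →ₗᵢ[ℝ] Mat n where
  toFun G := mk ((H : Euc n →L[ℝ] Euc n).comp ((op G).comp (R : Euc n →L[ℝ] Euc n)))
  map_add' G G' := by
    rw [← mk_add, op_add, ContinuousLinearMap.add_comp, ContinuousLinearMap.comp_add]
  map_smul' c G := by
    rw [RingHom.id_apply, ← mk_smul, op_smul, ContinuousLinearMap.smul_comp,
      ContinuousLinearMap.comp_smul]
  norm_map' G := by
    change ‖mk _‖ = ‖G‖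
    have : ‖mk ((H : Euc n →L[ℝ] Euc n).comp ((op G).comp (R : Euc n →L[ℝ] Euc n)))‖ ^ 2 = ‖G‖ ^ 2 := by
      rw [norm_mk_sq _ (EuclideanSpace.basisFun (Fin n) ℝ),
        norm_sq_eq_sum_op G ((EuclideanSpace.basisFun (Fin n) ℝ).map R)]
      simp
    exact (sq_eq_sq₀ (norm_nonneg _) (norm_nonneg _)).1 this

lemma conjIso_apply (H R : Euc n ≃ₗᵢ[ℝ] Euc n) (G : Mat n) : conjIso H R G =
    mk ((H : Euc n →L[ℝ] Euc n).comp ((op G).comp (R : Euc n →L[ℝ] Euc n))) := rfl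

lemma integral_conjIso (H R : Euc n ≃ₗᵢ[ℝ] Euc n) {Ψ : Mat n → ℝ} (hΨ : Continuous Ψ) :
    ∫ G, Ψ (conjIso H R G) ∂gau (Mat n) = ∫ G, Ψ G ∂gau (Mat n) := by
  have h : (gau (Mat n)).map ((conjIso H R).toLinearIsometryEquiv rfl) = gau (Mat n) :=
    ProbabilityTheory.stdGaussian_map _
  conv_rhs => rw [← h]
  rw [integral_map (by fun_prop) hΨ.aestronglyMeasurable]
  rfl

lemma inner_basisFun (G : Mat n) (p : Fin n × Fin n) :
    ⟪G, EuclideanSpace.basisFun (Fin n × Fin n) ℝ p⟫ = G p := by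
  rw [real_inner_comm, EuclideanSpace.basisFun_inner]

lemma integral_norm_sq_mat : ∫ G, ‖G‖ ^ 2 ∂gau (Mat n) = (n : ℝ) ^ 2 := by
  have e : ∀ G : Mat n, ‖G‖ ^ 2 = ∑ p, ⟪G, EuclideanSpace.basisFun (Fin n × Fin n) ℝ p⟫ *
      ⟪G, EuclideanSpace.basisFun (Fin n × Fin n) ℝ p⟫ := fun G => by
    rw [EuclideanSpace.norm_sq_eq]
    simp only [inner_basisFun, Real.norm_eq_abs, sq, abs_mul_abs_self]
  simp only [e]
  rw [integral_finsetSum _ fun p _ => ((polyBdd_inner_left _).mul (polyBdd_inner_left _)).integrable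
    (Continuous.aestronglyMeasurable (by fun_prop))]
  simp only [integral_inner_inner_gau]
  simp [sq]

lemma continuous_op_apply (x : Euc n) : Continuous fun G : Mat n => op G x := by
  simp only [op_apply, mcol]
  fun_prop

/-- The fourth moment of the singular values of a Gaussian matrix. -/
lemma integral_gram_sq_le : ∫ G, ∑ i, ∑ j, ⟪mcol G i, mcol G j⟫ ^ 2 ∂gau (Mat n) ≤ 3 * (n : ℝ) ^ 3 := by
  set B := EuclideanSpace.basisFun (Fin n × Fin n) ℝ with hB
  have e : ∀ (G : Mat n) i j, ⟪mcol G i, mcol G j⟫ ^ 2 = ∑ k, ∑ l,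
      ⟪G, B (k, i)⟫ * (⟪G, B (k, j)⟫ * (⟪G, B (l, i)⟫ * ⟪G, B (l, j)⟫)) := by
    intro G i j
    rw [sq, PiLp.inner_apply, Finset.sum_mul_sum]
    refine Finset.sum_congr rfl fun k _ => Finset.sum_congr rfl fun l _ => ?_
    simp only [hB, inner_basisFun, mcol, RCLike.inner_apply, conj_trivial]
    ring
  have i4 : ∀ a b c d : Mat n, Integrable (fun G : Mat n => ⟪G, a⟫ * (⟪G, b⟫ * (⟪G, c⟫ * ⟪G, d⟫)))
      (gau (Mat n)) := fun a b c d => ((polyBdd_inner_left _).mul ((polyBdd_inner_left _).mul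
        ((polyBdd_inner_left _).mul (polyBdd_inner_left _)))).integrable
    (Continuous.aestronglyMeasurable (by fun_prop))
  simp only [e]
  rw [integral_finsetSum _ fun i _ => integrable_finsetSum _ fun j _ => integrable_finsetSum _ fun k _ =>
    integrable_finsetSum _ fun l _ => i4 _ _ _ _]
  have h : ∀ i j k l : Fin n, ⟪B (k, i), B (k, j)⟫ * ⟪B (l, i), B (l, j)⟫ +
      ⟪B (k, i), B (l, i)⟫ * ⟪B (k, j), B (l, j)⟫ + ⟪B (k, i), B (l, j)⟫ * ⟪B (k, j), B (l, i)⟫ ≤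
      (if i = j then 1 else 0) + (if k = l then 1 else 0) + (if i = j then (if k = l then 1 else 0) else 0) := by
    intro i j k l
    simp only [orthonormal_iff_ite.1 B.orthonormal, Prod.mk.injEq]
    by_cases h1 : i = j <;> by_cases h2 : k = l <;> simp [h1, h2, eq_comm]
  calc _ = ∑ i, ∑ j, ∑ k, ∑ l, (⟪B (k, i), B (k, j)⟫ * ⟪B (l, i), B (l, j)⟫ +
        ⟪B (k, i), B (l, i)⟫ * ⟪B (k, j), B (l, j)⟫ + ⟪B (k, i), B (l, j)⟫ * ⟪B (k, j), B (l, i)⟫) := by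
        refine Finset.sum_congr rfl fun i _ => ?_
        rw [integral_finsetSum _ fun j _ => integrable_finsetSum _ fun k _ =>
          integrable_finsetSum _ fun l _ => i4 _ _ _ _]
        refine Finset.sum_congr rfl fun j _ => ?_
        rw [integral_finsetSum _ fun k _ => integrable_finsetSum _ fun l _ => i4 _ _ _ _]
        refine Finset.sum_congr rfl fun k _ => ?_
        rw [integral_finsetSum _ fun l _ => i4 _ _ _ _]
        exact Finset.sum_congr rfl fun l _ => wick4 _ _ _ _
    _ ≤ ∑ i : Fin n, ∑ j : Fin n, ∑ k : Fin n, ∑ l : Fin n, ((if i = j then 1 else 0) +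
        (if k = l then 1 else 0) + (if i = j then (if k = l then (1 : ℝ) else 0) else 0)) :=
      Finset.sum_le_sum fun i _ => Finset.sum_le_sum fun j _ => Finset.sum_le_sum fun k _ =>
        Finset.sum_le_sum fun l _ => h i j k l
    _ = 2 * (n : ℝ) ^ 3 + (n : ℝ) ^ 2 := by
      simp [Finset.sum_add_distrib]
      ring
    _ ≤ 3 * (n : ℝ) ^ 3 := by
      rcases Nat.eq_zero_or_pos n with rfl | hn
      · simp
      · have : (1 : ℝ) ≤ n := by exact_mod_cast hn
        nlinarith [sq_nonneg (n : ℝ), mul_le_mul_of_nonneg_left this (sq_nonneg (n : ℝ))]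

end Matrices

section Singular

variable {n : ℕ}

/-- Singular value decomposition, followed by averaging over the cyclic permutations of a basis of
singular vectors: orthogonal maps `V k`, `R k` with `∑ₖ (V k)⁻¹ G (R k)` a multiple of the identity,
the factor being the sum of the singular values `σ i`. -/
lemma exists_singular [NeZero n] (G : Mat n) : ∃ (σ : Fin n → ℝ) (V R : Fin n → Euc n ≃ₗᵢ[ℝ] Euc n),
    (∀ i, 0 ≤ σ i) ∧ ∑ i, σ i ^ 2 = ‖G‖ ^ 2 ∧
    ∑ i, σ i ^ 4 = ∑ i, ∑ j, ⟪mcol G i, mcol G j⟫ ^ 2 ∧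
    ∑ k, ((V k).symm : Euc n →L[ℝ] Euc n).comp ((op G).comp (R k : Euc n →L[ℝ] Euc n)) =
      (∑ i, σ i) • ContinuousLinearMap.id ℝ (Euc n) := by
  set A := op G with hA
  set X := (ContinuousLinearMap.adjoint A).comp A with hX
  have hXi : ∀ x y, ⟪X x, y⟫ = ⟪A x, A y⟫ := fun x y => by
    rw [hX, ContinuousLinearMap.comp_apply, ContinuousLinearMap.adjoint_inner_left]
  obtain ⟨f, l, hf⟩ := exists_eigenbasis X fun a b => by
    rw [hXi, real_inner_comm, ← hXi, real_inner_comm]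
  have hff : ∀ i j, ⟪A (f i), A (f j)⟫ = if i = j then l i else 0 := fun i j => by
    rw [← hXi, hf, real_inner_smul_left, orthonormal_iff_ite.1 f.orthonormal]
    simp
  set σ : Fin n → ℝ := fun i => ‖A (f i)‖ with hσ
  have hl : ∀ i, l i = σ i ^ 2 := fun i => by
    rw [hσ]; simp only; rw [← real_inner_self_eq_norm_sq, hff]; simp
  have hon : Orthonormal ℝ (Set.domRestrict {i | σ i ≠ 0} fun i => (σ i)⁻¹ • A (f i)) := by
    rw [orthonormal_iff_ite]
    rintro ⟨i, hi⟩ ⟨j, hj⟩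
    have hi : σ i ≠ 0 := hi
    simp only [Set.domRestrict_apply, Subtype.mk.injEq, real_inner_smul_left, real_inner_smul_right, hff, hl]
    by_cases h : i = j
    · subst h
      simp only [if_true]
      field_simp
    · simp [h]
  obtain ⟨b, hb⟩ := hon.exists_orthonormalBasis_extension_of_card_eq (by simp)
  have hAf : ∀ i, A (f i) = σ i • b i := by
    intro i
    by_cases h : σ i = 0
    · rw [h, zero_smul]; exact norm_eq_zero.1 h
    · rw [hb i h, smul_smul, mul_inv_cancel₀ h, one_smul]
  refine ⟨σ, fun k => f.equiv b (Equiv.addRight k), fun k => f.equiv f (Equiv.addRight k),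
    fun i => norm_nonneg _, (norm_sq_eq_sum_op G f).symm, ?_, ?_⟩
  · have h1 : ∀ i, σ i ^ 4 = ‖X (f i)‖ ^ 2 := fun i => by
      rw [hf, hl, norm_smul, f.norm_eq_one, mul_one, Real.norm_eq_abs, sq_abs]; ring
    simp only [h1]
    rw [← norm_mk_sq, norm_mk_sq _ (EuclideanSpace.basisFun (Fin n) ℝ)]
    refine Finset.sum_congr rfl fun i _ => ?_
    rw [← (EuclideanSpace.basisFun (Fin n) ℝ).sum_sq_norm_inner_left]
    refine Finset.sum_congr rfl fun j _ => ?_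
    rw [hXi, Real.norm_eq_abs, sq_abs]
    simp only [EuclideanSpace.basisFun_apply, hA, op_single]
  · refine ContinuousLinearMap.coe_injective (f.toBasis.ext fun i => ?_)
    have h2 : ∀ k, ((f.equiv b (Equiv.addRight k)).symm : Euc n →L[ℝ] Euc n).comp
        (A.comp (f.equiv f (Equiv.addRight k) : Euc n →L[ℝ] Euc n)) (f i) = σ (i + k) • f i := by
      intro k
      have h3 : f.equiv b (Equiv.addRight k) (f i) = b (i + k) := by
        rw [OrthonormalBasis.equiv_apply_basis]; rfl
      have h4 : f.equiv f (Equiv.addRight k) (f i) = f (i + k) := by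
        rw [OrthonormalBasis.equiv_apply_basis]; rfl
      change (f.equiv b (Equiv.addRight k)).symm (A (f.equiv f (Equiv.addRight k) (f i))) = _
      rw [h4, hAf, map_smul, ← h3, LinearIsometryEquiv.symm_apply_apply]
    rw [OrthonormalBasis.coe_toBasis, ContinuousLinearMap.coe_coe, ContinuousLinearMap.coe_coe, sum_apply]
    simp only [h2]
    rw [← Finset.sum_smul, smul_apply, ContinuousLinearMap.id_apply]
    congr 1
    exact Equiv.sum_comp (Equiv.addLeft i) σ

end Singular

/-! ### Chevet's inequality -/

section Chevet

variable {n : ℕ}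

/-- The standard Gaussian on a product, integrated over one factor: `P` is the projection, given as
the adjoint of an isometric embedding `J`. -/
lemma integral_marginal {F E : Type*} [NormedAddCommGroup F] [InnerProductSpace ℝ F]
    [FiniteDimensional ℝ F] [MeasurableSpace F] [BorelSpace F] [NormedAddCommGroup E]
    [InnerProductSpace ℝ E] [FiniteDimensional ℝ E] [MeasurableSpace E] [BorelSpace E]
    (P : F →L[ℝ] E) (J : E → F) (hJ : ∀ y, ‖J y‖ = ‖y‖) (hPJ : ∀ z y, ⟪P z, y⟫ = ⟪z, J y⟫)
    {Ψ : E → ℝ} (hΨ : Continuous Ψ) : ∫ z, Ψ (P z) ∂gau F = ∫ y, Ψ y ∂gau E := by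
  have h : (gau F).map P = gau E := by
    refine gau_map_coisometry P fun y => ?_
    have : ContinuousLinearMap.adjoint P y = J y := by
      refine ext_inner_left ℝ fun z => ?_
      rw [ContinuousLinearMap.adjoint_inner_right, hPJ]
    rw [this, hJ]
  rw [← h, integral_map (by fun_prop) hΨ.aestronglyMeasurable]

lemma integrable_sf_gen {E : Type*} [NormedAddCommGroup E]
    [InnerProductSpace ℝ E] [FiniteDimensional ℝ E] [MeasurableSpace E] [BorelSpace E]
    (Q : Finset E) : Integrable (sf Q) (gau E) :=
  (PolyBdd.id.sf Q).integrable (continuous_sf Q).aestronglyMeasurable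

/-- Space carrying a Gaussian matrix and two independent Gaussian vectors. -/
abbrev Tri (n : ℕ) := WithLp 2 (Mat n × WithLp 2 (Euc n × Euc n))

/-- **Chevet's inequality** for finite sets. -/
lemma chevet {P Q : Finset (Euc n)} {T : Finset (Mat n)}
    (hT : ∀ t ∈ T, ∃ x ∈ P, ∃ q ∈ Q, t = tens q x) {R b : ℝ} (hR0 : 0 ≤ R) (hb0 : 0 ≤ b)
    (hR : ∀ x ∈ P, ‖x‖ ≤ R) (hb : ∀ q ∈ Q, ‖q‖ ≤ b) :
    ∫ G, sf T G ∂gau (Mat n) ≤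
      R * ∫ z, sf Q z ∂gau (Euc n) + b * ∫ z, sf P z ∂gau (Euc n) := by
  classical
  let ι := {x // x ∈ insert 0 P} × {q // q ∈ insert 0 Q}
  let p1 : Tri n →L[ℝ] Mat n := WithLp.fstL 2 ℝ _ _
  let p2 : Tri n →L[ℝ] Euc n := (WithLp.fstL 2 ℝ _ _).comp (WithLp.sndL 2 ℝ _ _)
  let p3 : Tri n →L[ℝ] Euc n := (WithLp.sndL 2 ℝ _ _).comp (WithLp.sndL 2 ℝ _ _)
  let j1 : Mat n → Tri n := fun G => WithLp.toLp 2 (G, 0)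
  let j2 : Euc n → Tri n := fun y => WithLp.toLp 2 (0, WithLp.toLp 2 (y, 0))
  let j3 : Euc n → Tri n := fun y => WithLp.toLp 2 (0, WithLp.toLp 2 (0, y))
  let a : ι → Tri n := fun i => j1 (tens i.2.1 i.1.1)
  let c : ι → Tri n := fun i => WithLp.toLp 2 (0, WithLp.toLp 2 (‖i.1.1‖ • i.2.1, ‖i.2.1‖ • i.1.1))
  have : Nonempty ι := ⟨(⟨0, Finset.mem_insert_self _ _⟩, ⟨0, Finset.mem_insert_self _ _⟩)⟩
  have q1 : PolyBdd (fun z : Tri n => sf T (p1 z)) := (PolyBdd.clm p1).sf T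
  have q2 : PolyBdd (fun z : Tri n => sf Q (p2 z)) := (PolyBdd.clm p2).sf Q
  have q3 : PolyBdd (fun z : Tri n => sf P (p3 z)) := (PolyBdd.clm p3).sf P
  have k1 := continuous_sf T
  have k2 := continuous_sf Q
  have k3 := continuous_sf P
  have i1 := q1.integrable (μ := gau (Tri n)) (Continuous.aestronglyMeasurable (by fun_prop))
  have i2 := q2.integrable (μ := gau (Tri n)) (Continuous.aestronglyMeasurable (by fun_prop))
  have i3 := q3.integrable (μ := gau (Tri n)) (Continuous.aestronglyMeasurable (by fun_prop))
  have e1 : ∫ z, sf T (p1 z) ∂gau (Tri n) = ∫ G, sf T G ∂gau (Mat n) :=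
    integral_marginal p1 j1 (fun y => by simp [j1]) (fun z y => by
      simp [p1, j1, WithLp.prod_inner_apply]) k1
  have e2 : ∫ z, sf Q (p2 z) ∂gau (Tri n) = ∫ G, sf Q G ∂gau (Euc n) :=
    integral_marginal p2 j2 (fun y => by simp [j2]) (fun z y => by
      simp [p2, j2, WithLp.prod_inner_apply]) k2
  have e3 : ∫ z, sf P (p3 z) ∂gau (Tri n) = ∫ G, sf P G ∂gau (Euc n) :=
    integral_marginal p3 j3 (fun y => by simp [j3]) (fun z y => by
      simp [p3, j3, WithLp.prod_inner_apply]) k3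
  have main := sudakov_fernique (F := Tri n) (ι := ι) a c
    (Φ := fun z => sf T (p1 z)) (Θ := fun z => R * sf Q (p2 z) + b * sf P (p3 z))
    (fun i j => by simp [a, j1, c, WithLp.prod_inner_apply]) ?_ i1
    ((i2.const_mul R).add (i3.const_mul b)) ?_ ?_
  · rw [integral_add (i2.const_mul R) (i3.const_mul b), integral_const_mul, integral_const_mul,
      e1, e2, e3] at main
    exact main
  · rintro ⟨⟨x, hx⟩, ⟨q, hq⟩⟩ ⟨⟨x', hx'⟩, ⟨q', hq'⟩⟩
    have ha : ‖a ⟨⟨x, hx⟩, ⟨q, hq⟩⟩ - a ⟨⟨x', hx'⟩, ⟨q', hq'⟩⟩‖ ^ 2 =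
        ‖tens q x - tens q' x'‖ ^ 2 := by
      simp [a, j1, WithLp.prod_norm_sq_eq_of_L2]
    have hc : ‖c ⟨⟨x, hx⟩, ⟨q, hq⟩⟩ - c ⟨⟨x', hx'⟩, ⟨q', hq'⟩⟩‖ ^ 2 =
        ‖‖x‖ • q - ‖x'‖ • q'‖ ^ 2 + ‖‖q‖ • x - ‖q'‖ • x'‖ ^ 2 := by
      simp [c, WithLp.prod_norm_sq_eq_of_L2]
    rw [ha, hc, norm_sub_sq_real, norm_sub_sq_real, norm_sub_sq_real, norm_tens_sq, norm_tens_sq,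
      inner_tens_tens]
    simp only [norm_smul, norm_norm, real_inner_smul_left, real_inner_smul_right]
    have u := real_inner_le_norm x x'
    have w := real_inner_le_norm q q'
    nlinarith [mul_nonneg (sub_nonneg.2 u) (sub_nonneg.2 w), sq_nonneg (‖x‖ * ‖q‖ - ‖x'‖ * ‖q'‖)]
  · intro z
    obtain ⟨t, -, ht, hs⟩ := exists_argmax T
    rw [← hs]
    rcases ht (p1 z) with h | h
    · obtain ⟨x, hx, q, hq, e⟩ := hT _ h
      refine ⟨(⟨x, Finset.mem_insert_of_mem hx⟩, ⟨q, Finset.mem_insert_of_mem hq⟩), le_of_eq ?_⟩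
      rw [e]
      simp [a, j1, WithLp.prod_inner_apply, p1, real_inner_comm]
    · refine ⟨(⟨0, Finset.mem_insert_self _ _⟩, ⟨0, Finset.mem_insert_self _ _⟩), le_of_eq ?_⟩
      rw [h, inner_zero_left]
      have : tens (0 : Euc n) 0 = 0 := by ext; simp [tens]
      simp [a, j1, WithLp.prod_inner_apply, this]
  · rintro z ⟨⟨x, hx⟩, ⟨q, hq⟩⟩
    have hx1 : ‖x‖ ≤ R := by
      rcases Finset.mem_insert.1 hx with rfl | h
      · simpa using hR0
      · exact hR _ h
    have hq1 : ‖q‖ ≤ b := by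
      rcases Finset.mem_insert.1 hq with rfl | h
      · simpa using hb0
      · exact hb _ h
    have h1 : ⟪q, p2 z⟫ ≤ sf Q (p2 z) := by
      rcases Finset.mem_insert.1 hq with rfl | h
      · simpa using sf_nonneg _ _
      · exact le_sf h _
    have h2 : ⟪x, p3 z⟫ ≤ sf P (p3 z) := by
      rcases Finset.mem_insert.1 hx with rfl | h
      · simpa using sf_nonneg _ _
      · exact le_sf h _
    have e : ⟪z, c ⟨⟨x, hx⟩, ⟨q, hq⟩⟩⟫ = ‖x‖ * ⟪q, p2 z⟫ + ‖q‖ * ⟪x, p3 z⟫ := by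
      simp [c, WithLp.prod_inner_apply, p2, p3, real_inner_comm, real_inner_smul_left]
    rw [e]
    exact add_le_add
      ((mul_le_mul_of_nonneg_left h1 (norm_nonneg _)).trans
        (mul_le_mul_of_nonneg_right hx1 (sf_nonneg _ _)))
      ((mul_le_mul_of_nonneg_left h2 (norm_nonneg _)).trans
        (mul_le_mul_of_nonneg_right hq1 (sf_nonneg _ _)))

end Chevet

/-! ### Replacing a Gaussian matrix by an orthogonal one -/

section Orthogonal

variable {n : ℕ}

/-- The orthogonal group of `ℝⁿ`. -/
abbrev OG (n : ℕ) := unitary (Euc n →L[ℝ] Euc n)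

instance : ContinuousInv (OG n) := ⟨by
  refine Continuous.subtype_mk (f := fun U : OG n => ContinuousLinearMap.adjoint (U : Euc n →L[ℝ] Euc n))
    ?_ _
  exact ContinuousLinearMap.adjoint.continuous.comp continuous_subtype_val⟩

instance : IsTopologicalGroup (OG n) where

instance : CompactSpace (OG n) := by
  have : ProperSpace (Euc n →L[ℝ] Euc n) := FiniteDimensional.proper ℝ _
  have hc : IsClosed ((OG n : Submonoid (Euc n →L[ℝ] Euc n)) : Set (Euc n →L[ℝ] Euc n)) := by
    have : ((OG n : Submonoid (Euc n →L[ℝ] Euc n)) : Set (Euc n →L[ℝ] Euc n)) =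
        {U | ContinuousLinearMap.adjoint U * U = 1 ∧ U * ContinuousLinearMap.adjoint U = 1} := by
      ext U; rfl
    rw [this]
    have h := (ContinuousLinearMap.adjoint (𝕜 := ℝ) (E := Euc n) (F := Euc n)).continuous
    exact (isClosed_eq (h.mul continuous_id) continuous_const).inter
      (isClosed_eq (continuous_id.mul h) continuous_const)
  refine isCompact_iff_compactSpace.1 (Metric.isCompact_of_isClosed_isBounded hc ?_)
  refine isBounded_iff_forall_norm_le.2 ⟨1, fun U hU => ?_⟩
  refine ContinuousLinearMap.opNorm_le_bound _ zero_le_one fun x => ?_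
  rw [one_mul]
  exact (Unitary.norm_map (⟨U, hU⟩ : OG n) x).le

lemma continuous_mk : Continuous (mk : (Euc n →L[ℝ] Euc n) → Mat n) :=
  LinearMap.continuous_of_finiteDimensional
    { toFun := mk, map_add' := mk_add, map_smul' := mk_smul : (Euc n →L[ℝ] Euc n) →ₗ[ℝ] Mat n }

lemma continuous_op : Continuous (op : Mat n → Euc n →L[ℝ] Euc n) :=
  LinearMap.continuous_of_finiteDimensional
    { toFun := op, map_add' := op_add, map_smul' := op_smul : Mat n →ₗ[ℝ] Euc n →L[ℝ] Euc n }

/-- The action `G ↦ H⁻¹ G R` of pairs `(H, R)` of orthogonal maps on matrices. -/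
def act (p : OG n × OG n) (G : Mat n) : Mat n :=
  mk (ContinuousLinearMap.adjoint (p.1 : Euc n →L[ℝ] Euc n) * (op G * (p.2 : Euc n →L[ℝ] Euc n)))

lemma act_eq (p : OG n × OG n) (G : Mat n) : act p G =
    conjIso (Unitary.linearIsometryEquiv p.1).symm (Unitary.linearIsometryEquiv p.2) G := rfl

lemma continuous_act : Continuous fun x : (OG n × OG n) × Mat n => act x.1 x.2 := by
  have h := (ContinuousLinearMap.adjoint (𝕜 := ℝ) (E := Euc n) (F := Euc n)).continuous
  have h2 := continuous_op (n := n)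
  have h3 := continuous_mk (n := n)
  refine h3.comp (Continuous.mul (h.comp ?_) (Continuous.mul (h2.comp continuous_snd) ?_))
  · exact continuous_subtype_val.comp (continuous_fst.comp continuous_fst)
  · exact continuous_subtype_val.comp (continuous_snd.comp continuous_fst)

lemma sum_act_mul (G : Mat n) (V R : Fin n → Euc n ≃ₗᵢ[ℝ] Euc n) {s : ℝ}
    (h : ∑ k, ((V k).symm : Euc n →L[ℝ] Euc n).comp ((op G).comp (R k : Euc n →L[ℝ] Euc n)) =
      s • ContinuousLinearMap.id ℝ (Euc n)) (p : OG n × OG n) :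
    ∑ k, act ((Unitary.linearIsometryEquiv.symm (V k), Unitary.linearIsometryEquiv.symm (R k)) * p) G =
      s • mk ((p.1⁻¹ * p.2 : OG n) : Euc n →L[ℝ] Euc n) := by
  have e : ∀ k, act ((Unitary.linearIsometryEquiv.symm (V k),
      Unitary.linearIsometryEquiv.symm (R k)) * p) G =
      mk (ContinuousLinearMap.adjoint (p.1 : Euc n →L[ℝ] Euc n) *
        ((((V k).symm : Euc n →L[ℝ] Euc n) * (op G * (R k : Euc n →L[ℝ] Euc n))) *
          (p.2 : Euc n →L[ℝ] Euc n))) := fun k => by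
    have hV : ContinuousLinearMap.adjoint (V k : Euc n →L[ℝ] Euc n) =
        ((V k).symm : Euc n →L[ℝ] Euc n) := (V k).adjoint_eq_symm
    have : act ((Unitary.linearIsometryEquiv.symm (V k),
      Unitary.linearIsometryEquiv.symm (R k)) * p) G =
      mk (ContinuousLinearMap.adjoint ((V k : Euc n →L[ℝ] Euc n).comp (p.1 : Euc n →L[ℝ] Euc n)) *
        (op G * ((R k : Euc n →L[ℝ] Euc n) * (p.2 : Euc n →L[ℝ] Euc n)))) := rfl
    rw [this, ContinuousLinearMap.adjoint_comp, hV]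
    simp only [← ContinuousLinearMap.mul_def, mul_assoc]
  simp only [← ContinuousLinearMap.mul_def] at h
  simp only [e]
  rw [← mk_sum, ← Finset.mul_sum, ← Finset.sum_mul, h, ← mk_smul]
  congr 1
  ext1 x
  change ContinuousLinearMap.adjoint (p.1 : Euc n →L[ℝ] Euc n) (s • (p.2 : Euc n →L[ℝ] Euc n) x) = _
  rw [map_smul]
  rfl

lemma sum_singular_ge {σ : Fin n → ℝ} (hσ : ∀ i, 0 ≤ σ i) {lam : ℝ} (hl : 0 < lam) :
    3 / (2 * lam) * (∑ i, σ i ^ 2 - (∑ i, σ i ^ 4) / (3 * lam ^ 2)) ≤ ∑ i, σ i := by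
  have h : ∑ i, (σ i ^ 2 - σ i ^ 4 / (3 * lam ^ 2)) ≤ ∑ i, 2 / 3 * lam * σ i :=
    Finset.sum_le_sum fun i _ => abs_minorant hl (hσ i)
  rw [Finset.sum_sub_distrib, ← Finset.sum_div, ← Finset.mul_sum] at h
  calc _ ≤ 3 / (2 * lam) * (2 / 3 * lam * ∑ i, σ i) := by gcongr
    _ = _ := by field_simp

/-- If a sublinear `Ψ ≥ 0` is at least `m` at every orthogonal matrix, its Gaussian mean is at least
`m √n / 2`: averaging `Ψ (H⁻¹ G R)` over the orthogonal group depends on `G` only through its singular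
values, and by sublinearity it is at least `m` times their mean. -/
lemma orthogonal_mean [NeZero n] {Ψ : Mat n → ℝ} (hc : Continuous Ψ)
    (hadd : ∀ G G', Ψ (G + G') ≤ Ψ G + Ψ G') (hsmul : ∀ c : ℝ, 0 ≤ c → ∀ G, Ψ (c • G) = c * Ψ G)
    {C : ℝ} (hC : ∀ G, ‖Ψ G‖ ≤ C * ‖G‖) {m : ℝ} (hm : 0 ≤ m)
    (hU : ∀ U : OG n, m ≤ Ψ (mk (U : Euc n →L[ℝ] Euc n))) :
    m * √n ≤ 2 * ∫ G, Ψ G ∂gau (Mat n) := by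
  classical
  let ν : Measure (OG n × OG n) := Measure.haarMeasure ⊤
  have hν : IsProbabilityMeasure ν := ⟨by
    have := Measure.haarMeasure_self (G := OG n × OG n) (K₀ := ⊤)
    simpa using this⟩
  have n0 : (0 : ℝ) < n := by exact_mod_cast NeZero.pos n
  have hzero : Ψ 0 = 0 := by simpa using hsmul 0 le_rfl 0
  have hsum : ∀ f : Fin n → Mat n, Ψ (∑ k, f k) ≤ ∑ k, Ψ (f k) := fun f =>
    Finset.le_sum_of_subadditive Ψ hzero.le hadd _ _
  have hcf : Continuous fun x : (OG n × OG n) × Mat n => Ψ (act x.1 x.2) := hc.comp continuous_act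
  have hbd : ∀ p G, ‖Ψ (act p G)‖ ≤ C * ‖G‖ := fun p G => by
    have := hC (act p G)
    rwa [act_eq, LinearIsometry.norm_map] at this
  have inorm : Integrable (fun G : Mat n => C * ‖G‖) (gau (Mat n)) :=
    ((PolyBdd.id.norm).integrable continuous_norm.aestronglyMeasurable).const_mul C
  have hint : Integrable (fun x : (OG n × OG n) × Mat n => Ψ (act x.1 x.2)) (ν.prod (gau (Mat n))) :=
    (inorm.comp_snd ν).mono' hcf.aestronglyMeasurable (Filter.Eventually.of_forall fun x => hbd _ _)
  have hintν : ∀ G, Integrable (fun p => Ψ (act p G)) ν := fun G =>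
    Integrable.mono' (integrable_const (C * ‖G‖))
      (hcf.comp (continuous_id.prodMk continuous_const)).aestronglyMeasurable
      (Filter.Eventually.of_forall fun p => hbd _ _)
  -- the average over the group, for a fixed matrix
  have key : ∀ (G : Mat n) (lam : ℝ), 0 < lam →
      m * (3 / (2 * lam)) * (‖G‖ ^ 2 - (∑ i, ∑ j, ⟪mcol G i, mcol G j⟫ ^ 2) / (3 * lam ^ 2)) ≤
        n * ∫ p, Ψ (act p G) ∂ν := by
    intro G lam hl
    obtain ⟨σ, V, R, hσ, h2, h4, hVR⟩ := exists_singular G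
    have hs := sum_singular_ge hσ hl
    rw [h2, h4] at hs
    have hσs : 0 ≤ ∑ i, σ i := Finset.sum_nonneg fun i _ => hσ i
    let g : Fin n → OG n × OG n := fun k =>
      (Unitary.linearIsometryEquiv.symm (V k), Unitary.linearIsometryEquiv.symm (R k))
    have hinv : ∀ k, ∫ p, Ψ (act (g k * p) G) ∂ν = ∫ p, Ψ (act p G) ∂ν := fun k =>
      integral_mul_left_eq_self (fun p => Ψ (act p G)) (g k)
    have hig : ∀ k, Integrable (fun p => Ψ (act (g k * p) G)) ν := fun k =>
      (hintν G).comp_mul_left (g k)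
    have e : (n : ℝ) * ∫ p, Ψ (act p G) ∂ν = ∫ p, ∑ k, Ψ (act (g k * p) G) ∂ν := by
      rw [integral_finsetSum _ fun k _ => hig k]
      simp [hinv]
    have hpt : ∀ p, (∑ i, σ i) * m ≤ ∑ k, Ψ (act (g k * p) G) := fun p => by
      have h1 := hsum fun k => act (g k * p) G
      rw [sum_act_mul G V R hVR p, hsmul _ hσs] at h1
      exact (mul_le_mul_of_nonneg_left (hU _) hσs).trans h1
    have h3 : (∑ i, σ i) * m ≤ ∫ p, ∑ k, Ψ (act (g k * p) G) ∂ν := by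
      have := integral_mono (μ := ν) (integrable_const ((∑ i, σ i) * m))
        (integrable_finsetSum _ fun k _ => hig k) hpt
      simpa using this
    rw [e]
    refine le_trans ?_ h3
    rw [mul_assoc, mul_comm _ m]
    exact mul_le_mul_of_nonneg_left hs hm
  have hswap : ∫ G, ∫ p, Ψ (act p G) ∂ν ∂gau (Mat n) = ∫ G, Ψ G ∂gau (Mat n) := by
    rw [← integral_integral_swap (f := fun p G => Ψ (act p G)) hint]
    have : ∀ p, ∫ G, Ψ (act p G) ∂gau (Mat n) = ∫ G, Ψ G ∂gau (Mat n) := fun p => by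
      simp only [act_eq]
      exact integral_conjIso _ _ hc
    simp [this]
  let lam : ℝ := √(2 * n)
  have hl : 0 < lam := Real.sqrt_pos.2 (by positivity)
  have hl2 : lam ^ 2 = 2 * n := Real.sq_sqrt (by positivity)
  have pm : ∀ i, PolyBdd fun G : Mat n => mcol G i := fun i => by
    have := PolyBdd.clm (LinearMap.toContinuousLinearMap
      { toFun := fun G : Mat n => mcol G i, map_add' := fun _ _ => rfl, map_smul' := fun _ _ => rfl :
        Mat n →ₗ[ℝ] Euc n })
    exact this
  have i1 : Integrable (fun G : Mat n => ‖G‖ ^ 2) (gau (Mat n)) :=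
    (PolyBdd.id.norm.pow 2).integrable (by fun_prop)
  have i2 : Integrable (fun G : Mat n => (∑ i, ∑ j, ⟪mcol G i, mcol G j⟫ ^ 2) / (3 * lam ^ 2))
      (gau (Mat n)) := by
    refine Integrable.div_const ?_ _
    refine integrable_finsetSum _ fun i _ => integrable_finsetSum _ fun j _ => ?_
    have hm : ∀ i, Continuous fun G : Mat n => mcol G i := fun i => by
      simp only [← op_single]; exact continuous_op_apply _
    refine PolyBdd.integrable ?_ (((hm i).inner (hm j)).pow 2).aestronglyMeasurable
    refine PolyBdd.of_le (((pm i).norm.mul (pm j).norm).pow 2) fun G => ?_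
    rw [norm_pow, norm_pow]
    gcongr
    rw [norm_mul, norm_norm, norm_norm]
    exact norm_inner_le_norm _ _
  have i3 : Integrable (fun G : Mat n => m * (3 / (2 * lam)) *
      (‖G‖ ^ 2 - (∑ i, ∑ j, ⟪mcol G i, mcol G j⟫ ^ 2) / (3 * lam ^ 2))) (gau (Mat n)) :=
    (i1.sub i2).const_mul _
  have hmain := integral_mono i3
    ((hint.integral_prod_right).const_mul (n : ℝ)) fun G => key G lam hl
  simp only [integral_const_mul] at hmain
  rw [hswap, integral_sub i1 i2, integral_div, integral_norm_sq_mat] at hmain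
  have hg := integral_gram_sq_le (n := n)
  set S := ∫ G : Mat n, ∑ i, ∑ j, ⟪mcol G i, mcol G j⟫ ^ 2 ∂gau (Mat n)
  set I := ∫ G : Mat n, Ψ G ∂gau (Mat n)
  have h1 : (n : ℝ) ^ 2 / 2 ≤ (n : ℝ) ^ 2 - S / (3 * lam ^ 2) := by
    rw [hl2]
    have : S / (3 * (2 * n)) ≤ (n : ℝ) ^ 2 / 2 := by
      rw [div_le_iff₀ (by positivity)]
      nlinarith
    linarith
  have h2 : m * (3 / (2 * lam)) * ((n : ℝ) ^ 2 / 2) ≤ n * I :=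
    (mul_le_mul_of_nonneg_left h1 (by positivity)).trans hmain
  have h3 : 3 * m * n ≤ 4 * lam * I := by
    have e : m * (3 / (2 * lam)) * ((n : ℝ) ^ 2 / 2) = n * ((3 * m * n) / (4 * lam)) := by
      field_simp; ring
    rw [e] at h2
    have := le_of_mul_le_mul_left h2 n0
    rw [div_le_iff₀ (by positivity)] at this
    linarith
  have hlam : lam = √2 * √n := Real.sqrt_mul (by norm_num) _
  have hs : √(n : ℝ) * √n = n := Real.mul_self_sqrt n0.le
  have hs0 : 0 < √(n : ℝ) := Real.sqrt_pos.2 n0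
  have h4 : 3 * (m * √n) ≤ 4 * √2 * I := by
    refine le_of_mul_le_mul_left ?_ hs0
    calc √(n : ℝ) * (3 * (m * √n)) = 3 * m * n := by linear_combination 3 * m * hs
      _ ≤ 4 * lam * I := h3
      _ = √n * (4 * √2 * I) := by rw [hlam]; ring
  have hI : 0 ≤ I := by
    have : 0 ≤ 4 * √2 * I := le_trans (by positivity) h4
    by_contra hneg
    nlinarith [Real.sqrt_pos.2 (show (0 : ℝ) < 2 by norm_num), not_le.1 hneg]
  have h5 : √2 ≤ 3 / 2 := Real.sqrt_le_iff.2 ⟨by norm_num, by norm_num⟩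
  nlinarith [mul_le_mul_of_nonneg_right h5 hI]

end Orthogonal

/-! ### Two bodies in good position -/

section Conclusion

variable {n : ℕ}

/-- The two width bounds enjoyed by a body in good position: `A` for its polar, `4 n A` for the body
itself, in terms of Gaussian widths of finite subsets. -/
def WidthBound (A : ℝ) (L : Set (Euc n)) : Prop :=
  (∀ Q : Finset (Euc n), (∀ q ∈ Q, ∀ x ∈ L, ⟪q, x⟫ ≤ 1) → ∫ z, sf Q z ∂gau (Euc n) ≤ A) ∧
    ∀ P : Finset (Euc n), (∀ p ∈ P, p ∈ L) → ∫ z, sf P z ∂gau (Euc n) ≤ 4 * n * A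

lemma chevet_width {P Q : Finset (Euc n)} {T : Finset (Mat n)}
    (hT : ∀ t ∈ T, ∃ x ∈ P, ∃ q ∈ Q, t = tens q x) {r s : ℝ}
    (hr : ∫ z, sf P z ∂gau (Euc n) ≤ r) (hs : ∫ z, sf Q z ∂gau (Euc n) ≤ s) :
    ∫ G, sf T G ∂gau (Mat n) ≤ 8 * (r * s) := by
  have r0 : 0 ≤ r := (integral_sf_nonneg P).trans hr
  have s0 : 0 ≤ s := (integral_sf_nonneg Q).trans hs
  refine (chevet hT (R := 4 * r) (b := 4 * s) (by positivity) (by positivity)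
    (fun x hx => (norm_le_integral_sf hx).trans (by linarith))
    (fun x hx => (norm_le_integral_sf hx).trans (by linarith))).trans ?_
  have h1 := mul_le_mul_of_nonneg_left hs r0
  have h2 := mul_le_mul_of_nonneg_left hr s0
  linarith

lemma exists_orthogonal_finite [NeZero n] {A : ℝ} (hA : 0 < A) {L₁ L₂ : Set (Euc n)}
    (h₁ : WidthBound A L₁) (h₂ : WidthBound A L₂) {P₁ Q₁ P₂ Q₂ : Finset (Euc n)}
    (hP₁ : ∀ p ∈ P₁, p ∈ L₁) (hQ₁ : ∀ q ∈ Q₁, ∀ x ∈ L₁, ⟪q, x⟫ ≤ 1)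
    (hP₂ : ∀ p ∈ P₂, p ∈ L₂) (hQ₂ : ∀ q ∈ Q₂, ∀ x ∈ L₂, ⟪q, x⟫ ≤ 1) :
    ∃ U : OG n, (∀ x ∈ P₁, ∀ q ∈ Q₂, ⟪(U : Euc n →L[ℝ] Euc n) x, q⟫ ≤ 192 * √n * A ^ 2) ∧
      ∀ q ∈ Q₁, ∀ z ∈ P₂, ⟪(U : Euc n →L[ℝ] Euc n) q, z⟫ ≤ 192 * √n * A ^ 2 := by
  classical
  have n0 : (0 : ℝ) < n := by exact_mod_cast NeZero.pos n
  let T₁ : Finset (Mat n) := Finset.image₂ (fun x q => tens q x) P₁ Q₂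
  let T₂ : Finset (Mat n) := Finset.image₂ (fun x q => tens q x) Q₁ P₂
  have hT : ∀ P Q : Finset (Euc n), ∀ t ∈ Finset.image₂ (fun x q => tens q x) P Q,
      ∃ x ∈ P, ∃ q ∈ Q, t = tens q x := fun P Q t ht => by
    obtain ⟨x, hx, q, hq, e⟩ := Finset.mem_image₂.1 ht
    exact ⟨x, hx, q, hq, e.symm⟩
  have E₁ : ∫ G, sf T₁ G ∂gau (Mat n) ≤ 8 * (4 * n * A * A) :=
    chevet_width (hT P₁ Q₂) (h₁.2 _ hP₁) (h₂.1 _ hQ₂)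
  have E₂ : ∫ G, sf T₂ G ∂gau (Mat n) ≤ 8 * (A * (4 * n * A)) :=
    chevet_width (hT Q₁ P₂) (h₁.1 _ hQ₁) (h₂.2 _ hP₂)
  by_contra hcon
  push Not at hcon
  have hs0 : 0 < √(n : ℝ) := Real.sqrt_pos.2 n0
  have hs : √(n : ℝ) * √n = n := Real.mul_self_sqrt n0.le
  obtain ⟨B₁, hB₁, hb₁⟩ := finset_norm_bdd T₁
  obtain ⟨B₂, hB₂, hb₂⟩ := finset_norm_bdd T₂
  have hz : ∀ T : Finset (Mat n), sf T 0 = 0 := fun T =>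
    le_antisymm (sf_le le_rfl fun q _ => by simp) (sf_nonneg _ _)
  have main := orthogonal_mean (n := n) (Ψ := fun G => sf T₁ G + sf T₂ G)
    (m := 192 * √n * A ^ 2) (C := B₁ + B₂)
    ((continuous_sf T₁).add (continuous_sf T₂))
    (fun G G' => by linarith [sf_add_le T₁ G G', sf_add_le T₂ G G'])
    (fun c hc G => by
      rcases hc.eq_or_lt with rfl | hc
      · simp [hz]
      · simp only [sf_smul _ hc]; ring)
    (fun G => by
      have h1 := norm_sf_le hB₁ hb₁ G
      have h2 := norm_sf_le hB₂ hb₂ G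
      exact (norm_add_le _ _).trans (by linarith))
    (by positivity)
    (fun U => by
      by_cases hx : ∀ x ∈ P₁, ∀ q ∈ Q₂, ⟪(U : Euc n →L[ℝ] Euc n) x, q⟫ ≤ 192 * √n * A ^ 2
      · obtain ⟨q, hq, z, hz, h⟩ := hcon U hx
        have := le_sf (Finset.mem_image₂_of_mem (f := fun x q => tens q x) hq hz)
          (mk (U : Euc n →L[ℝ] Euc n))
        rw [real_inner_comm, inner_mk_tens] at this
        have h0 := sf_nonneg T₁ (mk (U : Euc n →L[ℝ] Euc n))
        change _ ≤ sf T₂ _ at this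
        linarith
      · push Not at hx
        obtain ⟨x, hx, q, hq, h⟩ := hx
        have := le_sf (Finset.mem_image₂_of_mem (f := fun x q => tens q x) hx hq)
          (mk (U : Euc n →L[ℝ] Euc n))
        rw [real_inner_comm, inner_mk_tens] at this
        have h0 := sf_nonneg T₂ (mk (U : Euc n →L[ℝ] Euc n))
        change _ ≤ sf T₁ _ at this
        linarith)
  rw [integral_add (integrable_sf_gen T₁) (integrable_sf_gen T₂)] at main
  have e : 192 * √n * A ^ 2 * √n = 192 * (n * A ^ 2) := by linear_combination 192 * A ^ 2 * hs
  rw [e] at main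
  have hp : 0 < (n : ℝ) * A ^ 2 := by positivity
  nlinarith

/-- Compactness of the orthogonal group extends the finite statement to the whole bodies. -/
lemma exists_orthogonal [NeZero n] {A : ℝ} (hA : 0 < A) {L₁ L₂ : Set (Euc n)}
    (h₁ : WidthBound A L₁) (h₂ : WidthBound A L₂) (z₁ : 0 ∈ L₁) (z₂ : 0 ∈ L₂) :
    ∃ U : OG n, (∀ x ∈ L₁, ∀ q : Euc n, (∀ y ∈ L₂, ⟪q, y⟫ ≤ 1) →
        ⟪(U : Euc n →L[ℝ] Euc n) x, q⟫ ≤ 192 * √n * A ^ 2) ∧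
      ∀ q : Euc n, (∀ y ∈ L₁, ⟪q, y⟫ ≤ 1) → ∀ z ∈ L₂,
        ⟪(U : Euc n →L[ℝ] Euc n) q, z⟫ ≤ 192 * √n * A ^ 2 := by
  classical
  let ι := (L₁ × {q : Euc n // ∀ y ∈ L₂, ⟪q, y⟫ ≤ 1}) × ({q : Euc n // ∀ y ∈ L₁, ⟪q, y⟫ ≤ 1} × L₂)
  let S : ι → Set (OG n) := fun i =>
    {U | ⟪(U : Euc n →L[ℝ] Euc n) i.1.1, i.1.2.1⟫ ≤ 192 * √n * A ^ 2} ∩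
      {U | ⟪(U : Euc n →L[ℝ] Euc n) i.2.1.1, i.2.2⟫ ≤ 192 * √n * A ^ 2}
  have hcl : ∀ i, IsClosed (S i) := fun i => by
    have hc : ∀ x q : Euc n, Continuous fun U : OG n => ⟪(U : Euc n →L[ℝ] Euc n) x, q⟫ := fun x q =>
      ((continuous_eval_const x).comp continuous_subtype_val).inner continuous_const
    exact (isClosed_le (hc _ _) continuous_const).inter (isClosed_le (hc _ _) continuous_const)
  have hfin : ∀ s : Finset ι, (Set.univ ∩ ⋂ i ∈ s, S i).Nonempty := fun s => by
    obtain ⟨U, hU₁, hU₂⟩ := exists_orthogonal_finite hA h₁ h₂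
      (P₁ := s.image fun i => (i.1.1 : Euc n)) (Q₁ := s.image fun i => i.2.1.1)
      (P₂ := s.image fun i => (i.2.2 : Euc n)) (Q₂ := s.image fun i => i.1.2.1)
      (fun p hp => by obtain ⟨i, -, rfl⟩ := Finset.mem_image.1 hp; exact i.1.1.2)
      (fun p hp => by obtain ⟨i, -, rfl⟩ := Finset.mem_image.1 hp; exact i.2.1.2)
      (fun p hp => by obtain ⟨i, -, rfl⟩ := Finset.mem_image.1 hp; exact i.2.2.2)
      (fun p hp => by obtain ⟨i, -, rfl⟩ := Finset.mem_image.1 hp; exact i.1.2.2)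
    refine ⟨U, trivial, Set.mem_iInter₂.2 fun i hi => ⟨?_, ?_⟩⟩
    · exact hU₁ _ (Finset.mem_image_of_mem _ hi) _
        (Finset.mem_image_of_mem (fun i : ι => i.1.2.1) hi)
    · exact hU₂ _ (Finset.mem_image_of_mem (fun i : ι => i.2.1.1) hi) _
        (Finset.mem_image_of_mem (fun i : ι => (i.2.2 : Euc n)) hi)
  obtain ⟨U, -, hU⟩ := isCompact_univ.inter_iInter_nonempty S hcl hfin
  rw [Set.mem_iInter] at hU
  exact ⟨U, fun x hx q hq => (hU ((⟨x, hx⟩, ⟨q, hq⟩), (⟨0, by simp⟩, ⟨0, z₂⟩))).1,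
    fun q hq z hz => (hU ((⟨0, z₁⟩, ⟨0, by simp⟩), (⟨q, hq⟩, ⟨z, hz⟩))).2⟩

/-- Bipolar theorem. -/
lemma mem_smul_of_polar {L : Set (Euc n)} (hc : IsClosed L) (hconv : Convex ℝ L) (h0 : 0 ∈ L) {ρ : ℝ}
    (hρ : 0 < ρ) {y : Euc n} (h : ∀ q : Euc n, (∀ x ∈ L, ⟪q, x⟫ ≤ 1) → ⟪q, y⟫ ≤ ρ) : y ∈ ρ • L := by
  rw [Set.mem_smul_set_iff_inv_smul_mem₀ hρ.ne']
  by_contra hy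
  obtain ⟨f, u, hfu, hu⟩ := geometric_hahn_banach_closed_point hconv hc hy
  have u0 : 0 < u := by simpa using hfu 0 h0
  let w : Euc n := (InnerProductSpace.toDual ℝ (Euc n)).symm f
  have hw : ∀ x, ⟪w, x⟫ = f x := fun x => InnerProductSpace.toDual_symm_apply
  have h1 := h (u⁻¹ • w) fun x hx => by
    rw [real_inner_smul_left, hw, inv_mul_le_iff₀ u0]
    linarith [hfu x hx]
  rw [real_inner_smul_left, hw, inv_mul_le_iff₀ u0] at h1
  rw [map_smul, smul_eq_mul, lt_inv_mul_iff₀ hρ] at hu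
  linarith

lemma dBM_le_of_position [NeZero n] {A : ℝ} (hA : 0 < A) {K₁ K₂ : Set (Euc n)}
    (T₁ T₂ : Euc n ≃ₗ[ℝ] Euc n) (v₁ v₂ : Euc n)
    (hb₁ : IsConvexBody ((fun x => T₁ x + v₁) '' K₁)) (hb₂ : IsConvexBody ((fun x => T₂ x + v₂) '' K₂))
    (z₁ : 0 ∈ (fun x => T₁ x + v₁) '' K₁) (z₂ : 0 ∈ (fun x => T₂ x + v₂) '' K₂)
    (h₁ : WidthBound A ((fun x => T₁ x + v₁) '' K₁)) (h₂ : WidthBound A ((fun x => T₂ x + v₂) '' K₂)) :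
    dBM K₁ K₂ ≤ (192 * √n * A ^ 2) ^ 2 := by
  obtain ⟨U, hU₁, hU₂⟩ := exists_orthogonal hA h₁ h₂ z₁ z₂
  have n0 : (0 : ℝ) < n := by exact_mod_cast NeZero.pos n
  have hs0 : 0 < √(n : ℝ) := Real.sqrt_pos.2 n0
  set ρ : ℝ := 192 * √n * A ^ 2 with hρdef
  have hρ : 0 < ρ := by positivity
  set e : Euc n ≃ₗᵢ[ℝ] Euc n := Unitary.linearIsometryEquiv U
  have he : ∀ x, (U : Euc n →L[ℝ] Euc n) x = e x := fun x => rfl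
  -- `e L₁ ⊆ ρ L₂` and `e⁻¹ L₂ ⊆ ρ L₁`
  have s₁ : ∀ x ∈ K₁, ∃ k ∈ K₂, e (T₁ x + v₁) = ρ • (T₂ k + v₂) := fun x hx => by
    have := mem_smul_of_polar hb₂.1.isClosed hb₂.2.1 z₂ hρ (y := e (T₁ x + v₁)) fun q hq => by
      rw [real_inner_comm]
      exact hU₁ _ ⟨x, hx, rfl⟩ q hq
    obtain ⟨_, ⟨k, hk, rfl⟩, h⟩ := this
    exact ⟨k, hk, h.symm⟩
  have s₂ : ∀ k ∈ K₂, ∃ x ∈ K₁, e.symm (T₂ k + v₂) = ρ • (T₁ x + v₁) := fun k hk => by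
    have := mem_smul_of_polar hb₁.1.isClosed hb₁.2.1 z₁ hρ (y := e.symm (T₂ k + v₂)) fun q hq => by
      rw [← e.inner_map_map, e.apply_symm_apply]
      exact hU₂ q hq _ ⟨k, hk, rfl⟩
    obtain ⟨_, ⟨x, hx, rfl⟩, h⟩ := this
    exact ⟨x, hx, h.symm⟩
  let T : Euc n ≃ₗ[ℝ] Euc n := T₁.trans (e.toLinearEquiv.trans
    ((LinearEquiv.smulOfNeZero ℝ (Euc n) ρ hρ.ne').trans T₂.symm))
  have hT : ∀ x, T (T₁.symm v₁ + x) = T₂.symm (ρ • e (T₁ x + v₁)) := fun x => by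
    change T₂.symm (ρ • e (T₁ (T₁.symm v₁ + x))) = _
    rw [map_add T₁, T₁.apply_symm_apply, add_comm v₁]
  refine csInf_le ⟨0, fun l hl => hl.1.le⟩ ⟨by positivity, T, T₁.symm v₁, T₂.symm v₂, ?_, ?_⟩
  · rintro _ ⟨k, hk, rfl⟩
    obtain ⟨x, hx, h⟩ := s₂ k hk
    refine ⟨T₁.symm v₁ + x, ⟨x, hx, rfl⟩, ?_⟩
    rw [hT]
    have h' : ρ • e (T₁ x + v₁) = T₂ k + v₂ := by
      rw [← map_smul, ← h, e.apply_symm_apply]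
    rw [h', map_add, T₂.symm_apply_apply, add_comm]
    rfl
  · rintro _ ⟨_, ⟨x, hx, rfl⟩, rfl⟩
    obtain ⟨k, hk, h⟩ := s₁ x hx
    refine ⟨T₂.symm v₂ + k, ⟨k, hk, rfl⟩, ?_⟩
    change _ = T (T₁.symm v₁ + x)
    rw [hT, h]
    change ρ ^ 2 • (T₂.symm v₂ + k) = _
    rw [smul_smul, ← sq, map_smul, map_add, T₂.symm_apply_apply, add_comm k]

end Conclusion

end BMD

/-- **Theorem 1.1**: `d_BM(K₁, K₂) ≤ C n log^α (n+1)` for all convex bodies `K₁, K₂ ⊆ ℝⁿ`. -/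
theorem banach_mazur_distance_bound :
    ∃ C α : ℝ, 0 < C ∧ 0 < α ∧ α ≤ 4 ∧
      ∀ n : ℕ, 2 ≤ n → ∀ K₁ K₂ : Set (EuclideanSpace ℝ (Fin n)),
        IsConvexBody K₁ → IsConvexBody K₂ →
        dBM K₁ K₂ ≤ C * n * Real.log (n + 1) ^ α := by
  refine ⟨192 ^ 2 * 35200 ^ 4, 2, by norm_num, by norm_num, by norm_num, fun n hn K₁ K₂ h₁ h₂ => ?_⟩
  have : NeZero n := ⟨by omega⟩
  have hn' : (2 : ℝ) ≤ n := by exact_mod_cast hn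
  have hlog : 0 < Real.log (n + 1) := Real.log_pos (by linarith)
  obtain ⟨T₁, v₁, hb₁, z₁, hp₁, hw₁⟩ := BMD.exists_good_position hn h₁
  obtain ⟨T₂, v₂, hb₂, z₂, hp₂, hw₂⟩ := BMD.exists_good_position hn h₂
  have hA : 0 < 35200 * √(Real.log ((n : ℝ) + 1)) := mul_pos (by norm_num) (Real.sqrt_pos.2 hlog)
  refine (BMD.dBM_le_of_position hA T₁ T₂ v₁ v₂ hb₁ hb₂ z₁ z₂ ⟨hp₁, hw₁⟩ ⟨hp₂, hw₂⟩).trans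
    (le_of_eq ?_)
  rw [Real.rpow_two]
  have e1 : √(n : ℝ) ^ 2 = n := Real.sq_sqrt (by linarith)
  have e2 : √(Real.log ((n : ℝ) + 1)) ^ 2 = Real.log (n + 1) := Real.sq_sqrt hlog.le
  calc (192 * √(n : ℝ) * (35200 * √(Real.log ((n : ℝ) + 1))) ^ 2) ^ 2
      = 192 ^ 2 * 35200 ^ 4 * √(n : ℝ) ^ 2 * (√(Real.log ((n : ℝ) + 1)) ^ 2) ^ 2 := by ring
    _ = _ := by rw [e1, e2]

end
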